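/- arXiv:2310.11694 — 2 statements merged into one kernel-verified Lean document; each statement's English description precedes it below -/
import Mathlib

section
/- There exist constants ε₀, ν₀ ∈ (0,1) and C > 0, independent of ν, k, λ and ε, such that for every 0 < ν ≤ ν₀, every 0 < ε ≤ ε₀, every k = (k₁,k₃) ∈ ℤ² with |k₁| ≥ 1, every λ ∈ ℝ, every F ∈ L²(I), and every solution w ∈ H¹(I) of the ε-modified Orr–Sommerfeld problem with Navier-slip boundary conditions and right-hand side F, one has ‖u‖_{L²} ≤ C (ν|k₁|)^{−1/2} ‖F‖_{H⁻¹_k}. -/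
open Real MeasureTheory

noncomputable section

/-- `|k| = sqrt (k₁² + k₃²)` for `k = (k₁,k₃) ∈ ℤ²`. -/
def kabs (k₁ k₃ : ℤ) : ℝ := Real.sqrt ((k₁ : ℝ) ^ 2 + (k₃ : ℝ) ^ 2)

/-- `‖g‖_{H¹_k} = (‖g'‖² + |k|²‖g‖²)^{1/2}`; for `g = φ` this is the `L²`
norm of the velocity `u = (∂_yφ, -i|k|φ)`. -/
def hk (k₁ k₃ : ℤ) (f : ℝ → ℂ) : ℝ :=
  Real.sqrt ((∫ y in (-1:ℝ)..1, ‖deriv f y‖ ^ 2) +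
    (kabs k₁ k₃) ^ 2 * ∫ y in (-1:ℝ)..1, ‖f y‖ ^ 2)

/-- The dual norm `‖F‖_{H⁻¹_k} = sup { |∫ F ḡ| : g ∈ H¹₀, ‖g‖_{H¹_k} ≤ 1 }`. -/
def hm1 (k₁ k₃ : ℤ) (F : ℝ → ℂ) : ℝ :=
  sSup { r : ℝ | ∃ g : ℝ → ℂ, ContDiff ℝ 1 g ∧ g (-1) = 0 ∧ g 1 = 0 ∧
      hk k₁ k₃ g ≤ 1 ∧ r = ‖∫ y in (-1:ℝ)..1, F y * (starRingEnd ℂ) (g y)‖ }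

/-- The `ε`-modified Orr–Sommerfeld problem with Navier-slip boundary
conditions: `-ν(∂_y²-|k|²)w + ik₁[(1-y²-λ)w + 2φ] - ε(ν|k₁|)^{1/2}w = F`
on `[-1,1]`, with `(∂_y²-|k|²)φ = w`, `φ(±1) = φ''(±1) = 0`. -/
def OSslipE (ν : ℝ) (k₁ k₃ : ℤ) (lam : ℂ) (ε : ℝ) (w φ F : ℝ → ℂ) : Prop :=
  ContDiff ℝ 2 w ∧ ContDiff ℝ 2 φ ∧
  (∀ y ∈ Set.Icc (-1:ℝ) 1,
    -(ν : ℂ) * (deriv (deriv w) y - ((kabs k₁ k₃ : ℝ) : ℂ) ^ 2 * w y) +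
      Complex.I * (k₁ : ℂ) * ((1 - (y : ℂ) ^ 2 - lam) * w y + 2 * φ y) -
      ((ε * Real.sqrt (ν * |(k₁ : ℝ)|) : ℝ) : ℂ) * w y = F y) ∧
  (∀ y ∈ Set.Icc (-1:ℝ) 1,
    deriv (deriv φ) y - ((kabs k₁ k₃ : ℝ) : ℂ) ^ 2 * φ y = w y) ∧
  φ (-1) = 0 ∧ φ 1 = 0 ∧ deriv (deriv φ) (-1) = 0 ∧ deriv (deriv φ) 1 = 0

set_option linter.all false

namespace OSaux

/-- integrate a derivative -/
lemma int_deriv {a b : ℝ} (hab : a ≤ b) (F f : ℝ → ℝ)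
    (hF : ∀ y ∈ Set.Icc a b, HasDerivAt F (f y) y) (hf : Continuous f) :
    ∫ y in a..b, f y = F b - F a := by
  apply intervalIntegral.integral_eq_sub_of_hasDerivAt
  · intro x hx; rw [Set.uIcc_of_le hab] at hx; exact hF x hx
  · exact hf.intervalIntegrable _ _

lemma int_mono {a b : ℝ} (hab : a ≤ b) (f g : ℝ → ℝ) (hf : Continuous f) (hg : Continuous g)
    (h : ∀ y ∈ Set.Icc a b, f y ≤ g y) : ∫ y in a..b, f y ≤ ∫ y in a..b, g y :=
  intervalIntegral.integral_mono_on hab (hf.intervalIntegrable _ _) (hg.intervalIntegrable _ _) h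

lemma int_nonneg {a b : ℝ} (hab : a ≤ b) (f : ℝ → ℝ)
    (h : ∀ y ∈ Set.Icc a b, 0 ≤ f y) : 0 ≤ ∫ y in a..b, f y :=
  intervalIntegral.integral_nonneg hab h

lemma int_congr {a b : ℝ} (hab : a ≤ b) (f g : ℝ → ℝ)
    (h : ∀ y ∈ Set.Icc a b, f y = g y) : ∫ y in a..b, f y = ∫ y in a..b, g y := by
  apply intervalIntegral.integral_congr
  intro x hx; rw [Set.uIcc_of_le hab] at hx; exact h x hx

lemma int_add {a b : ℝ} (f g : ℝ → ℝ) (hf : Continuous f) (hg : Continuous g) :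
    ∫ y in a..b, (f y + g y) = (∫ y in a..b, f y) + ∫ y in a..b, g y :=
  intervalIntegral.integral_add (hf.intervalIntegrable _ _) (hg.intervalIntegrable _ _)

lemma int_sub {a b : ℝ} (f g : ℝ → ℝ) (hf : Continuous f) (hg : Continuous g) :
    ∫ y in a..b, (f y - g y) = (∫ y in a..b, f y) - ∫ y in a..b, g y :=
  intervalIntegral.integral_sub (hf.intervalIntegrable _ _) (hg.intervalIntegrable _ _)

lemma int_cmul {a b : ℝ} (c : ℝ) (f : ℝ → ℝ) :
    ∫ y in a..b, c * f y = c * ∫ y in a..b, f y :=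
  intervalIntegral.integral_const_mul _ _

lemma int_split {a b c : ℝ} (f : ℝ → ℝ) (hf : Continuous f) :
    (∫ y in a..b, f y) + (∫ y in b..c, f y) = ∫ y in a..c, f y :=
  intervalIntegral.integral_add_adjacent_intervals (hf.intervalIntegrable _ _)
    (hf.intervalIntegrable _ _)

lemma int_const {a b c : ℝ} : ∫ _y in a..b, c = c * (b - a) := by
  simp [mul_comm]

/-- restricting a nonneg integrand to a subinterval -/
lemma int_sub_le {a b c d : ℝ} (hac : a ≤ c) (hcd : c ≤ d) (hdb : d ≤ b) (f : ℝ → ℝ)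
    (hf : Continuous f) (h : ∀ y ∈ Set.Icc a b, 0 ≤ f y) :
    ∫ y in c..d, f y ≤ ∫ y in a..b, f y := by
  have e1 := int_split (a := a) (b := c) (c := b) f hf
  have e2 := int_split (a := c) (b := d) (c := b) f hf
  have h1 : 0 ≤ ∫ y in a..c, f y := int_nonneg hac f fun y hy =>
    h y ⟨hy.1, hy.2.trans (hcd.trans hdb)⟩
  have h2 : 0 ≤ ∫ y in d..b, f y := int_nonneg hdb f fun y hy =>
    h y ⟨(hac.trans hcd).trans hy.1, hy.2⟩
  linarith

lemma abs_int_le {a b : ℝ} (hab : a ≤ b) (f g : ℝ → ℝ) (hf : Continuous f) (hg : Continuous g)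
    (h : ∀ y ∈ Set.Icc a b, |f y| ≤ g y) : |∫ y in a..b, f y| ≤ ∫ y in a..b, g y := by
  rw [abs_le]
  constructor
  · rw [← intervalIntegral.integral_neg]
    exact int_mono hab _ _ hg.neg hf fun y hy => (abs_le.1 (h y hy)).1
  · exact int_mono hab _ _ hf hg fun y hy => (abs_le.1 (h y hy)).2

/-- Cauchy-Schwarz -/
lemma int_cs {a b : ℝ} (hab : a ≤ b) (f g : ℝ → ℝ) (hf : Continuous f) (hg : Continuous g) :
    (∫ y in a..b, f y * g y) ^ 2 ≤ (∫ y in a..b, f y ^ 2) * ∫ y in a..b, g y ^ 2 := by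
  have key : ∀ x : ℝ, 0 ≤ (∫ y in a..b, f y ^ 2) * (x * x)
      + (2 * ∫ y in a..b, f y * g y) * x + ∫ y in a..b, g y ^ 2 := by
    intro x
    have h0 : 0 ≤ ∫ y in a..b, (f y * x + g y) ^ 2 := int_nonneg hab _ fun y _ => sq_nonneg _
    have h1 : ∫ y in a..b, (f y * x + g y) ^ 2
        = ∫ y in a..b, ((x * x) * f y ^ 2 + (2 * x) * (f y * g y) + g y ^ 2) := by
      congr 1; ext y; ring
    rw [h1, int_add _ _ (by fun_prop) (by fun_prop), int_add _ _ (by fun_prop) (by fun_prop),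
      int_cmul, int_cmul] at h0
    linarith
  have := discrim_le_zero key
  unfold discrim at this
  nlinarith

/-- Cauchy-Schwarz with upper bounds -/
lemma int_cs' {a b A B : ℝ} (hab : a ≤ b) (f g : ℝ → ℝ) (hf : Continuous f) (hg : Continuous g)
    (hA : 0 ≤ A) (hB : 0 ≤ B) (h1 : ∫ y in a..b, f y ^ 2 ≤ A ^ 2)
    (h2 : ∫ y in a..b, g y ^ 2 ≤ B ^ 2) : |∫ y in a..b, f y * g y| ≤ A * B := by
  apply abs_le_of_sq_le_sq _ (by positivity)
  calc _ ≤ _ := int_cs hab f g hf hg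
    _ ≤ A ^ 2 * B ^ 2 := mul_le_mul h1 h2 (int_nonneg hab _ fun y _ => sq_nonneg _) (by positivity)
    _ = _ := by ring

lemma abs_cs' {a b A B : ℝ} (hab : a ≤ b) (f g : ℝ → ℝ) (hf : Continuous f) (hg : Continuous g)
    (hA : 0 ≤ A) (hB : 0 ≤ B) (h1 : ∫ y in a..b, f y ^ 2 ≤ A ^ 2)
    (h2 : ∫ y in a..b, g y ^ 2 ≤ B ^ 2) : ∫ y in a..b, |f y| * |g y| ≤ A * B := by
  refine (le_abs_self _).trans (int_cs' hab (fun y => |f y|) (fun y => |g y|) (by fun_prop) (by fun_prop) hA hB ?_ ?_)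
  · simpa [sq_abs] using h1
  · simpa [sq_abs] using h2

/-- sup bound from a zero -/
lemma sup_bound {a b A B z : ℝ} (hab : a ≤ b) (f f1 : ℝ → ℝ) (hd : ∀ y, HasDerivAt f (f1 y) y)
    (hf1 : Continuous f1) (hA : 0 ≤ A) (hB : 0 ≤ B) (hz : z ∈ Set.Icc a b) (h0 : f a = 0)
    (h1 : ∫ y in a..b, f y ^ 2 ≤ A ^ 2) (h2 : ∫ y in a..b, f1 y ^ 2 ≤ B ^ 2) :
    f z ^ 2 ≤ 2 * A * B := by
  have hf : Continuous f := continuous_iff_continuousAt.2 fun y => (hd y).continuousAt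
  have e : ∫ y in a..z, 2 * (f y * f1 y) = f z ^ 2 - f a ^ 2 := by
    apply int_deriv hz.1 (fun y => f y ^ 2) _ _ (by fun_prop)
    intro y _
    refine ((hd y).pow 2).congr_deriv ?_
    norm_num; ring
  rw [h0, int_cmul] at e
  have := abs_le.1 (int_cs' (A := A) (B := B) hz.1 f f1 hf hf1 hA hB
    ((int_sub_le le_rfl hz.1 hz.2 _ (by fun_prop) fun y _ => sq_nonneg _).trans h1)
    ((int_sub_le le_rfl hz.1 hz.2 _ (by fun_prop) fun y _ => sq_nonneg _).trans h2))
  nlinarith [this.2]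

/-- Hoelder bound -/
lemma holder {a b B : ℝ} (hab : a ≤ b) (f f1 : ℝ → ℝ) (hd : ∀ y, HasDerivAt f (f1 y) y)
    (hf1 : Continuous f1) (h2 : ∫ y in a..b, f1 y ^ 2 ≤ B) :
    (f b - f a) ^ 2 ≤ (b - a) * B := by
  have e : ∫ y in a..b, 1 * f1 y = f b - f a := by
    simpa using int_deriv hab f f1 (fun y _ => hd y) hf1
  rw [← e]
  refine (int_cs hab (fun _ => 1) f1 (by fun_prop) hf1).trans ?_
  have : ∫ y in a..b, (1:ℝ) ^ 2 = b - a := by simp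
  rw [this]
  exact mul_le_mul_of_nonneg_left h2 (by linarith)

/-! explicit functions -/
noncomputable def P (s y : ℝ) : ℝ := s ^ 2 / ((1 - y ^ 2) ^ 2 + s ^ 2)
noncomputable def H (s y : ℝ) : ℝ := (1 - y ^ 2) / ((1 - y ^ 2) ^ 2 + s ^ 2)
noncomputable def H1 (s y : ℝ) : ℝ :=
  -2 * y * (s ^ 2 - (1 - y ^ 2) ^ 2) / ((1 - y ^ 2) ^ 2 + s ^ 2) ^ 2
noncomputable def P1 (s y : ℝ) : ℝ :=
  4 * y * (1 - y ^ 2) * s ^ 2 / ((1 - y ^ 2) ^ 2 + s ^ 2) ^ 2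

variable {s : ℝ}

lemma den_pos (hs : 0 < s) (y : ℝ) : 0 < (1 - y ^ 2) ^ 2 + s ^ 2 := by positivity

lemma H_cont (hs : 0 < s) : Continuous (H s) := by
  unfold H; exact Continuous.div (by fun_prop) (by fun_prop) fun y => (den_pos hs y).ne'
lemma P_cont (hs : 0 < s) : Continuous (P s) := by
  unfold P; exact Continuous.div (by fun_prop) (by fun_prop) fun y => (den_pos hs y).ne'
lemma H1_cont (hs : 0 < s) : Continuous (H1 s) := by
  unfold H1; exact Continuous.div (by fun_prop) (by fun_prop) fun y => (pow_pos (den_pos hs y) 2).ne'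
lemma P1_cont (hs : 0 < s) : Continuous (P1 s) := by
  unfold P1; exact Continuous.div (by fun_prop) (by fun_prop) fun y => (pow_pos (den_pos hs y) 2).ne'

lemma den_deriv (y : ℝ) :
    HasDerivAt (fun y : ℝ => (1 - y ^ 2) ^ 2 + s ^ 2) (-4 * y * (1 - y ^ 2)) y := by
  have h := (((hasDerivAt_pow 2 y).const_sub 1).pow 2).add_const (s ^ 2)
  refine h.congr_deriv ?_
  norm_num; ring

lemma H_deriv (hs : 0 < s) (y : ℝ) : HasDerivAt (H s) (H1 s y) y := by
  have h := ((hasDerivAt_pow 2 y).const_sub 1).div (den_deriv (s := s) y) (den_pos hs y).ne'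
  refine h.congr_deriv ?_
  unfold H1; congr 1; simp; ring

lemma P_deriv (hs : 0 < s) (y : ℝ) : HasDerivAt (P s) (P1 s y) y := by
  have h := (hasDerivAt_const y (s ^ 2)).div (den_deriv (s := s) y) (den_pos hs y).ne'
  refine h.congr_deriv ?_
  unfold P1; congr 1; ring

lemma P_nonneg (y : ℝ) : 0 ≤ P s y := by unfold P; positivity
lemma P_le_one (hs : 0 < s) (y : ℝ) : P s y ≤ 1 := by
  unfold P; rw [div_le_one (den_pos hs y)]; nlinarith [sq_nonneg (1 - y ^ 2)]
lemma VH (hs : 0 < s) (y : ℝ) : (1 - y ^ 2) * H s y = 1 - P s y := by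
  have := (den_pos hs y).ne'
  unfold P H; field_simp; ring
lemma VP (hs : 0 < s) (y : ℝ) : (1 - y ^ 2) ^ 2 * P s y = s ^ 2 * (1 - P s y) := by
  have := (den_pos hs y).ne'
  unfold P; field_simp; ring
lemma H_sq (hs : 0 < s) (y : ℝ) : H s y ^ 2 ≤ P s y / s ^ 2 := by
  have h0 := den_pos hs y
  have e : P s y / s ^ 2 - H s y ^ 2 = s ^ 2 / ((1 - y ^ 2) ^ 2 + s ^ 2) ^ 2 := by
    unfold P H; field_simp; ring
  have : 0 ≤ s ^ 2 / ((1 - y ^ 2) ^ 2 + s ^ 2) ^ 2 := by positivity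
  linarith
lemma H_abs (hs : 0 < s) (y : ℝ) : |H s y| ≤ 1 / (2 * s) := by
  have h0 := den_pos hs y
  unfold H
  rw [abs_div, abs_of_pos h0, div_le_div_iff₀ h0 (by positivity)]
  nlinarith [sq_nonneg (|1 - y ^ 2| - s), sq_abs (1 - y ^ 2)]
lemma yP (hs : 0 < s) (hs1 : s ≤ 1) (y : ℝ) : y ^ 2 * P s y ≤ 3 / 2 := by
  have h0 := den_pos hs y
  unfold P
  rw [← mul_div_assoc, div_le_div_iff₀ h0 (by positivity)]
  have : s ^ 2 ≤ 1 := by nlinarith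
  nlinarith [sq_nonneg (y ^ 2 - 1 - s ^ 2 ), sq_nonneg (1 - y ^ 2 + s ^ 2 / 2 ), sq_nonneg s, mul_nonneg (sq_nonneg s) (sub_nonneg.2 this)]
lemma H1_sq (hs : 0 < s) (hs1 : s ≤ 1) (y : ℝ) : H1 s y ^ 2 ≤ 6 * P s y / s ^ 4 := by
  have h0 := den_pos hs y
  have a1 : H1 s y ^ 2 ≤ 4 * (y ^ 2 * P s y) * P s y / s ^ 4 := by
    have e : 4 * (y ^ 2 * P s y) * P s y / s ^ 4 - H1 s y ^ 2
      = 16 * y ^ 2 * s ^ 2 * (1 - y ^ 2) ^ 2 / ((1 - y ^ 2) ^ 2 + s ^ 2) ^ 4 := by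
      unfold P H1; field_simp; ring
    have : 0 ≤ 16 * y ^ 2 * s ^ 2 * (1 - y ^ 2) ^ 2 / ((1 - y ^ 2) ^ 2 + s ^ 2) ^ 4 := by positivity
    linarith
  refine a1.trans ?_
  gcongr
  · exact P_nonneg y
  · linarith [yP hs hs1 y]
lemma P1_sq (hs : 0 < s) (hs1 : s ≤ 1) (y : ℝ) : P1 s y ^ 2 ≤ 24 * P s y ^ 2 / s ^ 2 := by
  have h0 := den_pos hs y
  have e : P1 s y ^ 2 = 16 * (y ^ 2 * P s y) * ((1 - P s y)) * P s y ^ 2 / s ^ 2 := by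
    unfold P P1; field_simp; ring
  rw [e]
  have h1 := yP hs hs1 y
  have h2 := P_nonneg (s := s) y
  have h3 := P_le_one hs y
  gcongr
  have : 0 ≤ y ^ 2 * P s y := by positivity
  nlinarith
lemma VPP (hs : 0 < s) (y : ℝ) : |1 - y ^ 2| * P s y ^ 2 ≤ s * P s y := by
  have h2 := P_nonneg (s := s) y
  have h3 := P_le_one hs y
  have h4 := VP hs y
  have : |1 - y ^ 2| * P s y ≤ s := by
    apply abs_le_of_sq_le_sq' _ hs.le |>.2
    rw [mul_pow, sq_abs]
    nlinarith [sq_nonneg s, mul_nonneg (sq_nonneg s) h2]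
  nlinarith

lemma P_mono {e : ℝ} (hs : 0 < s) (he : s ≤ e) (y : ℝ) : P s y ≤ P e y := by
  have h0 := den_pos hs y
  have h1 := den_pos (hs.trans_le he) y
  unfold P
  rw [div_le_div_iff₀ h0 h1]
  have : s ^ 2 ≤ e ^ 2 := by gcongr
  nlinarith [mul_le_mul_of_nonneg_left this (sq_nonneg (1 - y ^ 2))]

lemma arct_deriv (hs : 0 < s) (a y : ℝ) :
    HasDerivAt (fun y => s * arctan ((y - a) / s)) (s ^ 2 / ((y - a) ^ 2 + s ^ 2)) y := by
  have h := ((((hasDerivAt_id y).sub_const a).div_const s).arctan).const_mul s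
  refine h.congr_deriv ?_
  simp only [id]
  have : 0 < (y - a) ^ 2 + s ^ 2 := by positivity
  have h3 : 0 < 1 + ((y - a) / s) ^ 2 := by positivity
  field_simp
  ring

lemma P_int (hs : 0 < s) {a b : ℝ} (hab : a ≤ b) : ∫ y in a..b, P s y ≤ 7 * s := by
  have cc : ∀ c : ℝ, Continuous fun y : ℝ => s ^ 2 / ((y - c) ^ 2 + s ^ 2) := fun c =>
    Continuous.div (by fun_prop) (by fun_prop) fun y => by positivity
  have hi : ∀ c : ℝ, ∫ y in a..b, s ^ 2 / ((y - c) ^ 2 + s ^ 2) ≤ s * π := by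
    intro c
    rw [int_deriv hab _ _ (fun y _ => arct_deriv hs c y) (cc c)]
    have := arctan_lt_pi_div_two ((b - c) / s)
    have := neg_pi_div_two_lt_arctan ((a - c) / s)
    nlinarith
  have : ∫ y in a..b, P s y ≤ ∫ y in a..b, (s ^ 2 / ((y - 1) ^ 2 + s ^ 2)
      + s ^ 2 / ((y - (-1)) ^ 2 + s ^ 2)) := by
    apply int_mono hab _ _ (P_cont hs) (by have := cc 1; have := cc (-1); fun_prop)
    intro y _
    rcases le_total 0 y with h | h
    · have : P s y ≤ s ^ 2 / ((y - 1) ^ 2 + s ^ 2) := by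
        unfold P
        apply div_le_div_of_nonneg_left (by positivity) (by positivity)
        nlinarith [sq_nonneg (1 - y), mul_nonneg (sq_nonneg (1 - y)) (by positivity : 0 ≤ y ^ 2 + 2 * y)]
      have : 0 ≤ s ^ 2 / ((y - (-1)) ^ 2 + s ^ 2) := by positivity
      linarith
    · have : P s y ≤ s ^ 2 / ((y - (-1)) ^ 2 + s ^ 2) := by
        unfold P
        apply div_le_div_of_nonneg_left (by positivity) (by positivity)
        nlinarith [sq_nonneg (1 + y), mul_nonneg (sq_nonneg (1 + y)) (by nlinarith : 0 ≤ y ^ 2 - 2 * y)]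
      have : 0 ≤ s ^ 2 / ((y - 1) ^ 2 + s ^ 2) := by positivity
      linarith
  rw [int_add _ _ (cc 1) (cc (-1))] at this
  have h1 := hi 1
  have h2 := hi (-1)
  have := pi_lt_d2
  nlinarith


end OSaux

namespace OSaux

variable {s : ℝ}

noncomputable def Lam (s e y : ℝ) : ℝ := log ((1 - y ^ 2) ^ 2 + e ^ 2) - log ((1 - y ^ 2) ^ 2 + s ^ 2)

lemma Lam_deriv {e : ℝ} (hs : 0 < s) (he : 0 < e) (y : ℝ) :
    HasDerivAt (Lam s e) (4 * y * (H s y - H e y)) y := by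
  have h := ((den_deriv (s := e) y).log (den_pos he y).ne').sub
    ((den_deriv (s := s) y).log (den_pos hs y).ne')
  refine h.congr_deriv ?_
  unfold H
  have := (den_pos hs y).ne'
  have := (den_pos he y).ne'
  field_simp
  ring

lemma Lam_cont {e : ℝ} (hs : 0 < s) (he : 0 < e) : Continuous (Lam s e) :=
  continuous_iff_continuousAt.2 fun y => (Lam_deriv hs he y).continuousAt

lemma Lam_nonneg {e : ℝ} (hs : 0 < s) (he : s ≤ e) (y : ℝ) : 0 ≤ Lam s e y := by
  unfold Lam
  rw [sub_nonneg]
  apply log_le_log (den_pos hs y)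
  gcongr

lemma Lam_le {e : ℝ} (hs : 0 < s) (he : s ≤ e) (y : ℝ) (q : ℝ) (hq : 0 < q)
    (h : q ≤ (1 - y ^ 2) ^ 2) : Lam s e y ≤ e ^ 2 / q := by
  unfold Lam
  rw [← log_div (den_pos (hs.trans_le he) y).ne' (den_pos hs y).ne']
  refine (log_le_sub_one_of_pos (by have := den_pos hs y; have := den_pos (hs.trans_le he) y; positivity)).trans ?_
  have h0 := den_pos hs y
  rw [div_sub_one h0.ne', div_le_div_iff₀ h0 hq]
  linarith [sq_nonneg s, mul_nonneg (sq_nonneg s) hq.le, mul_nonneg (sq_nonneg s) (sq_nonneg e), mul_le_mul_of_nonneg_left h (sq_nonneg e)]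

lemma Lam_even {e : ℝ} (y : ℝ) : Lam s e (-y) = Lam s e y := by simp [Lam]

lemma Lam_half {e : ℝ} (hs : 0 < s) (he : s ≤ e) (he1 : e ≤ 1) :
    ∫ y in (0:ℝ)..2, Lam s e y ^ 2 ≤ 460 * e := by
  have he0 := hs.trans_le he
  have cL := Lam_cont hs he0
  have cP := P_cont he0
  have cH := H_cont hs
  have cH' := H_cont he0
  set f : ℝ → ℝ := fun y => Lam s e y ^ 2 + (y - 1) * (2 * Lam s e y * (4 * y * (H s y - H e y))) with hf
  have cf : Continuous f := by fun_prop
  have e1 : ∫ y in (0:ℝ)..2, f y = (2 - 1) * Lam s e 2 ^ 2 - (0 - 1) * Lam s e 0 ^ 2 := by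
    apply int_deriv (by norm_num) (fun y => (y - 1) * Lam s e y ^ 2) _ _ cf
    intro y _
    refine (((hasDerivAt_id y).sub_const 1).mul ((Lam_deriv hs he0 y).pow 2)).congr_deriv ?_
    simp [hf]
  have e2 : ∫ y in (0:ℝ)..2, Lam s e y ^ 2 ≤ ∫ y in (0:ℝ)..2, (f y + ((1/2) * Lam s e y ^ 2 + 32 * P e y)) := by
    apply int_mono (by norm_num) _ _ (by fun_prop) (by fun_prop)
    intro y hy
    have h1 : |(y - 1) * (4 * y * (H s y - H e y))| ≤ 4 * P e y := by
      have h2 : (1 + y) * ((y - 1) * (4 * y * (H s y - H e y))) = -(4 * y * (P e y - P s y)) := by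
        have := VH hs y
        have := VH he0 y
        linear_combination 4 * y * (VH he0 y - VH hs y)
      have h3 := P_mono hs he y
      have h4 := P_nonneg (s := s) y
      have h5 : 0 < 1 + y := by linarith [hy.1]
      have h6 : |(1 + y) * ((y - 1) * (4 * y * (H s y - H e y)))| ≤ (1 + y) * (4 * P e y) := by
        rw [h2, abs_neg, abs_of_nonneg (by have := hy.1; have := sub_nonneg.2 h3; positivity)]
        linarith [hy.1, mul_nonneg hy.1 h4]
      rw [abs_mul, abs_of_pos h5] at h6
      exact le_of_mul_le_mul_left h6 h5
    have h7 := P_nonneg (s := e) y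
    have h8 := P_le_one he0 y
    have h9 := Lam_nonneg hs he y
    have := abs_le.1 h1
    simp only [hf]
    linarith [sq_nonneg (Lam s e y - 8 * P e y), mul_le_mul_of_nonneg_left this.1 h9, mul_nonneg h7 (sub_nonneg.2 h8)]
  clear_value f
  rw [int_add _ _ cf (by fun_prop), int_add _ _ (by fun_prop) (by fun_prop), int_cmul, int_cmul, e1] at e2
  have e3 := P_int he0 (a := 0) (b := 2) (by norm_num)
  have a1 := Lam_le hs he 2 9 (by norm_num) (by norm_num)
  have a2 := Lam_le hs he 0 1 (by norm_num) (by norm_num)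
  have b1 := Lam_nonneg hs he 2
  have b2 := Lam_nonneg hs he 0
  have : e ^ 2 ≤ e := by nlinarith
  have c1 : Lam s e 2 ^ 2 ≤ e := by nlinarith
  have c2 : Lam s e 0 ^ 2 ≤ e := by nlinarith
  linarith

lemma int_neg_half (f : ℝ → ℝ) (r : ℝ) : ∫ y in (-r)..0, f y = ∫ y in (0:ℝ)..r, f (-y) := by
  rw [intervalIntegral.integral_comp_neg]; simp

lemma Lam_int {e r : ℝ} (hs : 0 < s) (he : s ≤ e) (he1 : e ≤ 1) (hr0 : 0 ≤ r) (hr : r ≤ 2) :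
    ∫ y in (-r)..r, Lam s e y ^ 2 ≤ 1000 * e := by
  have he0 := hs.trans_le he
  have cL := Lam_cont hs he0
  refine (int_sub_le (a := -2) (b := 2) (by linarith) (by linarith) hr _ (by fun_prop) fun y _ => sq_nonneg _).trans ?_
  rw [← int_split (b := 0) _ (by fun_prop), int_neg_half]
  simp only [Lam_even]
  have := Lam_half hs he he1
  linarith

lemma H_nonpos (hs : 0 < s) {y : ℝ} (h : 1 ≤ y ^ 2) : H s y ≤ 0 := by
  unfold H; exact div_nonpos_of_nonpos_of_nonneg (by linarith) (den_pos hs y).le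

lemma H_diff_nonpos {e : ℝ} (hs : 0 < s) (he : s ≤ e) {y : ℝ} (h : 1 ≤ y ^ 2) : H s y ≤ H e y := by
  have h0 := den_pos hs y
  have h1 := den_pos (hs.trans_le he) y
  unfold H
  rw [div_le_div_iff₀ h0 h1]
  have : s ^ 2 ≤ e ^ 2 := by gcongr
  nlinarith

set_option maxHeartbeats 1000000 in
/-- comparison of regularised potentials -/
lemma H_compare {e η L : ℝ} (hs : 0 < s) (he : s ≤ e) (he1 : e ≤ 1) (hη : 0 ≤ η) (hηe : e = η ^ 2) (hL : 0 < L)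
    (f f1 : ℝ → ℝ) (hd : ∀ y, HasDerivAt f (f1 y) y) (hf1 : Continuous f1)
    (hL0 : f L = 0) (hL1 : f (-L) = 0) (hB : ∀ y ∈ Set.Icc (-L) L, |f y| ≤ 2)
    (hE : ∫ y in (-L)..L, f1 y ^ 2 ≤ 1) :
    ∫ y in (-L)..L, H s y * f y ^ 2 ≤ (∫ y in (-L)..L, H e y * f y ^ 2) + 100 * η := by
  have hf : Continuous f := continuous_iff_continuousAt.2 fun y => (hd y).continuousAt
  have he0 := hs.trans_le he
  have cL := Lam_cont hs he0
  have cH := H_cont hs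
  have cH' := H_cont he0
  have cP := P_cont he0
  have hη1 : η ≤ 1 := by nlinarith
  set r := min L 2 with hr
  have hr0 : 0 < r := lt_min hL (by norm_num)
  have hrL : r ≤ L := min_le_left _ _
  have hr2 : r ≤ 2 := min_le_right _ _
  have hout : ∀ y ∈ Set.Icc (-L) L, r ≤ |y| → r < L → (H s y - H e y) * f y ^ 2 ≤ 0 := by
    intro y hy h1 h2
    have : r = 2 := by
      rcases min_choice L 2 with h | h
      · rw [← hr] at h; linarith
      · rw [← hr] at h; exact h
    have := H_diff_nonpos hs he (y := y) (by rw [← sq_abs]; nlinarith)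
    nlinarith [sq_nonneg (f y)]
  have key : ∫ y in (-r)..r, (H s y - H e y) * f y ^ 2 ≤ 100 * η := by
    set D : ℝ → ℝ := fun y => 4 * y * (H s y - H e y) * (y * f y ^ 2) + Lam s e y * (f y ^ 2 + y * (2 * f y * f1 y)) with hD
    have cD : Continuous D := by fun_prop
    have e1 : ∫ y in (-r)..r, D y = Lam s e r * (r * f r ^ 2) - Lam s e (-r) * ((-r) * f (-r) ^ 2) := by
      apply int_deriv (by linarith) (fun y => Lam s e y * (y * f y ^ 2)) _ _ cD
      intro y _
      refine ((Lam_deriv hs he0 y).mul ((hasDerivAt_id y).mul ((hd y).pow 2))).congr_deriv ?_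
      simp [hD]
    have bd : ∀ z : ℝ, |z| = r → f z ^ 2 * Lam s e z ≤ 4 * e ^ 2 / 9 := by
      intro z hz
      have hzm : z ∈ Set.Icc (-L) L := abs_le.1 (hz ▸ hrL)
      rcases min_choice L 2 with h | h
      · have : f z = 0 := by
          rw [← hr] at h; rw [h] at hz
          rcases abs_eq hL.le |>.1 hz with h | h <;> rw [h] <;> assumption
        rw [this]; simp; positivity
      · rw [← hr] at h; rw [h] at hz
        have hz2 : z ^ 2 = 4 := by rw [← sq_abs, hz]; norm_num
        have a1 := Lam_le hs he z 9 (by norm_num) (by rw [hz2]; norm_num)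
        have a2 := Lam_nonneg hs he z
        have a3 : f z ^ 2 ≤ 4 := by
          have := hB z hzm
          rw [← sq_abs]; nlinarith [abs_nonneg (f z)]
        calc _ ≤ 4 * (e ^ 2 / 9) := mul_le_mul a3 a1 a2 (by norm_num)
          _ = _ := by ring
    have e2 : ∫ y in (-r)..r, (H s y - H e y) * f y ^ 2 ≤
        ∫ y in (-r)..r, ((4 * P e y + (1/4) * D y) + (|Lam s e y| * (2 * |f1 y|))) := by
      apply int_mono (by linarith) _ _ (by fun_prop) (by fun_prop)
      intro y hy
      have hyL : y ∈ Set.Icc (-L) L := ⟨by linarith [hy.1], by linarith [hy.2]⟩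
      have a1 : (H s y - H e y) = P e y - P s y + y ^ 2 * (H s y - H e y) := by
        linear_combination VH hs y - VH he0 y
      have a2 := P_nonneg (s := s) y
      have a2' := P_nonneg (s := e) y
      have a3 : f y ^ 2 ≤ 4 := by
        have := hB y hyL
        rw [← sq_abs]; nlinarith [abs_nonneg (f y)]
      have a4 := Lam_nonneg hs he y
      have a5 : (P e y - P s y) * f y ^ 2 ≤ 4 * P e y := by linarith [mul_nonneg a2 (sq_nonneg (f y)), mul_nonneg a2' (sub_nonneg.2 a3)]
      have a6 : -(y * f y * f1 y) ≤ 4 * |f1 y| := by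
        refine (neg_le_abs _).trans ?_
        rw [abs_mul, abs_mul]
        have : |y| ≤ 2 := abs_le.2 ⟨by linarith [hy.1], by linarith [hy.2]⟩
        have := hB y hyL
        have : |y| * |f y| ≤ 2 * 2 := by gcongr
        nlinarith [abs_nonneg (f1 y)]
      rw [abs_of_nonneg a4]
      have a7 : y ^ 2 * (H s y - H e y) * f y ^ 2 = (1/4) * D y - (1/4) * (Lam s e y * f y ^ 2) + (1/2) * (Lam s e y * (- (y * f y * f1 y))) := by
        simp only [hD]; ring
      have a8 : (H s y - H e y) * f y ^ 2 = (P e y - P s y) * f y ^ 2 + y ^ 2 * (H s y - H e y) * f y ^ 2 := by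
        linear_combination (f y ^ 2) * a1
      rw [a8, a7]
      linarith [mul_nonneg a4 (sq_nonneg (f y)), mul_le_mul_of_nonneg_left a6 a4]
    clear_value D
    rw [int_add _ _ (by fun_prop) (by fun_prop), int_add _ _ (by fun_prop) (by fun_prop), int_cmul, int_cmul, e1] at e2
    have e3 := P_int he0 (a := -r) (b := r) (by linarith)
    have e4 : ∫ y in (-r)..r, |Lam s e y| * (2 * |f1 y|) ≤ 32 * η * 2 := by
      have : (fun y => |Lam s e y| * (2 * |f1 y|)) = fun y => |Lam s e y| * |2 * f1 y| := by
        ext y; rw [abs_mul]; norm_num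
      rw [this]
      apply abs_cs' (by linarith) _ _ cL (by fun_prop) (by positivity) (by norm_num)
      · refine (Lam_int hs he he1 hr0.le hr2).trans ?_
        rw [hηe]; linarith [sq_nonneg η]
      · have : ∫ y in (-r)..r, (2 * f1 y) ^ 2 = 4 * ∫ y in (-r)..r, f1 y ^ 2 := by
          rw [← int_cmul]; congr 1; ext y; ring
        rw [this]
        have := int_sub_le (a := -L) (b := L) (c := -r) (d := r) (by linarith) (by linarith) hrL (fun y => f1 y ^ 2) (by fun_prop) (fun y _ => sq_nonneg _)
        linarith
    have b1 := bd r (abs_of_pos hr0)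
    have b2 := bd (-r) (by rw [abs_neg, abs_of_pos hr0])
    have he2 : e ^ 2 ≤ η := by rw [hηe]; linarith [pow_le_one₀ hη hη1 (n := 3), mul_le_mul_of_nonneg_left (pow_le_one₀ hη hη1 (n := 3)) hη]
    have he3 : e ≤ η := by rw [hηe]; nlinarith
    have p1 : 0 ≤ f r ^ 2 * Lam s e r := mul_nonneg (sq_nonneg _) (Lam_nonneg hs he _)
    have p2 : 0 ≤ f (-r) ^ 2 * Lam s e (-r) := mul_nonneg (sq_nonneg _) (Lam_nonneg hs he _)
    linarith [mul_le_mul hr2 b1 p1 (by norm_num), mul_le_mul hr2 b2 p2 (by norm_num)]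
  have c1 : Continuous fun y => (H s y - H e y) * f y ^ 2 := by fun_prop
  have s1 := int_split (a := -L) (b := -r) (c := L) (fun y => (H s y - H e y) * f y ^ 2) c1
  have s2 := int_split (a := -r) (b := r) (c := L) (fun y => (H s y - H e y) * f y ^ 2) c1
  have n1 : ∫ y in (-L)..(-r), (H s y - H e y) * f y ^ 2 ≤ 0 := by
    rcases hrL.eq_or_lt with h | h
    · rw [h]; simp
    · have := int_mono (by linarith) _ (fun _ => (0:ℝ)) c1 (by fun_prop) (a := -L) (b := -r) fun y hy =>
        hout y ⟨hy.1, by linarith [hy.2]⟩ (by rw [abs_of_nonpos (by linarith [hy.2])]; linarith [hy.2]) h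
      simpa using this
  have n2 : ∫ y in r..L, (H s y - H e y) * f y ^ 2 ≤ 0 := by
    rcases hrL.eq_or_lt with h | h
    · rw [h]; simp
    · have := int_mono (by linarith) _ (fun _ => (0:ℝ)) c1 (by fun_prop) (a := r) (b := L) fun y hy =>
        hout y ⟨by linarith [hy.1], hy.2⟩ (by rw [abs_of_nonneg (by linarith [hy.1])]; linarith [hy.1]) h
      simpa using this
  have s3 : ∫ y in (-L)..L, (H s y - H e y) * f y ^ 2 = (∫ y in (-L)..L, H s y * f y ^ 2) - ∫ y in (-L)..L, H e y * f y ^ 2 := by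
    rw [← int_sub _ _ (by fun_prop) (by fun_prop)]
    congr 1; ext y; ring
  linarith

end OSaux

namespace OSaux

/-- derivative bound near zeros -/
lemma lin_bound {f f1 : ℝ → ℝ} (hd : ∀ y, HasDerivAt f (f1 y) y) (hf1 : Continuous f1) (r : ℝ) :
    ∃ A, 0 ≤ A ∧ ∀ x ∈ Set.Icc 0 r, ∀ y ∈ Set.Icc 0 r, |f y - f x| ≤ A * |y - x| := by
  obtain ⟨A, hA⟩ := (isCompact_Icc (a := (0:ℝ)) (b := r)).exists_bound_of_continuousOn hf1.continuousOn
  refine ⟨|A|, abs_nonneg _, fun x hx y hy => ?_⟩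
  exact (convex_Icc (0:ℝ) r).norm_image_sub_le_of_norm_hasDerivWithin_le
    (fun z _ => (hd z).hasDerivWithinAt) (fun z hz => (hA z hz).trans (le_abs_self A)) hx hy

set_option maxHeartbeats 1000000 in
lemma inner_step {r : ℝ} (hr : r ≤ 1) (f f1 h : ℝ → ℝ)
    (hd : ∀ y, HasDerivAt f (f1 y) y) (hf1 : Continuous f1) (ch : Continuous h)
    (hh : ∀ y ∈ Set.Icc 0 r, h y * (1 - y ^ 2) ≤ 1) (hfr : f r = 0) :
    ∃ Q, ∀ a b, 0 < a → a < b → b < r →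
      -(Q * (a + (r - b))) ≤ ∫ y in a..b, (f1 y ^ 2 - 2 * h y * f y ^ 2 - (2/3) * (f1 y + 2 * f 0 * y) ^ 2) := by
  have hf : Continuous f := continuous_iff_continuousAt.2 fun y => (hd y).continuousAt
  set c := f 0 with hc
  set F : ℝ → ℝ := fun y => f y - c * (1 - y ^ 2) with hF
  have hFd : ∀ y, HasDerivAt F (f1 y + 2 * c * y) y := by
    intro y
    refine ((hd y).sub (((hasDerivAt_pow 2 y).const_sub 1).const_mul c)).congr_deriv ?_
    norm_num; ring
  obtain ⟨A, hA0, hA⟩ := lin_bound hd hf1 r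
  obtain ⟨A', hA0', hA'⟩ := lin_bound hFd (by fun_prop) r
  refine ⟨(8/3) * |c| * A + (2/3) * A ^ 2 + (4 * |c| * A' + A' ^ 2), ?_⟩
  intro a b ha hab hb
  set Th : ℝ → ℝ := fun y => -2 * c ^ 2 * (y * (1 - y ^ 2)) - 4 * c * (y * F y) + (1/3) * (F y ^ 2 * (1 / y - 2 * y / (1 - y ^ 2))) with hTh
  set J : ℝ → ℝ := fun y => f1 y ^ 2 - 2 * h y * f y ^ 2 - (2/3) * (f1 y + 2 * c * y) ^ 2 with hJ
  have cJ : Continuous J := by fun_prop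
  -- derivative of Th
  have hThd : ∀ y ∈ Set.Ioo 0 1, HasDerivAt Th (-2 * c ^ 2 * (1 - 3 * y ^ 2) - 4 * c * (F y + y * (f1 y + 2 * c * y))
      + (1/3) * (2 * F y * (f1 y + 2 * c * y) * (1 / y - 2 * y / (1 - y ^ 2)) + F y ^ 2 * (- 1 / y ^ 2 - (2 * (1 - y ^ 2) + 4 * y ^ 2) / (1 - y ^ 2) ^ 2))) y := by
    intro y hy
    have hy0 : y ≠ 0 := hy.1.ne'
    have hV : 1 - y ^ 2 ≠ 0 := by nlinarith [hy.1, hy.2]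
    have d1 := ((hasDerivAt_id y).mul ((hasDerivAt_pow 2 y).const_sub 1)).const_mul (-2 * c ^ 2)
    have d2 := ((hasDerivAt_id y).mul (hFd y)).const_mul (4 * c)
    have d3 := ((hFd y).pow 2).mul ((((hasDerivAt_const y (1:ℝ)).div (hasDerivAt_id y) hy0)).sub
      (((hasDerivAt_id y).const_mul 2).div ((hasDerivAt_pow 2 y).const_sub 1) hV))
    refine ((d1.sub d2).add (d3.const_mul (1/3))).congr_deriv ?_
    simp
    ring
  have hmono : MonotoneOn (fun x => (∫ y in a..x, J y) - Th x) (Set.Icc a b) := by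
    have hder : ∀ x ∈ Set.Icc a b, HasDerivAt (fun x => (∫ y in a..x, J y) - Th x) (J x - (-2 * c ^ 2 * (1 - 3 * x ^ 2) - 4 * c * (F x + x * (f1 x + 2 * c * x))
      + (1/3) * (2 * F x * (f1 x + 2 * c * x) * (1 / x - 2 * x / (1 - x ^ 2)) + F x ^ 2 * (- 1 / x ^ 2 - (2 * (1 - x ^ 2) + 4 * x ^ 2) / (1 - x ^ 2) ^ 2)))) x := by
      intro x hx
      exact (intervalIntegral.integral_hasDerivAt_right (cJ.intervalIntegrable _ _) (cJ.stronglyMeasurableAtFilter _ _) cJ.continuousAt).sub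
        (hThd x ⟨ha.trans_le hx.1, by linarith [hx.2]⟩)
    apply monotoneOn_of_deriv_nonneg (convex_Icc a b)
    · exact fun x hx => (hder x hx).continuousAt.continuousWithinAt
    · intro x hx; exact (hder x (interior_subset hx)).differentiableAt.differentiableWithinAt
    · intro x hx
      have hx := interior_subset hx
      rw [(hder x hx).deriv]
      have hx0 : 0 < x := ha.trans_le hx.1
      have hx1 : x < 1 := by linarith [hx.2]
      have hV : 0 < 1 - x ^ 2 := by nlinarith
      have h1 := hh x ⟨hx0.le, by linarith [hx.2]⟩
      have h2 : h x * f x ^ 2 ≤ f x ^ 2 / (1 - x ^ 2) := by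
        rw [le_div_iff₀ hV]; nlinarith [sq_nonneg (f x)]
      set q := f1 x + 2 * c * x with hq
      have e1 : f1 x = q - 2 * c * x := by rw [hq]; ring
      have e2 : f x = F x + c * (1 - x ^ 2) := by simp only [hF]; ring
      have h3 : 0 ≤ (1/3) * (q - F x * (1 / x - 2 * x / (1 - x ^ 2))) ^ 2 := by positivity
      have h4 : J x = (q - 2 * c * x) ^ 2 - 2 * (h x * f x ^ 2) - (2/3) * q ^ 2 := by
        simp only [hJ]; rw [← hq, e1]; ring
      have h5 : (q - 2 * c * x) ^ 2 - 2 * (f x ^ 2 / (1 - x ^ 2)) - (2/3) * q ^ 2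
        - (-2 * c ^ 2 * (1 - 3 * x ^ 2) - 4 * c * (F x + x * q)
      + (1/3) * (2 * F x * q * (1 / x - 2 * x / (1 - x ^ 2)) + F x ^ 2 * (- 1 / x ^ 2 - (2 * (1 - x ^ 2) + 4 * x ^ 2) / (1 - x ^ 2) ^ 2)))
       = (1/3) * (q - F x * (1 / x - 2 * x / (1 - x ^ 2))) ^ 2 := by
        rw [e2]
        have := hV.ne'
        field_simp
        ring
      rw [h4]
      linarith
  have hm := hmono (Set.left_mem_Icc.2 hab.le) (Set.right_mem_Icc.2 hab.le) hab.le
  simp only [intervalIntegral.integral_same] at hm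
  -- bounds
  have hb0 : 0 < b := ha.trans hab
  have hVb : 0 < 1 - b ^ 2 := by
    have e : 1 - b ^ 2 = (1 - b) * (1 + b) := by ring
    rw [e]; exact mul_pos (by linarith) (by linarith)
  have hVa : 0 < 1 - a ^ 2 := by
    have e : 1 - a ^ 2 = (1 - a) * (1 + a) := by ring
    rw [e]; exact mul_pos (by linarith) (by linarith)
  have hfb : |f b| ≤ A * (r - b) := by
    have := hA r ⟨by linarith, le_rfl⟩ b ⟨hb0.le, hb.le⟩
    rwa [hfr, sub_zero, abs_of_neg (by linarith : b - r < 0), neg_sub] at this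
  have hFa : |F a| ≤ A' * a := by
    have := hA' 0 ⟨le_rfl, by linarith⟩ a ⟨ha.le, by linarith⟩
    have h0 : F 0 = 0 := by simp [hF, hc]
    rwa [h0, sub_zero, sub_zero, abs_of_pos ha] at this
  have t1 : Th b ≥ -(((8/3) * |c| * A + (2/3) * A ^ 2) * (r - b)) := by
    have e : Th b = (4/3) * b * c ^ 2 * (1 - b ^ 2) - (8/3) * b * (c * f b) + (1/3) * F b ^ 2 / b - (2/3) * b * (f b ^ 2 / (1 - b ^ 2)) := by
      simp only [hTh, hF]
      have := hVb.ne'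
      field_simp
      ring
    have i1 : f b ^ 2 / (1 - b ^ 2) ≤ A ^ 2 * (r - b) := by
      rw [div_le_iff₀ hVb]
      have : f b ^ 2 ≤ (A * (r - b)) ^ 2 := by rw [← sq_abs]; gcongr
      have i3 : r - b ≤ 1 - b ^ 2 := by linarith [mul_nonneg hb0.le (by linarith : 0 ≤ 1 - b)]
      have : A ^ 2 * (r - b) * (r - b) ≤ A ^ 2 * (r - b) * (1 - b ^ 2) :=
        mul_le_mul_of_nonneg_left i3 (mul_nonneg (sq_nonneg _) (by linarith))
      linarith
    have i2 : c * f b ≤ |c| * (A * (r - b)) := by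
      refine (le_abs_self _).trans ?_
      rw [abs_mul]; gcongr
    have i4 : 0 ≤ |c| * (A * (r - b)) := mul_nonneg (abs_nonneg _) (mul_nonneg hA0 (by linarith))
    have i5 : 0 ≤ A ^ 2 * (r - b) := mul_nonneg (sq_nonneg _) (by linarith)
    have i6 : b ≤ 1 := by linarith
    have i7 : 0 ≤ (4/3) * b * c ^ 2 * (1 - b ^ 2) := by positivity
    have i8 : 0 ≤ (1/3) * F b ^ 2 / b := by positivity
    have i9 : b * (c * f b) ≤ |c| * (A * (r - b)) := by linarith [mul_le_mul_of_nonneg_left i2 hb0.le, mul_nonneg (sub_nonneg.2 i6) i4]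
    have i10 : b * (f b ^ 2 / (1 - b ^ 2)) ≤ A ^ 2 * (r - b) := by linarith [mul_le_mul_of_nonneg_left i1 hb0.le, mul_nonneg (sub_nonneg.2 i6) i5]
    rw [e]
    linarith
  have t2 : Th a ≤ (4 * |c| * A' + A' ^ 2) * a := by
    have i1 : F a ^ 2 * (1 / a - 2 * a / (1 - a ^ 2)) ≤ A' ^ 2 * a := by
      have : F a ^ 2 * (1 / a - 2 * a / (1 - a ^ 2)) ≤ F a ^ 2 * (1 / a) := by
        have : 0 ≤ 2 * a / (1 - a ^ 2) := by positivity
        nlinarith [sq_nonneg (F a)]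
      refine this.trans ?_
      rw [mul_one_div, div_le_iff₀ ha]
      have : F a ^ 2 ≤ (A' * a) ^ 2 := by rw [← sq_abs]; gcongr
      linarith
    have i2 : -(c * F a) ≤ |c| * (A' * a) := by
      refine (neg_le_abs _).trans ?_
      rw [abs_mul]; gcongr
    have i3 : 0 ≤ c ^ 2 * (a * (1 - a ^ 2)) := by positivity
    have i4 : 0 ≤ |c| * (A' * a) := by positivity
    have i5 : a * (-(c * F a)) ≤ |c| * (A' * a) := by linarith [mul_le_mul_of_nonneg_left i2 ha.le, mul_nonneg (by linarith : 0 ≤ 1 - a) i4]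
    have : 0 ≤ A' ^ 2 * a := by positivity
    simp only [hTh]
    linarith
  have t3 : 0 ≤ ((8/3) * |c| * A + (2/3) * A ^ 2) * a := by positivity
  have t4 : 0 ≤ (4 * |c| * A' + A' ^ 2) * (r - b) := mul_nonneg (by positivity) (by linarith)
  linarith

lemma inner {r : ℝ} (hr0 : 0 < r) (hr : r ≤ 1) (f f1 h : ℝ → ℝ)
    (hd : ∀ y, HasDerivAt f (f1 y) y) (hf1 : Continuous f1) (ch : Continuous h)
    (hh : ∀ y ∈ Set.Icc 0 r, h y * (1 - y ^ 2) ≤ 1) (hfr : f r = 0) :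
    0 ≤ ∫ y in (0:ℝ)..r, (f1 y ^ 2 - 2 * h y * f y ^ 2 - (2/3) * (f1 y + 2 * f 0 * y) ^ 2) := by
  have hf : Continuous f := continuous_iff_continuousAt.2 fun y => (hd y).continuousAt
  obtain ⟨Q, hQ⟩ := inner_step hr f f1 h hd hf1 ch hh hfr
  set J : ℝ → ℝ := fun y => f1 y ^ 2 - 2 * h y * f y ^ 2 - (2/3) * (f1 y + 2 * f 0 * y) ^ 2 with hJ
  have cJ : Continuous J := by fun_prop
  have cI : Continuous fun x => ∫ y in (0:ℝ)..x, J y := by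
    exact intervalIntegral.continuous_primitive (fun a b => cJ.intervalIntegrable a b) 0
  set D : ℝ → ℝ := fun d => (∫ y in (0:ℝ)..(r - d), J y) - (∫ y in (0:ℝ)..d, J y) + Q * (2 * d) with hD
  have cD : Continuous D := by
    have : Continuous fun d => ∫ y in (0:ℝ)..(r - d), J y := cI.comp (by fun_prop : Continuous fun d => r - d)
    fun_prop
  have hpos : ∀ᶠ d in nhdsWithin (0:ℝ) (Set.Ioi 0), 0 ≤ D d := by
    have : Set.Ioo (0:ℝ) (r/2) ∈ nhdsWithin (0:ℝ) (Set.Ioi 0) := Ioo_mem_nhdsGT (by positivity)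
    filter_upwards [this] with d hdm
    have := hQ d (r - d) hdm.1 (by linarith [hdm.2]) (by linarith [hdm.1])
    have e := int_split (a := 0) (b := d) (c := r - d) J cJ
    simp only [hD]
    linarith
  have hl : Filter.Tendsto D (nhdsWithin (0:ℝ) (Set.Ioi 0)) (nhds (D 0)) :=
    cD.continuousAt.tendsto.mono_left nhdsWithin_le_nhds
  have := ge_of_tendsto hl hpos
  simpa [hD] using this

set_option maxHeartbeats 1000000 in
/-- perturbed inner lemma -/
lemma inner' {b e : ℝ} (he : 0 < e) (he1 : e ≤ 1) (f f1 : ℝ → ℝ)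
    (hd : ∀ y, HasDerivAt f (f1 y) y) (hf1 : Continuous f1)
    (hb1 : b ≤ 1) (hb : |f 1| ≤ b) (hB : ∀ y ∈ Set.Icc (0:ℝ) 1, |f y| ≤ 2)
    (hE : ∫ y in (0:ℝ)..1, f1 y ^ 2 ≤ 1) :
    (2/3) * (∫ y in (0:ℝ)..1, (f1 y + 2 * f 0 * y) ^ 2) ≤
      (∫ y in (0:ℝ)..1, f1 y ^ 2) - 2 * (∫ y in (0:ℝ)..1, H e y * f y ^ 2) + 40 * b / e := by
  have hf : Continuous f := continuous_iff_continuousAt.2 fun y => (hd y).continuousAt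
  have cH := H_cont he
  have hb0 : 0 ≤ b := (abs_nonneg _).trans hb
  set β := f 1 with hβ
  have hg : ∀ y, HasDerivAt (fun y => f y - β * y ^ 2) (f1 y - 2 * β * y) y := by
    intro y
    refine ((hd y).sub ((hasDerivAt_pow 2 y).const_mul β)).congr_deriv ?_
    norm_num; ring
  have key := inner (r := 1) (by norm_num) le_rfl _ _ (H e) hg (by fun_prop) cH (fun y hy => by
    have := VH he y; have := P_nonneg (s := e) y; linarith) (by simp [hβ])
  have e0 : (fun y => f y - β * y ^ 2) 0 = f 0 := by simp
  simp only [e0] at key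
  have k2 : ∫ y in (0:ℝ)..1, ((f1 y - 2 * β * y) ^ 2 - 2 * H e y * (f y - β * y ^ 2) ^ 2 - (2/3) * ((f1 y - 2 * β * y) + 2 * f 0 * y) ^ 2)
     ≤ ∫ y in (0:ℝ)..1, (((f1 y ^ 2 - 2 * (H e y * f y ^ 2)) - (2/3) * (f1 y + 2 * f 0 * y) ^ 2) + (4 * b * f1 y ^ 2 + 36 * b / e)) := by
    apply int_mono (by norm_num) _ _ (by fun_prop) (by fun_prop)
    intro y hy
    have hB0 := hB 0 ⟨le_rfl, by norm_num⟩
    have hBy := hB y hy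
    have hH := H_abs he y
    have a1 : |(f y - β * y ^ 2) ^ 2 - f y ^ 2| ≤ 5 * b := by
      have : (f y - β * y ^ 2) ^ 2 - f y ^ 2 = -(2 * y ^ 2 * (β * f y)) + y ^ 4 * β ^ 2 := by ring
      rw [this]
      have y2 : y ^ 2 ≤ 1 := by nlinarith [hy.1, hy.2]
      have y4 : y ^ 4 ≤ 1 := by nlinarith [sq_nonneg y]
      have t1 : |β * f y| ≤ b * 2 := by rw [abs_mul]; gcongr
      have t2 : β ^ 2 ≤ b := by rw [← sq_abs]; nlinarith [abs_nonneg β]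
      have t3 : |2 * y ^ 2 * (β * f y)| ≤ 2 * 1 * (b * 2) := by
        rw [abs_mul, abs_of_nonneg (by positivity : 0 ≤ 2 * y ^ 2)]; gcongr
      have t4 : |y ^ 4 * β ^ 2| ≤ 1 * b := by
        rw [abs_of_nonneg (by positivity)]; gcongr
      calc _ ≤ |-(2 * y ^ 2 * (β * f y))| + |y ^ 4 * β ^ 2| := abs_add_le _ _
        _ ≤ _ := by rw [abs_neg]; linarith
    have a2 : -(H e y * ((f y - β * y ^ 2) ^ 2 - f y ^ 2)) ≤ 1 / (2 * e) * (5 * b) := by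
      refine (neg_le_abs _).trans ?_
      rw [abs_mul]; gcongr
    have a2' : 1 / (2 * e) * (5 * b) = (5/2) * (b / e) := by field_simp
    have be : b ≤ b / e := by rw [le_div_iff₀ he]; nlinarith
    have a3 : |β * y * f1 y| ≤ b * (1 + f1 y ^ 2) / 2 := by
      rw [abs_mul, abs_mul]
      have h1 : |y| ≤ 1 := abs_le.2 ⟨by linarith [hy.1], hy.2⟩
      have : |β| * |y| ≤ b * 1 := by gcongr
      have h3 : |f1 y| ≤ (1 + f1 y ^ 2) / 2 := by
        linarith [sq_nonneg (|f1 y| - 1), sq_abs (f1 y)]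
      calc _ ≤ b * 1 * ((1 + f1 y ^ 2) / 2) := by gcongr
        _ = _ := by ring
    have a4 := abs_le.1 a3
    have a5 : |β * f 0| ≤ b * 2 := by rw [abs_mul]; gcongr
    have a5' := abs_le.1 a5
    have y2 : y ^ 2 ≤ 1 := by nlinarith [hy.1, hy.2]
    have a6 : y ^ 2 * (β * f 0) ≤ b * 2 := by nlinarith [sq_nonneg y]
    have t2 : β ^ 2 ≤ b := by rw [← sq_abs]; nlinarith [abs_nonneg β]
    have t3 : y ^ 2 * β ^ 2 ≤ b := by nlinarith [sq_nonneg y, sq_nonneg β]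
    have t3' : 0 ≤ y ^ 2 * β ^ 2 := by positivity
    have f2 : 0 ≤ b * f1 y ^ 2 := by positivity
    rw [a2'] at a2
    have e36 : 36 * b / e = 36 * (b / e) := by ring
    rw [e36]
    linarith
  have := key.trans k2
  rw [int_add _ _ (by fun_prop) (by fun_prop), int_add _ _ (by fun_prop) (by fun_prop), int_sub _ _ (by fun_prop) (by fun_prop), int_sub _ _ (by fun_prop) (by fun_prop), int_cmul, int_cmul, int_cmul, int_const] at this
  have be : b ≤ b / e := by rw [le_div_iff₀ he]; nlinarith
  have e36 : 36 * b / e = 36 * (b / e) := by ring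
  have e40 : 40 * b / e = 40 * (b / e) := by ring
  rw [e36] at this
  rw [e40]
  have : 4 * b * (∫ y in (0:ℝ)..1, f1 y ^ 2) ≤ 4 * b * 1 := by gcongr
  linarith

end OSaux

namespace OSaux

lemma int_tri {a b A B : ℝ} (hab : a ≤ b) (f g : ℝ → ℝ) (hf : Continuous f) (hg : Continuous g)
    (hA : 0 ≤ A) (hB : 0 ≤ B) (h1 : ∫ y in a..b, f y ^ 2 ≤ A ^ 2)
    (h2 : ∫ y in a..b, g y ^ 2 ≤ B ^ 2) : ∫ y in a..b, (f y + g y) ^ 2 ≤ (A + B) ^ 2 := by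
  have h := (abs_le.1 (int_cs' hab f g hf hg hA hB h1 h2)).2
  have e : ∫ y in a..b, (f y + g y) ^ 2 = ∫ y in a..b, ((f y ^ 2 + 2 * (f y * g y)) + g y ^ 2) := by
    congr 1; ext y; ring
  rw [e, int_add _ _ (by fun_prop) (by fun_prop), int_add _ _ (by fun_prop) (by fun_prop), int_cmul]
  linarith

lemma int_mulbd {a b A Q : ℝ} (hab : a ≤ b) (f q : ℝ → ℝ) (hf : Continuous f) (hq : Continuous q)
    (hQ : ∀ y ∈ Set.Icc a b, q y ^ 2 ≤ Q ^ 2)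
    (h1 : ∫ y in a..b, f y ^ 2 ≤ A ^ 2) : ∫ y in a..b, (q y * f y) ^ 2 ≤ (Q * A) ^ 2 := by
  calc _ ≤ ∫ y in a..b, Q ^ 2 * f y ^ 2 := by
        apply int_mono hab _ _ (by fun_prop) (by fun_prop)
        intro y hy
        rw [mul_pow]
        exact mul_le_mul_of_nonneg_right (hQ y hy) (sq_nonneg _)
    _ = Q ^ 2 * ∫ y in a..b, f y ^ 2 := int_cmul _ _
    _ ≤ _ := by rw [mul_pow]; gcongr

structure Sit (L K N M t ω : ℝ) (φ φ1 φ2 w w1 : ℝ → ℝ) : Prop where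
  hL : 0 < L
  hK : 0 < K
  hKL : 1 ≤ K * L
  hN : 0 ≤ N
  hM0 : 0 ≤ M
  ht : 0 < t
  hω : 0 < ω
  hω1 : ω ≤ 1 / 1000
  hM : M * t ^ 3 = ω ^ 2
  hNt : N ≤ ω ^ 2 * t ^ 3
  hts : t ^ 2 ≤ ω
  dφ : ∀ y, HasDerivAt φ (φ1 y) y
  dφ1 : ∀ y, HasDerivAt φ1 (φ2 y) y
  dw : ∀ y, HasDerivAt w (w1 y) y
  cφ2 : Continuous φ2
  cw1 : Continuous w1
  eq : ∀ y ∈ Set.Icc (-L) L, φ2 y = w y + K ^ 2 * φ y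
  bφ : φ L = 0
  bφ' : φ (-L) = 0
  bw : w L = 0
  bw' : w (-L) = 0
  test : ∀ g g1 : ℝ → ℝ, (∀ y, HasDerivAt g (g1 y) y) → Continuous g1 → g L = 0 → g (-L) = 0 →
    |∫ y in (-L)..L, ((1 - y ^ 2) * w y + 2 * φ y) * g y| ≤
      N * √((∫ y in (-L)..L, g1 y ^ 2) + K ^ 2 * ∫ y in (-L)..L, g y ^ 2)
  E : (∫ y in (-L)..L, φ1 y ^ 2) + K ^ 2 * (∫ y in (-L)..L, φ y ^ 2) = 1
  hMM : (∫ y in (-L)..L, w1 y ^ 2) + K ^ 2 * (∫ y in (-L)..L, w y ^ 2) ≤ M ^ 2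

lemma int_refl (f : ℝ → ℝ) (L : ℝ) : ∫ y in (-L)..L, f (-y) = ∫ y in (-L)..L, f y := by
  rw [intervalIntegral.integral_comp_neg]; simp

lemma refl_deriv {f f1 : ℝ → ℝ} (h : ∀ y, HasDerivAt f (f1 y) y) (y : ℝ) :
    HasDerivAt (fun y => f (-y)) (-f1 (-y)) y := by
  refine ((h (-y)).comp y (hasDerivAt_neg y)).congr_deriv ?_
  ring

lemma cont_of {f f1 : ℝ → ℝ} (h : ∀ y, HasDerivAt f (f1 y) y) : Continuous f :=
  continuous_iff_continuousAt.2 fun y => (h y).continuousAt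

namespace Sit

variable {L K N M t ω : ℝ} {φ φ1 φ2 w w1 : ℝ → ℝ}

lemma refl (S : Sit L K N M t ω φ φ1 φ2 w w1) :
    Sit L K N M t ω (fun y => φ (-y)) (fun y => -φ1 (-y)) (fun y => φ2 (-y))
      (fun y => w (-y)) (fun y => -w1 (-y)) where
  hL := S.hL
  hK := S.hK
  hKL := S.hKL
  hN := S.hN
  hM0 := S.hM0
  ht := S.ht
  hω := S.hω
  hω1 := S.hω1
  hM := S.hM
  hNt := S.hNt
  hts := S.hts
  dφ := refl_deriv S.dφ
  dφ1 := fun y => ((refl_deriv S.dφ1 y).neg).congr_deriv (neg_neg _)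
  dw := refl_deriv S.dw
  cφ2 := by have := S.cφ2; fun_prop
  cw1 := by have := S.cw1; fun_prop
  eq := fun y hy => S.eq (-y) ⟨by linarith [hy.2], by linarith [hy.1]⟩
  bφ := S.bφ'
  bφ' := by simpa using S.bφ
  bw := S.bw'
  bw' := by simpa using S.bw
  test := by
    intro g g1 hg cg h1 h2
    have := S.test (fun y => g (-y)) (fun y => -g1 (-y)) (refl_deriv hg) (by fun_prop) h2 (by simpa using h1)
    have e1 := int_refl (fun y => ((1 - y ^ 2) * w y + 2 * φ y) * g (-y)) L
    have e2 := int_refl (fun y => g1 y ^ 2) L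
    have e3 := int_refl (fun y => g y ^ 2) L
    simp only [neg_neg, neg_sq] at e1 e2 e3 this
    rw [e2, e3] at this
    rw [e1]; exact this
  E := by
    have e2 := int_refl (fun y => φ1 y ^ 2) L
    have e3 := int_refl (fun y => φ y ^ 2) L
    simp only [neg_sq]
    rw [e2, e3]; exact S.E
  hMM := by
    have e2 := int_refl (fun y => w1 y ^ 2) L
    have e3 := int_refl (fun y => w y ^ 2) L
    simp only [neg_sq]
    rw [e2, e3]; exact S.hMM

lemma cφ (S : Sit L K N M t ω φ φ1 φ2 w w1) : Continuous φ := cont_of S.dφ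
lemma cφ1 (S : Sit L K N M t ω φ φ1 φ2 w w1) : Continuous φ1 := cont_of S.dφ1
lemma cw (S : Sit L K N M t ω φ φ1 φ2 w w1) : Continuous w := cont_of S.dw
lemma LL (S : Sit L K N M t ω φ φ1 φ2 w w1) : -L ≤ L := by linarith [S.hL]

lemma hs (S : Sit L K N M t ω φ φ1 φ2 w w1) : 0 < t ^ 2 := pow_pos S.ht 2
lemma hs1 (S : Sit L K N M t ω φ φ1 φ2 w w1) : t ^ 2 ≤ 1 := S.hts.trans (by linarith [S.hω1])
lemma ht1 (S : Sit L K N M t ω φ φ1 φ2 w w1) : t ≤ 1 := by nlinarith [S.hs1, S.ht]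
lemma N1 (S : Sit L K N M t ω φ φ1 φ2 w w1) : N ≤ 1 := by
  refine S.hNt.trans ?_
  have h1 : t ^ 3 ≤ 1 := pow_le_one₀ S.ht.le S.ht1
  have h2 : ω ^ 2 ≤ 1 := pow_le_one₀ S.hω.le (by linarith [S.hω1])
  exact mul_le_one₀ h2 (pow_nonneg S.ht.le 3) h1

lemma Eφ1 (S : Sit L K N M t ω φ φ1 φ2 w w1) : ∫ y in (-L)..L, φ1 y ^ 2 ≤ 1 := by
  have := S.E
  have : 0 ≤ K ^ 2 * (∫ y in (-L)..L, φ y ^ 2) := mul_nonneg (sq_nonneg _) (int_nonneg S.LL _ fun y _ => sq_nonneg _)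
  linarith

lemma test' (S : Sit L K N M t ω φ φ1 φ2 w w1) {A B : ℝ} (hA : 0 ≤ A) (hB : 0 ≤ B) (g g1 : ℝ → ℝ)
    (hg : ∀ y, HasDerivAt g (g1 y) y) (cg : Continuous g1) (h1 : g L = 0) (h2 : g (-L) = 0)
    (h3 : ∫ y in (-L)..L, g1 y ^ 2 ≤ A ^ 2) (h4 : K ^ 2 * ∫ y in (-L)..L, g y ^ 2 ≤ B ^ 2) :
    |∫ y in (-L)..L, ((1 - y ^ 2) * w y + 2 * φ y) * g y| ≤ N * (A + B) := by
  refine (S.test g g1 hg cg h1 h2).trans (mul_le_mul_of_nonneg_left ?_ S.hN)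
  apply sqrt_le_iff.2 ⟨by positivity, ?_⟩
  nlinarith

lemma phi_sq (S : Sit L K N M t ω φ φ1 φ2 w w1) : ∫ y in (-L)..L, φ y ^ 2 ≤ 2 := by
  have c0 := S.cφ
  have c1 := S.cφ1
  have c2 := S.cφ2
  have c3 := S.cw
  have h1 := abs_le.1 (S.test φ φ1 S.dφ c1 S.bφ S.bφ')
  rw [S.E, sqrt_one, mul_one] at h1
  set D : ℝ → ℝ := fun y => (1 - y ^ 2) * φ1 y ^ 2 + (1 - y ^ 2) * φ y * φ2 y + φ y ^ 2 with hD
  have e1 : ∫ y in (-L)..L, D y = ((1 - L ^ 2) * (φ L * φ1 L) + L * φ L ^ 2) - ((1 - (-L) ^ 2) * (φ (-L) * φ1 (-L)) + (-L) * φ (-L) ^ 2) := by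
    apply int_deriv S.LL (fun y => (1 - y ^ 2) * (φ y * φ1 y) + y * φ y ^ 2) _ _ (by fun_prop)
    intro y _
    refine ((((hasDerivAt_pow 2 y).const_sub 1).mul ((S.dφ y).mul (S.dφ1 y))).add ((hasDerivAt_id y).mul ((S.dφ y).pow 2))).congr_deriv ?_
    simp [hD]; ring
  rw [S.bφ, S.bφ'] at e1
  have e2 : ∫ y in (-L)..L, φ y ^ 2 ≤ ∫ y in (-L)..L, ((((1 - y ^ 2) * w y + 2 * φ y) * φ y - D y) + (φ1 y ^ 2 + K ^ 2 * φ y ^ 2)) := by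
    apply int_mono S.LL _ _ (by fun_prop) (by fun_prop)
    intro y hy
    simp only [hD]
    rw [S.eq y hy]
    linarith [mul_nonneg (sq_nonneg y) (sq_nonneg (φ1 y)), mul_nonneg (sq_nonneg y) (mul_nonneg (sq_nonneg K) (sq_nonneg (φ y)))]
  have cD : Continuous D := by fun_prop
  clear_value D
  rw [int_add _ _ (by fun_prop) (by fun_prop), int_sub _ _ (by fun_prop) (by fun_prop), int_add _ _ (by fun_prop) (by fun_prop), int_cmul, S.E, e1] at e2
  have := S.N1
  linarith

lemma phi_bd (S : Sit L K N M t ω φ φ1 φ2 w w1) {z : ℝ} (hz : z ∈ Set.Icc (-L) L) : |φ z| ≤ 2 := by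
  have := sup_bound S.LL φ φ1 S.dφ S.cφ1 (A := 3/2) (B := 1) (by norm_num) (by norm_num) hz S.bφ'
    (S.phi_sq.trans (by norm_num)) (S.Eφ1.trans (by norm_num))
  apply abs_le_of_sq_le_sq _ (by norm_num)
  linarith

lemma PPhi (S : Sit L K N M t ω φ φ1 φ2 w w1) : ∫ y in (-L)..L, P (t ^ 2) y * φ y ^ 2 ≤ 28 * t ^ 2 := by
  have c0 := S.cφ
  have cP := P_cont S.hs
  calc _ ≤ ∫ y in (-L)..L, 4 * P (t ^ 2) y := by
        apply int_mono S.LL _ _ (by fun_prop) (by fun_prop)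
        intro y hy
        have h1 := S.phi_bd hy
        have h2 : φ y ^ 2 ≤ 4 := by rw [← sq_abs]; nlinarith [abs_nonneg (φ y)]
        nlinarith [P_nonneg (s := t ^ 2) y]
    _ = 4 * ∫ y in (-L)..L, P (t ^ 2) y := int_cmul _ _
    _ ≤ _ := by linarith [P_int S.hs S.LL]

lemma w_bd (S : Sit L K N M t ω φ φ1 φ2 w w1) {z : ℝ} (hz : z ∈ Set.Icc (-L) L) : |w z| ≤ 6 * ω / t ^ 2 := by
  have c0 := S.cφ
  have c3 := S.cw
  have c4 := S.cw1
  have hs := S.hs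
  have hs1 := S.hs1
  have ht := S.ht
  have cP := P_cont hs
  have cH := H_cont hs
  have cH1 := H1_cont hs
  have hM0 := S.hM0
  obtain ⟨W, hW0, hW⟩ : ∃ W, 0 ≤ W ∧ ∫ y in (-L)..L, w y ^ 2 = W ^ 2 :=
    ⟨√(∫ y in (-L)..L, w y ^ 2), sqrt_nonneg _, (sq_sqrt (int_nonneg S.LL _ fun y _ => sq_nonneg _)).symm⟩
  have hw1 : ∫ y in (-L)..L, w1 y ^ 2 ≤ M ^ 2 := by
    have := S.hMM
    have : 0 ≤ K ^ 2 * (∫ y in (-L)..L, w y ^ 2) := mul_nonneg (sq_nonneg _) (int_nonneg S.LL _ fun y _ => sq_nonneg _)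
    linarith
  have hKw : K ^ 2 * (∫ y in (-L)..L, w y ^ 2) ≤ M ^ 2 := by
    have := S.hMM
    have : 0 ≤ (∫ y in (-L)..L, w1 y ^ 2) := (int_nonneg S.LL _ fun y _ => sq_nonneg _)
    linarith
  have hsup : ∀ z ∈ Set.Icc (-L) L, w z ^ 2 ≤ 2 * W * M := fun z hz =>
    sup_bound S.LL w w1 S.dw c4 hW0 hM0 hz S.bw' hW.le hw1
  have hHsq : ∀ y ∈ Set.Icc (-L) L, H (t^2) y ^ 2 ≤ (1 / (2 * t ^ 2)) ^ 2 := fun y _ => by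
    rw [← sq_abs]; have := H_abs hs y; gcongr
  have T := S.test' (A := 3 / (t ^ 2) ^ 2 * W + 1 / (2 * t ^ 2) * M) (B := 1 / (2 * t ^ 2) * M) (by positivity) (by positivity)
    (fun y => H (t^2) y * w y) (fun y => H1 (t^2) y * w y + H (t^2) y * w1 y)
    (fun y => (H_deriv hs y).mul (S.dw y)) (by fun_prop) (by simp [S.bw]) (by simp [S.bw'])
    (by
      apply int_tri S.LL _ _ (by fun_prop) (by fun_prop) (by positivity) (by positivity)
      · refine int_mulbd S.LL w (H1 (t^2)) c3 cH1 (fun y _ => (H1_sq hs hs1 y).trans ?_) hW.le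
        have := P_le_one hs y
        have e : (3 / (t ^ 2) ^ 2) ^ 2 = 9 / (t ^ 2) ^ 4 := by rw [div_pow]; ring
        rw [e]
        gcongr
        linarith
      · exact int_mulbd S.LL w1 (H (t^2)) c4 cH hHsq hw1)
    (by
      have := int_mulbd S.LL (fun y => K * w y) (H (t^2)) (by fun_prop) cH hHsq (A := M)
        (by simp only [mul_pow]; rw [int_cmul]; exact hKw)
      refine le_trans (le_of_eq ?_) this
      rw [← int_cmul]; congr 1; ext y; ring)
  have e1 : ∫ y in (-L)..L, ((1 - y ^ 2) * w y + 2 * φ y) * (H (t^2) y * w y)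
      = ∫ y in (-L)..L, ((w y ^ 2 - P (t^2) y * w y ^ 2) + 2 * ((H (t^2) y * φ y) * w y)) := by
    congr 1; ext y; linear_combination w y ^ 2 * VH hs y
  rw [e1, int_add _ _ (by fun_prop) (by fun_prop), int_sub _ _ (by fun_prop) (by fun_prop), int_cmul, hW] at T
  have e2 : ∫ y in (-L)..L, P (t^2) y * w y ^ 2 ≤ 2 * W * M * (7 * t ^ 2) := by
    calc _ ≤ ∫ y in (-L)..L, (2 * W * M) * P (t^2) y := by
          apply int_mono S.LL _ _ (by fun_prop) (by fun_prop)
          intro y hy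
          have := hsup y hy
          nlinarith [P_nonneg (s := t ^ 2) y]
      _ = 2 * W * M * ∫ y in (-L)..L, P (t ^ 2) y := int_cmul _ _
      _ ≤ _ := by have := P_int hs S.LL; gcongr
  have e3 : |∫ y in (-L)..L, (H (t^2) y * φ y) * w y| ≤ 6 / t * W := by
    apply int_cs' S.LL _ _ (by fun_prop) c3 (by positivity) hW0 _ hW.le
    calc _ ≤ ∫ y in (-L)..L, (1 / (t^2)^2) * (P (t^2) y * φ y ^ 2) := by
          apply int_mono S.LL _ _ (by fun_prop) (by fun_prop)
          intro y _
          have := H_sq hs y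
          rw [mul_pow]
          calc _ ≤ P (t^2) y / (t^2)^2 * φ y ^ 2 := by gcongr
            _ = _ := by ring
      _ = (1 / (t^2)^2) * ∫ y in (-L)..L, (P (t^2) y * φ y ^ 2) := int_cmul _ _
      _ ≤ (1 / (t^2)^2) * (28 * t ^ 2) := by have := S.PPhi; gcongr
      _ = 28 / t ^ 2 := by field_simp
      _ ≤ _ := by rw [div_pow]; gcongr; norm_num
  have T2 := (abs_le.1 T).2
  have e3' := (abs_le.1 e3).1
  have hN := S.hNt
  have e4 : N * (3 / (t ^ 2) ^ 2 * W + 1 / (2 * t ^ 2) * M + 1 / (2 * t ^ 2) * M) ≤ 3 * ω ^ 2 * (W / t) + ω ^ 4 / t ^ 2 := by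
    calc _ ≤ ω ^ 2 * t ^ 3 * (3 / (t ^ 2) ^ 2 * W + 1 / (2 * t ^ 2) * M + 1 / (2 * t ^ 2) * M) := by gcongr
      _ = 3 * ω ^ 2 * (W / t) + ω ^ 2 * (M * t ^ 3) / t ^ 2 := by field_simp; ring
      _ = _ := by rw [S.hM]; ring
  have e5 : 2 * W * M * (7 * t ^ 2) = 14 * ω ^ 2 * (W / t) := by
    rw [← S.hM]; field_simp; ring
  have e6 : 6 / t * W = 6 * (W / t) := by ring
  have hω := S.hω
  have hω1 := S.hω1
  have hω2 : ω ^ 2 ≤ 1 / 1000 := by nlinarith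
  have hω4 : ω ^ 4 ≤ 1 / 1000 := by nlinarith
  set X := W * t with hX
  have hX0 : 0 ≤ X := by positivity
  have q1 : W ^ 2 = X ^ 2 / t ^ 2 := by rw [hX]; field_simp
  have q2 : W / t = X / t ^ 2 := by rw [hX]; field_simp
  have main : X ^ 2 / t ^ 2 ≤ (13 * X + 1) / t ^ 2 := by
    have : 17 * ω ^ 2 * (W / t) ≤ 1 * (W / t) := by
      have : 0 ≤ W / t := by positivity
      nlinarith
    have i2 : ω ^ 4 / t ^ 2 ≤ 1 / t ^ 2 := by gcongr; linarith
    have : (13 * X + 1) / t ^ 2 = 13 * (X / t ^ 2) + 1 / t ^ 2 := by ring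
    rw [this, ← q1, ← q2]
    linarith
  have main2 : X ≤ 14 := by
    have := (div_le_div_iff_of_pos_right hs).1 main
    nlinarith
  apply abs_le_of_sq_le_sq _ (by positivity)
  calc w z ^ 2 ≤ 2 * W * M := hsup z hz
    _ = 2 * X * (M * t ^ 3) / t ^ 4 := by rw [hX]; field_simp
    _ = 2 * X * ω ^ 2 / t ^ 4 := by rw [S.hM]
    _ ≤ 2 * 14 * ω ^ 2 / t ^ 4 := by gcongr
    _ ≤ 36 * ω ^ 2 / t ^ 4 := by gcongr; norm_num
    _ = _ := by ring

lemma Pw (S : Sit L K N M t ω φ φ1 φ2 w w1) {a b Q : ℝ} (hab : a ≤ b) (ha : -L ≤ a) (hb : b ≤ L) (q : ℝ → ℝ) (cq : Continuous q)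
    (hQ0 : 0 ≤ Q) (hQ : ∀ y ∈ Set.Icc a b, |q y| ≤ Q) : |∫ y in a..b, P (t^2) y * w y * q y| ≤ 42 * ω * Q := by
  have c3 := S.cw
  have hs := S.hs
  have hω := S.hω
  have cP := P_cont hs
  calc _ ≤ ∫ y in a..b, (6 * ω / t ^ 2 * Q) * P (t^2) y := by
        apply abs_int_le hab _ _ (by fun_prop) (by fun_prop)
        intro y hy
        have h1 := S.w_bd (z := y) ⟨by linarith [hy.1], by linarith [hy.2]⟩
        have h2 := hQ y hy
        have h3 := P_nonneg (s := t ^ 2) y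
        rw [abs_mul, abs_mul, abs_of_nonneg h3]
        calc _ ≤ P (t^2) y * (6 * ω / t ^ 2) * Q := by gcongr
          _ = _ := by ring
    _ = (6 * ω / t ^ 2 * Q) * ∫ y in a..b, P (t^2) y := int_cmul _ _
    _ ≤ (6 * ω / t ^ 2 * Q) * (7 * t ^ 2) := by have := P_int hs hab; gcongr
    _ = _ := by have := S.ht.ne'; field_simp; ring

end Sit
end OSaux

namespace OSaux
namespace Sit

variable {L K N M t ω : ℝ} {φ φ1 φ2 w w1 : ℝ → ℝ}

lemma Kphi (S : Sit L K N M t ω φ φ1 φ2 w w1) : K ^ 2 * (∫ y in (-L)..L, φ y ^ 2) ≤ 1 := by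
  have := S.E
  have : 0 ≤ (∫ y in (-L)..L, φ1 y ^ 2) := int_nonneg S.LL _ fun y _ => sq_nonneg _
  linarith

lemma Kmul (S : Sit L K N M t ω φ φ1 φ2 w w1) {Q : ℝ} (q : ℝ → ℝ) (cq : Continuous q)
    (hQ : ∀ y ∈ Set.Icc (-L) L, q y ^ 2 ≤ Q ^ 2) : K ^ 2 * (∫ y in (-L)..L, (q y * φ y) ^ 2) ≤ Q ^ 2 := by
  have c0 := S.cφ
  have := int_mulbd S.LL (fun y => K * φ y) q (by fun_prop) cq hQ (A := 1)
        (by simp only [mul_pow]; rw [int_cmul]; linarith [S.Kphi])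
  refine le_trans (le_of_eq ?_) (this.trans (by rw [mul_one]))
  rw [← int_cmul]; congr 1; ext y; ring

lemma PPhi2 (S : Sit L K N M t ω φ φ1 φ2 w w1) : ∫ y in (-L)..L, P (t ^ 2) y ^ 2 * φ y ^ 2 ≤ 50 * ω * t ^ 2 := by
  have c0 := S.cφ
  have c1 := S.cφ1
  have c3 := S.cw
  have hs := S.hs
  have hs1 := S.hs1
  have ht := S.ht
  have hω := S.hω
  have cP := P_cont hs
  have cP1 := P1_cont hs
  have T := S.test' (A := 52 / t + 1 * 1) (B := 1) (by positivity) (by norm_num)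
    (fun y => P (t^2) y ^ 2 * φ y) (fun y => 2 * P (t^2) y * P1 (t^2) y * φ y + P (t^2) y ^ 2 * φ1 y)
    (fun y => by
      refine (((P_deriv hs y).pow 2).mul (S.dφ y)).congr_deriv ?_
      norm_num) (by fun_prop) (by simp [S.bφ]) (by simp [S.bφ'])
    (by
      apply int_tri S.LL _ _ (by fun_prop) (by fun_prop) (by positivity) (by positivity)
      · calc _ ≤ ∫ y in (-L)..L, (96 / (t^2)^2) * (P (t^2) y * φ y ^ 2) := by
              apply int_mono S.LL _ _ (by fun_prop) (by fun_prop)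
              intro y _
              have h1 := P1_sq hs hs1 y
              have h2 := P_nonneg (s := t ^ 2) y
              have h3 := P_le_one hs y
              calc _ = 4 * P (t^2) y ^ 2 * φ y ^ 2 * P1 (t^2) y ^ 2 := by ring
                _ ≤ 4 * P (t^2) y ^ 2 * φ y ^ 2 * (24 * P (t^2) y ^ 2 / (t^2) ^ 2) := by gcongr
                _ = 96 / (t^2)^2 * φ y ^ 2 * P (t^2) y * P (t^2) y ^ 3 := by ring
                _ ≤ 96 / (t^2)^2 * φ y ^ 2 * P (t^2) y * 1 := by
                    have := pow_le_one₀ h2 h3 (n := 3)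
                    gcongr
                _ = _ := by ring
          _ = (96 / (t^2)^2) * ∫ y in (-L)..L, (P (t^2) y * φ y ^ 2) := int_cmul _ _
          _ ≤ (96 / (t^2)^2) * (28 * t ^ 2) := by have := S.PPhi; gcongr
          _ = 2688 / t ^ 2 := by field_simp; norm_num
          _ ≤ _ := by rw [div_pow]; gcongr; norm_num
      · refine int_mulbd S.LL φ1 (fun y => P (t^2) y ^ 2) c1 (by fun_prop) (fun y _ => ?_) (by linarith [S.Eφ1])
        have h2 := P_nonneg (s := t ^ 2) y
        have h3 := P_le_one hs y
        rw [one_pow, ← pow_mul]; exact pow_le_one₀ h2 h3)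
    (S.Kmul (fun y => P (t^2) y ^ 2) (by fun_prop) (fun y _ => by
        have h2 := P_nonneg (s := t ^ 2) y
        have h3 := P_le_one hs y
        rw [one_pow, ← pow_mul]; exact pow_le_one₀ h2 h3))
  have e1 : ∫ y in (-L)..L, ((1 - y ^ 2) * w y + 2 * φ y) * (P (t^2) y ^ 2 * φ y)
      = ∫ y in (-L)..L, ((1 - y ^ 2) * w y * P (t^2) y ^ 2 * φ y + 2 * (P (t^2) y ^ 2 * φ y ^ 2)) := by
    congr 1; ext y; ring
  rw [e1, int_add _ _ (by fun_prop) (by fun_prop), int_cmul] at T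
  have e2 : |∫ y in (-L)..L, (1 - y ^ 2) * w y * P (t^2) y ^ 2 * φ y| ≤ 12 * ω * (7 * t ^ 2) := by
    calc _ ≤ ∫ y in (-L)..L, (12 * ω) * P (t^2) y := by
          apply abs_int_le S.LL _ _ (by fun_prop) (by fun_prop)
          intro y hy
          have h1 := S.w_bd hy
          have h2 := S.phi_bd hy
          have h3 := VPP hs y
          have h4 := P_nonneg (s := t ^ 2) y
          calc _ = (|1 - y ^ 2| * P (t^2) y ^ 2) * |w y| * |φ y| := by
                rw [abs_mul, abs_mul, abs_mul, abs_of_nonneg (sq_nonneg (P (t^2) y))]; ring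
            _ ≤ (t ^ 2 * P (t^2) y) * (6 * ω / t ^ 2) * 2 := by gcongr
            _ = _ := by field_simp; ring
      _ = (12 * ω) * ∫ y in (-L)..L, P (t^2) y := int_cmul _ _
      _ ≤ _ := by have := P_int hs S.LL; gcongr
  have e3 : N * (52 / t + 1 * 1 + 1) ≤ 54 * ω ^ 2 * t ^ 2 := by
    have ht1 := S.ht1
    have h1 : (1:ℝ) ≤ 1 / t := by rw [le_div_iff₀ ht]; linarith
    have h0 := S.hNt
    calc _ ≤ ω ^ 2 * t ^ 3 * (54 / t) := by
          gcongr
          have : 54 / t = 52 / t + 2 * (1 / t) := by ring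
          linarith
      _ = _ := by field_simp
  have T2 := (abs_le.1 T).2
  have e2' := (abs_le.1 e2).1
  have hω1 := S.hω1
  have : 54 * ω ^ 2 * t ^ 2 ≤ ω * t ^ 2 := by
    have : 54 * ω ^ 2 ≤ ω := by nlinarith
    gcongr
  have : 0 < ω * t ^ 2 := by positivity
  linarith

lemma phi_one (S : Sit L K N M t ω φ φ1 φ2 w w1) (hL : 1 ≤ L) : φ 1 ^ 2 ≤ 2502 * ω := by
  have c0 := S.cφ
  have c1 := S.cφ1
  have hs := S.hs
  have hs1 := S.hs1
  have cP := P_cont hs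
  have hω := S.hω
  have h1 : ∫ y in (1 - t^2)..1, φ 1 ^ 2 ≤ ∫ y in (1 - t^2)..1, (50 * (P (t^2) y ^ 2 * φ y ^ 2) + 2 * t ^ 2) := by
    apply int_mono (by linarith) _ _ (by fun_prop) (by fun_prop)
    intro y hy
    have hy0 : 0 ≤ y := by linarith [hy.1]
    have hP : 1 / 5 ≤ P (t^2) y := by
      unfold P
      rw [div_le_div_iff₀ (by norm_num) (den_pos hs y)]
      have : (1 - y ^ 2) ^ 2 ≤ (2 * t ^ 2) ^ 2 := by
        apply pow_le_pow_left₀ (by nlinarith [hy.2])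
        nlinarith [hy.1, hy.2]
      linarith
    have hh := holder hy.2 φ φ1 S.dφ c1 ((int_sub_le (a := -L) (b := L) (by linarith) hy.2 hL _ (by fun_prop) fun y _ => sq_nonneg _).trans S.Eφ1)
    have hPP : 1 / 25 ≤ P (t^2) y ^ 2 := by nlinarith
    nlinarith [sq_nonneg (φ 1 - 2 * φ y), sq_nonneg (φ y), hy.1]
  rw [int_const, int_add _ _ (by fun_prop) (by fun_prop), int_const, int_cmul] at h1
  have h2 := int_sub_le (a := -L) (b := L) (c := 1 - t ^ 2) (d := 1) (by linarith) (by linarith) hL (fun y => P (t ^ 2) y ^ 2 * φ y ^ 2) (by fun_prop) (fun y _ => by positivity)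
  have h3 := S.PPhi2
  have h4 := S.hts
  have : φ 1 ^ 2 * t ^ 2 ≤ 2502 * ω * t ^ 2 := by nlinarith
  exact le_of_mul_le_mul_right this hs

lemma energyH (S : Sit L K N M t ω φ φ1 φ2 w w1) : 1 ≤ 2 * (∫ y in (-L)..L, H (t^2) y * φ y ^ 2) + 100 * ω := by
  have c0 := S.cφ
  have c1 := S.cφ1
  have c2 := S.cφ2
  have c3 := S.cw
  have hs := S.hs
  have hs1 := S.hs1
  have ht := S.ht
  have hω := S.hω
  have cP := P_cont hs
  have cH := H_cont hs
  have cH1 := H1_cont hs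
  have hHsq : ∀ y ∈ Set.Icc (-L) L, H (t^2) y ^ 2 ≤ (1 / (2 * t ^ 2)) ^ 2 := fun y _ => by
    rw [← sq_abs]; have := H_abs hs y; gcongr
  have T := S.test' (A := 13 / t ^ 3 + 1 / (2 * t ^ 2) * 1) (B := 1 / (2 * t ^ 2)) (by positivity) (by positivity)
    (fun y => H (t^2) y * φ y) (fun y => H1 (t^2) y * φ y + H (t^2) y * φ1 y)
    (fun y => (H_deriv hs y).mul (S.dφ y)) (by fun_prop) (by simp [S.bφ]) (by simp [S.bφ'])
    (by
      apply int_tri S.LL _ _ (by fun_prop) (by fun_prop) (by positivity) (by positivity)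
      · calc _ ≤ ∫ y in (-L)..L, (6 / (t^2)^4) * (P (t^2) y * φ y ^ 2) := by
              apply int_mono S.LL _ _ (by fun_prop) (by fun_prop)
              intro y _
              have h1 := H1_sq hs hs1 y
              rw [mul_pow]
              calc _ ≤ 6 * P (t^2) y / (t^2) ^ 4 * φ y ^ 2 := by gcongr
                _ = _ := by ring
          _ = (6 / (t^2)^4) * ∫ y in (-L)..L, (P (t^2) y * φ y ^ 2) := int_cmul _ _
          _ ≤ (6 / (t^2)^4) * (28 * t ^ 2) := by have := S.PPhi; gcongr
          _ = 168 / (t ^ 3) ^ 2 := by field_simp; norm_num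
          _ ≤ _ := by rw [div_pow]; gcongr; norm_num
      · exact int_mulbd S.LL φ1 (H (t^2)) c1 cH hHsq (by linarith [S.Eφ1]))
    (S.Kmul _ cH hHsq)
  set D : ℝ → ℝ := fun y => φ1 y ^ 2 + φ y * φ2 y with hD
  have cD : Continuous D := by fun_prop
  have e0 : ∫ y in (-L)..L, D y = φ L * φ1 L - φ (-L) * φ1 (-L) := by
    apply int_deriv S.LL (fun y => φ y * φ1 y) _ _ cD
    intro y _
    refine ((S.dφ y).mul (S.dφ1 y)).congr_deriv ?_
    simp [hD]; ring
  rw [S.bφ, S.bφ'] at e0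
  have e1 : ∫ y in (-L)..L, ((1 - y ^ 2) * w y + 2 * φ y) * (H (t^2) y * φ y)
      = ∫ y in (-L)..L, (((D y - (φ1 y ^ 2 + K ^ 2 * φ y ^ 2)) - P (t^2) y * w y * φ y) + 2 * (H (t^2) y * φ y ^ 2)) := by
    apply int_congr S.LL
    intro y hy
    simp only [hD]
    rw [S.eq y hy]
    linear_combination w y * φ y * VH hs y
  clear_value D
  rw [e1, int_add _ _ (by fun_prop) (by fun_prop), int_sub _ _ (by fun_prop) (by fun_prop), int_sub _ _ (by fun_prop) (by fun_prop),
    int_add _ _ (by fun_prop) (by fun_prop), int_cmul, int_cmul, S.E, e0] at T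
  have e2 := S.Pw S.LL le_rfl le_rfl φ c0 (by norm_num) (fun y hy => S.phi_bd hy)
  have e3 : N * (13 / t ^ 3 + 1 / (2 * t ^ 2) * 1 + 1 / (2 * t ^ 2)) ≤ 14 * ω ^ 2 := by
    have ht1 := S.ht1
    have h0 := S.hNt
    calc _ ≤ ω ^ 2 * t ^ 3 * (13 / t ^ 3 + 1 / (2 * t ^ 2) * 1 + 1 / (2 * t ^ 2)) := by gcongr
      _ = ω ^ 2 * (13 + t) := by field_simp; ring
      _ ≤ ω ^ 2 * (13 + 1) := by gcongr
      _ = _ := by ring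
  have T2 := (abs_le.1 T).1
  have e2' := abs_le.1 e2
  have hω1 := S.hω1
  have : 14 * ω ^ 2 ≤ ω := by nlinarith
  linarith [e2'.1, e2'.2]

lemma energyE (S : Sit L K N M t ω φ φ1 φ2 w w1) {e η : ℝ} (he : t ^ 2 ≤ e) (he1 : e ≤ 1) (hη : 0 ≤ η) (hηe : e = η ^ 2) :
    1 ≤ 2 * (∫ y in (-L)..L, H e y * φ y ^ 2) + (100 * ω + 200 * η) := by
  have h1 := S.energyH
  have h2 := H_compare S.hs he he1 hη hηe S.hL φ φ1 S.dφ S.cφ1 S.bφ S.bφ' (fun y hy => S.phi_bd hy) S.Eφ1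
  linarith

lemma small_lt (S : Sit L K N M t ω φ φ1 φ2 w w1) {e η : ℝ} (he : t ^ 2 ≤ e) (he1 : e ≤ 1) (hη : 0 ≤ η) (hηe : e = η ^ 2)
    (hL : L < 1) : K ^ 2 * (∫ y in (-L)..L, φ y ^ 2) ≤ 100 * ω + 200 * η := by
  have h1 := S.energyE he he1 hη hηe
  have he0 := S.hs.trans_le he
  have cH := H_cont he0
  have c0 := S.cφ
  have c1 := S.cφ1
  have hh : ∀ y ∈ Set.Icc 0 L, H e y * (1 - y ^ 2) ≤ 1 := fun y _ => by
    have := VH he0 y; have := P_nonneg (s := e) y; linarith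
  have i1 := inner S.hL hL.le φ φ1 (H e) S.dφ c1 cH hh S.bφ
  have i2 := inner S.hL hL.le _ _ (H e) S.refl.dφ S.refl.cφ1 cH hh S.refl.bφ
  have j1 : 0 ≤ ∫ y in (0:ℝ)..L, (φ1 y ^ 2 - 2 * (H e y * φ y ^ 2)) := i1.trans (int_mono S.hL.le _ _ (by fun_prop) (by fun_prop) fun y _ => by linarith [sq_nonneg (φ1 y + 2 * φ 0 * y)])
  have j2 : 0 ≤ ∫ y in (0:ℝ)..L, (φ1 (-y) ^ 2 - 2 * (H e (-y) * φ (-y) ^ 2)) := i2.trans (int_mono S.hL.le _ _ (by fun_prop) (by fun_prop) fun y _ => by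
    have : H e (-y) = H e y := by simp [H]
    rw [this]
    nlinarith [sq_nonneg (-φ1 (-y) + 2 * φ (-0) * y)])
  have e2 := int_neg_half (fun y => φ1 y ^ 2 - 2 * (H e y * φ y ^ 2)) L
  have e3 := int_split (a := -L) (b := 0) (c := L) (fun y => φ1 y ^ 2 - 2 * (H e y * φ y ^ 2)) (by fun_prop)
  rw [int_sub (a := -L) (b := L) _ _ (by fun_prop) (by fun_prop), int_cmul] at e3
  have := S.E
  linarith

set_option maxHeartbeats 1000000 in
lemma small_ge (S : Sit L K N M t ω φ φ1 φ2 w w1) {e η b : ℝ} (he : t ^ 2 ≤ e) (he1 : e ≤ 1) (hη : 0 ≤ η) (hηe : e = η ^ 2)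
    (hL : 1 ≤ L) (hb0 : 0 ≤ b) (hb1 : b ≤ 1) (hb : 2502 * ω ≤ b ^ 2) :
    (2/3) * (∫ y in (0:ℝ)..1, (φ1 y + 2 * φ 0 * y) ^ 2) + (2/3) * (∫ y in (0:ℝ)..1, (-φ1 (-y) + 2 * φ (-0) * y) ^ 2)
     + (∫ y in (1:ℝ)..L, φ1 y ^ 2) + (∫ y in (1:ℝ)..L, (-φ1 (-y)) ^ 2) +
     K ^ 2 * (∫ y in (-L)..L, φ y ^ 2) ≤ 100 * ω + 200 * η + 80 * b / e := by
  have h1 := S.energyE he he1 hη hηe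
  have he0 := S.hs.trans_le he
  have cH := H_cont he0
  have c0 := S.cφ
  have c1 := S.cφ1
  have half : ∀ {φ φ1 φ2 w w1 : ℝ → ℝ} (S : Sit L K N M t ω φ φ1 φ2 w w1),
      (2/3) * (∫ y in (0:ℝ)..1, (φ1 y + 2 * φ 0 * y) ^ 2) + (∫ y in (1:ℝ)..L, φ1 y ^ 2) ≤
      (∫ y in (0:ℝ)..L, φ1 y ^ 2) - 2 * (∫ y in (0:ℝ)..L, H e y * φ y ^ 2) + 40 * b / e := by
    intro φ φ1 φ2 w w1 S
    have c0 := S.cφ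
    have c1 := S.cφ1
    have hb' : |φ 1| ≤ b := abs_le_of_sq_le_sq ((S.phi_one hL).trans hb) hb0
    have i1 := inner' he0 he1 φ φ1 S.dφ c1 hb1 hb' (fun y hy => S.phi_bd ⟨by linarith [hy.1], by linarith [hy.2]⟩)
      ((int_sub_le (a := -L) (b := L) (by linarith) (by norm_num) hL _ (by fun_prop) fun y _ => sq_nonneg _).trans S.Eφ1)
    have e3 := int_split (a := 0) (b := 1) (c := L) (fun y => φ1 y ^ 2) (by fun_prop)
    have e4 := int_split (a := 0) (b := 1) (c := L) (fun y => H e y * φ y ^ 2) (by fun_prop)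
    have e5 : ∫ y in (1:ℝ)..L, H e y * φ y ^ 2 ≤ 0 := by
      have := int_mono hL (fun y => H e y * φ y ^ 2) (fun _ => 0) (by fun_prop) (by fun_prop) (fun y hy => by
        have := H_nonpos he0 (y := y) (by nlinarith [hy.1])
        nlinarith [sq_nonneg (φ y)])
      simpa using this
    linarith
  have a1 := half S
  have a2 := half S.refl
  have e1 := int_neg_half (fun y => φ1 y ^ 2) L
  have e2 := int_neg_half (fun y => H e y * φ y ^ 2) L
  have e3 := int_split (a := -L) (b := 0) (c := L) (fun y => φ1 y ^ 2) (by fun_prop)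
  have e4 := int_split (a := -L) (b := 0) (c := L) (fun y => H e y * φ y ^ 2) (by fun_prop)
  have e5 : ∀ y, H e (-y) = H e y := fun y => by simp [H]
  simp only [e5] at e2
  have e6 : ∫ y in (0:ℝ)..L, (-φ1 (-y)) ^ 2 = ∫ y in (0:ℝ)..L, φ1 (-y) ^ 2 := by simp only [neg_sq]
  rw [e6] at a2
  have := S.E
  have e40 : 40 * b / e = 40 * (b / e) := by ring
  have e80 : 80 * b / e = 80 * (b / e) := by ring
  rw [e40] at a1 a2
  rw [e80]
  linarith

lemma right_bd (S : Sit L K N M t ω φ φ1 φ2 w w1) {τ : ℝ} (hτ : 0 ≤ τ) (hτ1 : τ ≤ 1) (hL : 1 ≤ L)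
    (h1 : (2/3) * (∫ y in (0:ℝ)..1, (φ1 y + 2 * φ 0 * y) ^ 2) ≤ τ ^ 2) (h2 : ∫ y in (1:ℝ)..L, φ1 y ^ 2 ≤ τ ^ 2)
    {y : ℝ} (hy : y ∈ Set.Icc 0 L) : (φ y - φ 0 * max 0 (1 - y ^ 2)) ^ 2 ≤ 3 * τ := by
  have c0 := S.cφ
  have c1 := S.cφ1
  rcases le_total y 1 with h | h
  · rw [max_eq_right (by nlinarith [hy.1])]
    have hd : ∀ y, HasDerivAt (fun y => φ y - φ 0 * (1 - y ^ 2)) (φ1 y + 2 * φ 0 * y) y := by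
      intro y
      refine ((S.dφ y).sub (((hasDerivAt_pow 2 y).const_sub 1).const_mul (φ 0))).congr_deriv ?_
      norm_num; ring
    have := holder hy.1 _ _ hd (by fun_prop) (B := (3/2) * τ ^ 2) ((int_sub_le (a := 0) (b := 1) le_rfl hy.1 h _ (by fun_prop) fun y _ => sq_nonneg _).trans (by linarith))
    simp at this
    have h4 : τ ^ 2 ≤ τ := by nlinarith
    nlinarith [hy.1, sq_nonneg τ]
  · rw [max_eq_left (by nlinarith), mul_zero, sub_zero]
    have e1 : ∫ x in y..L, (2 * (φ x * φ1 x)) = φ L ^ 2 - φ y ^ 2 := by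
      apply int_deriv hy.2 (fun y => φ y ^ 2) _ _ (by fun_prop)
      intro x _
      refine ((S.dφ x).pow 2).congr_deriv ?_
      norm_num; ring
    have hL := S.hL
    have e2 := int_cs' hy.2 φ φ1 c0 c1 (A := 3/2) (B := τ) (by norm_num) hτ
      ((int_sub_le (a := -L) (b := L) (by linarith) hy.2 le_rfl _ (by fun_prop) fun y _ => sq_nonneg _).trans (S.phi_sq.trans (by norm_num)))
      ((int_sub_le (a := 1) (b := L) h hy.2 le_rfl _ (by fun_prop) fun y _ => sq_nonneg _).trans h2)
    rw [int_cmul, S.bφ] at e1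
    have := abs_le.1 e2
    linarith [this.1]

end Sit
end OSaux

namespace OSaux

lemma max_sq_deriv (x : ℝ) : HasDerivAt (fun x : ℝ => max 0 x ^ 2) (2 * max 0 x) x := by
  have hne : ∀ y : ℝ, y ≠ 0 → HasDerivAt (fun x : ℝ => max 0 x ^ 2) (2 * max 0 y) y := by
    intro y hy
    rcases lt_or_gt_of_ne hy with h | h
    · rw [max_eq_left h.le, mul_zero]
      refine (hasDerivAt_const y (0:ℝ)).congr_of_eventuallyEq ?_
      filter_upwards [Iio_mem_nhds h] with z hz
      rw [max_eq_left (le_of_lt hz)]; norm_num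
    · rw [max_eq_right h.le]
      have := hasDerivAt_pow 2 y
      refine (this.congr_of_eventuallyEq ?_).congr_deriv (by norm_num)
      filter_upwards [Ioi_mem_nhds h] with z hz
      rw [max_eq_right (le_of_lt hz)]
  by_cases hx : x = 0
  · subst hx
    exact hasDerivAt_of_hasDerivAt_of_ne (f := fun x : ℝ => max 0 x ^ 2) (g := fun x : ℝ => 2 * max 0 x) hne
      (by fun_prop) (by fun_prop)
  · exact hne x hx

lemma int_supp {L : ℝ} (hL : 2 ≤ L) (f : ℝ → ℝ) (hf : Continuous f) (h : ∀ y, 4 ≤ y ^ 2 → f y = 0) :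
    ∫ y in (-L)..L, f y = ∫ y in (-2:ℝ)..2, f y := by
  have s1 := int_split (a := -L) (b := -2) (c := L) f hf
  have s2 := int_split (a := -2) (b := 2) (c := L) f hf
  have z1 : ∫ y in (-L)..(-2), f y = 0 := by
    rw [int_congr (by linarith) f (fun _ => 0) (fun y hy => h y (by nlinarith [hy.2]))]; simp
  have z2 : ∫ y in (2:ℝ)..L, f y = 0 := by
    rw [int_congr (by linarith) f (fun _ => 0) (fun y hy => h y (by nlinarith [hy.1]))]; simp
  linarith

namespace Sit

variable {L K N M t ω : ℝ} {φ φ1 φ2 w w1 : ℝ → ℝ}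

lemma sq4 {y : ℝ} (hy : y ∈ Set.Icc (-2:ℝ) 2) : y ^ 2 ≤ 4 := by nlinarith [hy.1, hy.2]

/-- first half: test function -/
lemma t8a (S : Sit L K N M t ω φ φ1 φ2 w w1) (hK : K ≤ 1 / 2) (hL : 2 ≤ L) :
    |∫ y in (-2:ℝ)..2, ((1 - y ^ 2) * w y + 2 * φ y) * (y ^ 2 * (4 - y ^ 2) ^ 2 * H (t^2) y)| ≤ 960 * ω ^ 2 := by
  have c0 := S.cφ
  have c3 := S.cw
  have hs := S.hs
  have hs1 := S.hs1
  have ht := S.ht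
  have hω := S.hω
  have hK0 := S.hK
  have cP := P_cont hs
  have cH := H_cont hs
  have cH1 := H1_cont hs
  have hmx : ∀ y : ℝ, 4 ≤ y ^ 2 → max 0 (4 - y ^ 2) = 0 := fun y h => max_eq_left (by linarith)
  have hmi : ∀ y ∈ Set.Icc (-2:ℝ) 2, max 0 (4 - y ^ 2) = 4 - y ^ 2 := fun y h => max_eq_right (by linarith [sq4 h])
  have hL4 : 4 ≤ L ^ 2 := by nlinarith
  have T := S.test' (A := 415 / t ^ 3 + 512 / t ^ 2) (B := 32 / t ^ 2) (by positivity) (by positivity)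
    (fun y => y ^ 2 * max 0 (4 - y ^ 2) ^ 2 * H (t^2) y)
    (fun y => (y ^ 2 * max 0 (4 - y ^ 2) ^ 2) * H1 (t^2) y + (2 * y * max 0 (4 - y ^ 2) ^ 2 - 4 * y ^ 3 * max 0 (4 - y ^ 2)) * H (t^2) y)
    (fun y => by
      have d1 := (max_sq_deriv (4 - y ^ 2)).comp y ((hasDerivAt_pow 2 y).const_sub 4)
      refine (((hasDerivAt_pow 2 y).mul d1).mul (H_deriv hs y)).congr_deriv ?_
      simp; ring) (by fun_prop) (by simp [hmx L hL4]) (by simp [hmx L hL4])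
    (by
      rw [int_supp hL _ (by fun_prop) (fun y hy => by simp [hmx y hy])]
      apply int_tri (by norm_num) _ _ (by fun_prop) (by fun_prop) (by positivity) (by positivity)
      · calc _ ≤ ∫ y in (-2:ℝ)..2, (24576 / (t^2)^4) * P (t^2) y := by
              apply int_mono (by norm_num) _ _ (by fun_prop) (by fun_prop)
              intro y hy
              rw [hmi y hy]
              have h1 := H1_sq hs hs1 y
              have h2 := sq4 hy
              have h3 : (4 - y ^ 2) ^ 2 ≤ 4 ^ 2 := by apply pow_le_pow_left₀ (by linarith); linarith [sq_nonneg y]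
              have h4 : y ^ 2 * (4 - y ^ 2) ^ 2 ≤ 4 * 4 ^ 2 := by gcongr
              rw [mul_pow]
              calc _ ≤ (4 * 4 ^ 2) ^ 2 * (6 * P (t^2) y / (t^2) ^ 4) := by gcongr
                _ = _ := by ring
          _ = (24576 / (t^2)^4) * ∫ y in (-2:ℝ)..2, P (t^2) y := int_cmul _ _
          _ ≤ (24576 / (t^2)^4) * (7 * t ^ 2) := by have := P_int hs (a := -2) (b := 2) (by norm_num); gcongr
          _ = 172032 / (t ^ 3) ^ 2 := by field_simp; norm_num
          _ ≤ _ := by rw [div_pow]; gcongr; norm_num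
      · calc _ ≤ ∫ y in (-2:ℝ)..2, (256 / t ^ 2) ^ 2 := by
              apply int_mono (by norm_num) _ _ (by fun_prop) (by fun_prop)
              intro y hy
              rw [hmi y hy, ← sq_abs, abs_mul]
              have h1 := H_abs hs y
              have h2 := sq4 hy
              have h5 : |2 * y * (4 - y ^ 2) ^ 2 - 4 * y ^ 3 * (4 - y ^ 2)| ≤ 512 := by
                have : 2 * y * (4 - y ^ 2) ^ 2 - 4 * y ^ 3 * (4 - y ^ 2) = y * ((4 - y ^ 2) * (8 - 6 * y ^ 2)) := by ring
                rw [this, abs_mul, abs_mul]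
                have a1 : |y| ≤ 2 := abs_le.2 hy
                have a2 : |4 - y ^ 2| ≤ 4 := abs_le.2 ⟨by linarith, by linarith [sq_nonneg y]⟩
                have a3 : |8 - 6 * y ^ 2| ≤ 16 := abs_le.2 ⟨by linarith, by linarith [sq_nonneg y]⟩
                calc _ ≤ (2:ℝ) * (4 * 16) := by gcongr
                  _ ≤ _ := by norm_num
              have : |2 * y * (4 - y ^ 2) ^ 2 - 4 * y ^ 3 * (4 - y ^ 2)| * |H (t^2) y| ≤ 512 * (1 / (2 * t ^ 2)) := by gcongr
              have e : 512 * (1 / (2 * t ^ 2)) = 256 / t ^ 2 := by field_simp; norm_num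
              rw [e] at this
              gcongr
          _ = (512 / t ^ 2) ^ 2 := by rw [int_const]; field_simp; norm_num
          _ ≤ _ := le_rfl)
    (by
      rw [int_supp hL _ (by fun_prop) (fun y hy => by simp [hmx y hy])]
      have : ∫ y in (-2:ℝ)..2, (y ^ 2 * max 0 (4 - y ^ 2) ^ 2 * H (t^2) y) ^ 2 ≤ ∫ y in (-2:ℝ)..2, (32 / t ^ 2) ^ 2 := by
        apply int_mono (by norm_num) _ _ (by fun_prop) (by fun_prop)
        intro y hy
        rw [hmi y hy, ← sq_abs, abs_mul]
        have h1 := H_abs hs y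
        have h2 := sq4 hy
        have h3 : (4 - y ^ 2) ^ 2 ≤ 4 ^ 2 := by apply pow_le_pow_left₀ (by linarith); linarith [sq_nonneg y]
        have h4 : |y ^ 2 * (4 - y ^ 2) ^ 2| ≤ 4 * 4 ^ 2 := by
          rw [abs_of_nonneg (by positivity)]; gcongr
        have : |y ^ 2 * (4 - y ^ 2) ^ 2| * |H (t^2) y| ≤ 4 * 4 ^ 2 * (1 / (2 * t ^ 2)) := by gcongr
        have e : 4 * 4 ^ 2 * (1 / (2 * t ^ 2)) = 32 / t ^ 2 := by field_simp; norm_num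
        rw [e] at this
        gcongr
      rw [int_const] at this
      calc _ ≤ (1/2) ^ 2 * ((32 / t ^ 2) ^ 2 * (2 - -2)) := by gcongr; exact int_nonneg (by norm_num) _ fun y _ => sq_nonneg _
        _ = _ := by ring)
  rw [int_supp hL _ (by fun_prop) (fun y hy => by simp [hmx y hy])] at T
  rw [int_congr (by norm_num) _ (fun y => ((1 - y ^ 2) * w y + 2 * φ y) * (y ^ 2 * (4 - y ^ 2) ^ 2 * H (t^2) y)) (fun y hy => by rw [hmi y hy])] at T
  refine T.trans ?_
  have ht1 := S.ht1
  have h0 := S.hNt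
  calc _ ≤ ω ^ 2 * t ^ 3 * (415 / t ^ 3 + 512 / t ^ 2 + 32 / t ^ 2) := by gcongr
      _ = ω ^ 2 * (415 + 544 * t) := by field_simp; ring
      _ ≤ ω ^ 2 * (415 + 544 * 1) := by gcongr
      _ ≤ _ := by linarith [sq_nonneg ω]

/-- second: replacing `H_s` by `H_e` -/
lemma t8b (S : Sit L K N M t ω φ φ1 φ2 w w1) (hL : 2 ≤ L) {e η : ℝ} (he : t ^ 2 ≤ e) (he1 : e ≤ 1) (hη : 0 ≤ η) (hηe : e = η ^ 2) :
    |∫ y in (-2:ℝ)..2, (H (t^2) y - H e y) * (y ^ 2 * (4 - y ^ 2) ^ 2 * φ y)| ≤ 1024 * η := by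
  have c0 := S.cφ
  have c1 := S.cφ1
  have hs := S.hs
  have he0 := hs.trans_le he
  have cH := H_cont hs
  have cHe := H_cont he0
  have cL := Lam_cont hs he0
  set X : ℝ → ℝ := fun y => ((4 - y ^ 2) * (4 - 5 * y ^ 2)) * φ y + (y * (4 - y ^ 2) ^ 2) * φ1 y with hX
  have cX : Continuous X := by fun_prop
  set D : ℝ → ℝ := fun y => 4 * ((H (t^2) y - H e y) * (y ^ 2 * (4 - y ^ 2) ^ 2 * φ y)) + Lam (t^2) e y * X y with hD
  have cD : Continuous D := by fun_prop
  have e0 : ∫ y in (-2:ℝ)..2, D y = Lam (t^2) e 2 * (2 * (4 - 2 ^ 2) ^ 2 * φ 2) - Lam (t^2) e (-2) * ((-2) * (4 - (-2) ^ 2) ^ 2 * φ (-2)) := by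
    apply int_deriv (by norm_num) (fun y => Lam (t^2) e y * (y * (4 - y ^ 2) ^ 2 * φ y)) _ _ cD
    intro y _
    refine ((Lam_deriv hs he0 y).mul (((hasDerivAt_id y).mul (((hasDerivAt_pow 2 y).const_sub 4).pow 2)).mul (S.dφ y))).congr_deriv ?_
    simp [hD, hX]; ring
  have e0' : ∫ y in (-2:ℝ)..2, D y = 0 := by rw [e0]; norm_num
  have hX2 : ∫ y in (-2:ℝ)..2, X y ^ 2 ≤ (64 * (3/2) + 32 * 1) ^ 2 := by
    apply int_tri (by norm_num) _ _ (by fun_prop) (by fun_prop) (by norm_num) (by norm_num)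
    · refine int_mulbd (by norm_num) φ _ c0 (by fun_prop) (fun y hy => ?_) ((int_sub_le (a := -L) (b := L) (by linarith) (by norm_num) hL _ (by fun_prop) fun y _ => sq_nonneg _).trans (S.phi_sq.trans (by norm_num)))
      have h2 := sq4 hy
      rw [← sq_abs, abs_mul]
      have a2 : |4 - y ^ 2| ≤ 4 := abs_le.2 ⟨by linarith, by linarith [sq_nonneg y]⟩
      have a3 : |4 - 5 * y ^ 2| ≤ 16 := abs_le.2 ⟨by linarith, by linarith [sq_nonneg y]⟩
      have : |4 - y ^ 2| * |4 - 5 * y ^ 2| ≤ 4 * 16 := by gcongr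
      calc _ ≤ ((4:ℝ) * 16) ^ 2 := by gcongr
        _ = _ := by norm_num
    · refine int_mulbd (by norm_num) φ1 _ c1 (by fun_prop) (fun y hy => ?_) ((int_sub_le (a := -L) (b := L) (by linarith) (by norm_num) hL _ (by fun_prop) fun y _ => sq_nonneg _).trans (S.Eφ1.trans (by norm_num)))
      have h2 := sq4 hy
      rw [← sq_abs, abs_mul, abs_pow]
      have a1 : |y| ≤ 2 := abs_le.2 hy
      have a2 : |4 - y ^ 2| ≤ 4 := abs_le.2 ⟨by linarith, by linarith [sq_nonneg y]⟩
      calc _ ≤ ((2:ℝ) * 4 ^ 2) ^ 2 := by gcongr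
        _ = _ := by norm_num
  have hL2 : ∫ y in (-2:ℝ)..2, Lam (t^2) e y ^ 2 ≤ (32 * η) ^ 2 := by
    refine (Lam_int hs he he1 (by norm_num) le_rfl).trans ?_
    rw [hηe]; linarith [sq_nonneg η]
  have cs := int_cs' (by norm_num) _ X cL cX (by positivity) (by norm_num) hL2 hX2
  clear_value X
  have e1 : ∫ y in (-2:ℝ)..2, D y = 4 * (∫ y in (-2:ℝ)..2, (H (t^2) y - H e y) * (y ^ 2 * (4 - y ^ 2) ^ 2 * φ y)) + ∫ y in (-2:ℝ)..2, Lam (t^2) e y * X y := by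
    simp only [hD]
    rw [int_add _ _ (by fun_prop) (by fun_prop), int_cmul]
  have := abs_le.1 cs
  rw [abs_le]
  constructor <;> linarith [this.1, this.2]

/-- third: the leading part -/
lemma t8c (S : Sit L K N M t ω φ φ1 φ2 w w1) (hK : K ≤ 1 / 2) {e ς c : ℝ} (he : 0 < e) (he1 : e ≤ 1 / 1000)
    (hς : ∀ y ∈ Set.Icc (-2:ℝ) 2, |φ y - c * max 0 (1 - y ^ 2)| ≤ ς) :
    27 * |c| ≤ |∫ y in (-2:ℝ)..2, φ y * ((32 - 96 * y ^ 2 + 30 * y ^ 4) - K ^ 2 * (y ^ 2 * (4 - y ^ 2) ^ 2) + 2 * H e y * (y ^ 2 * (4 - y ^ 2) ^ 2))| + 4000 * ς / e := by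
  have c0 := S.cφ
  have cH := H_cont he
  have cP := P_cont he
  have hK0 := S.hK
  have hK2 : K ^ 2 ≤ 1 / 4 := by nlinarith
  have hς0 : 0 ≤ ς := (abs_nonneg _).trans (hς 0 (by norm_num))
  set q : ℝ → ℝ := fun y => (32 - 96 * y ^ 2 + 30 * y ^ 4) - K ^ 2 * (y ^ 2 * (4 - y ^ 2) ^ 2) + 2 * H e y * (y ^ 2 * (4 - y ^ 2) ^ 2) with hq
  have cq : Continuous q := by fun_prop
  have a1 : |∫ y in (-2:ℝ)..2, (φ y - c * max 0 (1 - y ^ 2)) * q y| ≤ 4000 * ς / e := by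
    calc _ ≤ ∫ y in (-2:ℝ)..2, 1000 * ς / e := by
          apply abs_int_le (by norm_num) _ _ (by fun_prop) (by fun_prop)
          intro y hy
          have h1 := H_abs he y
          have h2 := sq4 hy
          have h0 := sq_nonneg y
          have h3 : (4 - y ^ 2) ^ 2 ≤ 4 ^ 2 := by apply pow_le_pow_left₀ (by linarith); linarith
          have h4 : |y ^ 2 * (4 - y ^ 2) ^ 2| ≤ 4 * 4 ^ 2 := by
            rw [abs_of_nonneg (by positivity)]; gcongr
          have h5 : |32 - 96 * y ^ 2 + 30 * y ^ 4| ≤ 600 := abs_le.2 ⟨by linarith [sq_nonneg (y ^ 2)], by linarith [mul_nonneg h0 (sub_nonneg.2 h2)]⟩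
          have h6 : |K ^ 2 * (y ^ 2 * (4 - y ^ 2) ^ 2)| ≤ 1 / 4 * (4 * 4 ^ 2) := by
            rw [abs_mul, abs_of_nonneg (sq_nonneg K)]; gcongr
          have h7 : |2 * H e y * (y ^ 2 * (4 - y ^ 2) ^ 2)| ≤ 2 * (1 / (2 * e)) * (4 * 4 ^ 2) := by
            rw [abs_mul, abs_mul, abs_of_pos (by norm_num : (0:ℝ) < 2)]; gcongr
          have h8 : |q y| ≤ 1000 / e := by
            have i1 : 1 ≤ 1 / e := by rw [le_div_iff₀ he]; linarith
            have i2 : 2 * (1 / (2 * e)) * (4 * 4 ^ 2) = 64 * (1 / e) := by field_simp; norm_num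
            rw [i2] at h7
            have i3 : 1000 / e = 1000 * (1 / e) := by ring
            rw [i3]
            have := abs_le.1 h5
            have := abs_le.1 h6
            have := abs_le.1 h7
            simp only [hq]
            rw [abs_le]
            constructor <;> linarith
          rw [abs_mul]
          calc _ ≤ ς * (1000 / e) := mul_le_mul (hς y hy) h8 (abs_nonneg _) hς0
            _ = _ := by ring
      _ = _ := by rw [int_const]; ring
  have a2 : ∫ y in (-2:ℝ)..2, max 0 (1 - y ^ 2) * q y = ∫ y in (-1:ℝ)..1, (1 - y ^ 2) * q y := by
    have s1 := int_split (a := -2) (b := -1) (c := 2) (fun y => max 0 (1 - y ^ 2) * q y) (by fun_prop)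
    have s2 := int_split (a := -1) (b := 1) (c := 2) (fun y => max 0 (1 - y ^ 2) * q y) (by fun_prop)
    have z1 : ∫ y in (-2:ℝ)..(-1), max 0 (1 - y ^ 2) * q y = 0 := by
      rw [int_congr (by norm_num) _ (fun _ => 0) (fun y hy => by rw [max_eq_left (by nlinarith [hy.2]), zero_mul])]; simp
    have z2 : ∫ y in (1:ℝ)..2, max 0 (1 - y ^ 2) * q y = 0 := by
      rw [int_congr (by norm_num) _ (fun _ => 0) (fun y hy => by rw [max_eq_left (by nlinarith [hy.1]), zero_mul])]; simp
    have z3 := int_congr (a := -1) (b := 1) (by norm_num) (fun y => max 0 (1 - y ^ 2) * q y) (fun y => (1 - y ^ 2) * q y) (fun y hy => by rw [max_eq_right (by nlinarith [hy.1, hy.2])])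
    linarith
  have a3 : ∫ y in (-1:ℝ)..1, ((1 - y ^ 2) * (32 - 96 * y ^ 2 + 30 * y ^ 4) + 2 * (y ^ 2 * (4 - y ^ 2) ^ 2)) = 36 := by
    rw [int_deriv (by norm_num) (fun y : ℝ => (1 - y ^ 2) * (32 * y - 32 * y ^ 3 + 6 * y ^ 5) + 2 * y * (16 * y ^ 2 - 8 * y ^ 4 + y ^ 6)) _ _ (by fun_prop)]
    · norm_num
    · intro y _
      have d := (((hasDerivAt_pow 2 y).const_sub 1).mul ((((hasDerivAt_id y).const_mul 32).sub ((hasDerivAt_pow 3 y).const_mul 32)).add ((hasDerivAt_pow 5 y).const_mul 6))).add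
        (((hasDerivAt_id y).const_mul 2).mul ((((hasDerivAt_pow 2 y).const_mul 16).sub ((hasDerivAt_pow 4 y).const_mul 8)).add (hasDerivAt_pow 6 y)))
      refine d.congr_deriv ?_
      simp; ring
  have a4 : 27 ≤ ∫ y in (-1:ℝ)..1, (1 - y ^ 2) * q y := by
    have : ∫ y in (-1:ℝ)..1, (((1 - y ^ 2) * (32 - 96 * y ^ 2 + 30 * y ^ 4) + 2 * (y ^ 2 * (4 - y ^ 2) ^ 2)) - (4 + 32 * P e y)) ≤ ∫ y in (-1:ℝ)..1, (1 - y ^ 2) * q y := by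
      apply int_mono (by norm_num) _ _ (by fun_prop) (by fun_prop)
      intro y hy
      have h0 := sq_nonneg y
      have h2 : y ^ 2 ≤ 1 := by nlinarith [hy.1, hy.2]
      have h3 : (4 - y ^ 2) ^ 2 ≤ 4 ^ 2 := by apply pow_le_pow_left₀ (by linarith); linarith
      set m := y ^ 2 * (4 - y ^ 2) ^ 2 with hm
      have h4 : m ≤ 1 * 4 ^ 2 := by rw [hm]; gcongr
      have hm0 : 0 ≤ m := by positivity
      have h5 : (1 - y ^ 2) * q y = (1 - y ^ 2) * (32 - 96 * y ^ 2 + 30 * y ^ 4) + 2 * m - (K ^ 2 * ((1 - y ^ 2) * m) + 2 * (P e y * m)) := by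
        simp only [hq]; rw [← hm]; linear_combination 2 * m * VH he y
      rw [h5]
      have h6 : (1 - y ^ 2) * m ≤ 16 := by nlinarith
      have h6' : 0 ≤ (1 - y ^ 2) * m := mul_nonneg (by linarith) hm0
      have h7 : K ^ 2 * ((1 - y ^ 2) * m) ≤ 1/4 * 16 := by gcongr
      have h8 : P e y * m ≤ 16 * P e y := by nlinarith [P_nonneg (s := e) y]
      linarith
    rw [int_sub _ _ (by fun_prop) (by fun_prop), a3, int_add _ _ (by fun_prop) (by fun_prop), int_const, int_cmul] at this
    have := P_int he (a := -1) (b := 1) (by norm_num)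
    linarith
  have a5 : ∫ y in (-2:ℝ)..2, (φ y - c * max 0 (1 - y ^ 2)) * q y = (∫ y in (-2:ℝ)..2, φ y * q y) - c * ∫ y in (-2:ℝ)..2, max 0 (1 - y ^ 2) * q y := by
    rw [← int_cmul, ← int_sub _ _ (by fun_prop) (by fun_prop)]
    congr 1; ext y; ring
  rw [a5, a2] at a1
  set I := ∫ y in (-1:ℝ)..1, (1 - y ^ 2) * q y
  set Y := ∫ y in (-2:ℝ)..2, φ y * q y
  have b1 : |c| * I ≤ |Y| + 4000 * ς / e := by
    have : |c| * I = |c * I| := by rw [abs_mul, abs_of_pos (by linarith : 0 < I)]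
    rw [this]
    have e : c * I = Y - (Y - c * I) := by ring
    rw [e]
    exact (abs_sub _ _).trans (by linarith)
  nlinarith [abs_nonneg c]

lemma t8 (S : Sit L K N M t ω φ φ1 φ2 w w1) (hK : K ≤ 1 / 2) {e η ς c : ℝ} (he : t ^ 2 ≤ e) (he1 : e ≤ 1 / 1000)
    (hη : 0 ≤ η) (hηe : e = η ^ 2)
    (hς : ∀ y ∈ Set.Icc (-2:ℝ) 2, |φ y - c * max 0 (1 - y ^ 2)| ≤ ς) :
    27 * |c| ≤ 3000 * ω + 2048 * η + 4000 * ς / e := by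
  have hL : 2 ≤ L := by nlinarith [S.hKL, S.hK, S.hL]
  have c0 := S.cφ
  have c1 := S.cφ1
  have c2 := S.cφ2
  have c3 := S.cw
  have hs := S.hs
  have he0 := hs.trans_le he
  have cP := P_cont hs
  have cH := H_cont hs
  have cHe := H_cont he0
  have A := S.t8a hK hL
  have B := S.t8b hL he (by linarith) hη hηe
  have C := S.t8c hK he0 he1 hς
  have D := S.Pw (a := -2) (b := 2) (Q := 64) (by norm_num) (by linarith) hL (fun y => y ^ 2 * (4 - y ^ 2) ^ 2) (by fun_prop) (by norm_num) (fun y hy => by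
    have h2 := sq4 hy
    have h3 : (4 - y ^ 2) ^ 2 ≤ 4 ^ 2 := by apply pow_le_pow_left₀ (by linarith); linarith [sq_nonneg y]
    rw [abs_of_nonneg (by positivity)]
    calc _ ≤ (4:ℝ) * 4 ^ 2 := by gcongr
      _ = _ := by norm_num)
  set Z : ℝ → ℝ := fun y => φ2 y * (y ^ 2 * (4 - y ^ 2) ^ 2) - φ y * (32 - 96 * y ^ 2 + 30 * y ^ 4) with hZ
  have cZ : Continuous Z := by fun_prop
  have e0 : ∫ y in (-2:ℝ)..2, Z y = 0 := by
    rw [int_deriv (by norm_num) (fun y : ℝ => φ1 y * (y ^ 2 * (4 - y ^ 2) ^ 2) - φ y * (32 * y - 32 * y ^ 3 + 6 * y ^ 5)) _ _ cZ]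
    · norm_num
    · intro y _
      have d1 := (S.dφ1 y).mul ((hasDerivAt_pow 2 y).mul (((hasDerivAt_pow 2 y).const_sub 4).pow 2))
      have d2 := (S.dφ y).mul ((((hasDerivAt_id y).const_mul 32).sub ((hasDerivAt_pow 3 y).const_mul 32)).add ((hasDerivAt_pow 5 y).const_mul 6))
      refine (d1.sub d2).congr_deriv ?_
      simp [hZ]; ring
  have e1 : ∫ y in (-2:ℝ)..2, ((1 - y ^ 2) * w y + 2 * φ y) * (y ^ 2 * (4 - y ^ 2) ^ 2 * H (t^2) y)
    = ∫ y in (-2:ℝ)..2, (((Z y + φ y * ((32 - 96 * y ^ 2 + 30 * y ^ 4) - K ^ 2 * (y ^ 2 * (4 - y ^ 2) ^ 2) + 2 * H e y * (y ^ 2 * (4 - y ^ 2) ^ 2)))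
       + 2 * ((H (t^2) y - H e y) * (y ^ 2 * (4 - y ^ 2) ^ 2 * φ y))) - P (t^2) y * w y * (y ^ 2 * (4 - y ^ 2) ^ 2)) := by
    apply int_congr (by norm_num)
    intro y hy
    simp only [hZ]
    rw [S.eq y ⟨by linarith [hy.1], by linarith [hy.2]⟩]
    linear_combination w y * (y ^ 2 * (4 - y ^ 2) ^ 2) * VH hs y
  clear_value Z
  rw [int_sub _ _ (by fun_prop) (by fun_prop), int_add _ _ (by fun_prop) (by fun_prop), int_add _ _ (by fun_prop) (by fun_prop), int_cmul, e0] at e1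
  rw [e1] at A
  have A' := abs_le.1 A
  have B' := abs_le.1 B
  have D' := abs_le.1 D
  have hω := S.hω
  have hω1 := S.hω1
  have hω2 : 960 * ω ^ 2 ≤ ω := by nlinarith
  have F : |∫ y in (-2:ℝ)..2, φ y * ((32 - 96 * y ^ 2 + 30 * y ^ 4) - K ^ 2 * (y ^ 2 * (4 - y ^ 2) ^ 2) + 2 * H e y * (y ^ 2 * (4 - y ^ 2) ^ 2))| ≤ 3000 * ω + 2048 * η := by
    rw [abs_le]
    constructor <;> linarith [A'.1, A'.2, B'.1, B'.2, D'.1, D'.2]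
  linarith

end Sit
end OSaux
namespace OSaux
namespace Sit
variable {L K N M t ω : ℝ} {φ φ1 φ2 w w1 : ℝ → ℝ}

lemma capK (S : Sit L K N M t ω φ φ1 φ2 w w1) (hω : ω ≤ (1/10^220)^3) (hK : 1/2 ≤ K)
   (h : K ^ 2 * (∫ y in (-L)..L, φ y ^ 2) ≤ 1/10^100) : False := by
  have c0 := S.cφ
  have e1 := S.energyE (e := 1/10^6) (η := 1/10^3) (S.hts.trans (hω.trans (by norm_num))) (by norm_num) (by norm_num) (by norm_num)
  have cH := H_cont (s := (1/10^6:ℝ)) (by norm_num)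
  have i0 : 0 ≤ ∫ y in (-L)..L, φ y ^ 2 := int_nonneg S.LL _ fun y _ => sq_nonneg _
  have i1 : (1/4) * (∫ y in (-L)..L, φ y ^ 2) ≤ 1/10^100 := by
    refine le_trans ?_ h
    gcongr; nlinarith
  have i2 : ∫ y in (-L)..L, H (1/10^6) y * φ y ^ 2 ≤ ∫ y in (-L)..L, 10^6 * φ y ^ 2 := by
    apply int_mono S.LL _ _ (by fun_prop) (by fun_prop)
    intro y _
    have := (le_abs_self _).trans (H_abs (s := (1/10^6:ℝ)) (by norm_num) y)
    gcongr; exact this.trans (by norm_num)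
  rw [int_cmul] at i2
  have : ω ≤ 1/10^6 := hω.trans (by norm_num)
  norm_num at *
  linarith

lemma capC (S : Sit L K N M t ω φ φ1 φ2 w w1) (hω : ω ≤ (1/10^220)^3) (hK : K ≤ 1/2) (hL : 2 ≤ L) (c : ℝ)
   (h : ∀ y ∈ Set.Icc (-L) L, |φ y - c * max 0 (1 - y ^ 2)| ≤ 1/10^24) : False := by
  have c0 := S.cφ
  have e1 := S.energyE (e := 1/10^6) (η := 1/10^3) (S.hts.trans (hω.trans (by norm_num))) (by norm_num) (by norm_num) (by norm_num)
  have cH := H_cont (s := (1/10^6:ℝ)) (by norm_num)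
  have e8 := S.t8 hK (e := 1/10^16) (η := 1/10^8) (c := c) (ς := 1/10^24) (S.hts.trans (hω.trans (by norm_num))) (by norm_num) (by norm_num) (by norm_num) (fun y hy => h y ⟨by linarith [hy.1], by linarith [hy.2]⟩)
  have hω' : ω ≤ 1/10^20 := hω.trans (by norm_num)
  have hc : |c| ≤ 1/10^5 := by norm_num at *; linarith
  have cF : Continuous (fun y => H (1/10^6) y * φ y ^ 2) := by fun_prop
  have s1 := int_split (a := -L) (b := -1) (c := L) _ cF
  have s2 := int_split (a := -1) (b := 1) (c := L) _ cF
  have z : ∀ y, 1 ≤ y^2 → H (1/10^6) y * φ y ^ 2 ≤ 0 := fun y hy =>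
    mul_nonpos_of_nonpos_of_nonneg (H_nonpos (by norm_num) hy) (sq_nonneg _)
  have i1 : ∫ y in (-L)..(-1), H (1/10^6) y * φ y ^ 2 ≤ 0 := by
    have := int_mono (a := -L) (b := -1) (by linarith) _ (fun _ => 0) cF (by fun_prop) (fun y hy => z y (by nlinarith [hy.2]))
    simpa using this
  have i2 : ∫ y in (1:ℝ)..L, H (1/10^6) y * φ y ^ 2 ≤ 0 := by
    have := int_mono (a := 1) (b := L) (by linarith) _ (fun _ => 0) cF (by fun_prop) (fun y hy => z y (by nlinarith [hy.1]))
    simpa using this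
  have i3 : ∫ y in (-1:ℝ)..1, H (1/10^6) y * φ y ^ 2 ≤ ∫ y in (-1:ℝ)..1, (1/10^3 : ℝ) := by
    apply int_mono (by norm_num) _ _ cF (by fun_prop)
    intro y hy
    have h1 := (le_abs_self _).trans (H_abs (s := (1/10^6:ℝ)) (by norm_num) y)
    have h2 := h y ⟨by linarith [hy.1], by linarith [hy.2]⟩
    have h3 : |max 0 (1 - y ^ 2)| ≤ 1 := by
      rw [abs_of_nonneg (le_max_left _ _)]; apply max_le (by norm_num); linarith [sq_nonneg y]
    have h4 : |φ y| ≤ 2/10^5 := by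
      calc |φ y| = |(φ y - c * max 0 (1 - y ^ 2)) + c * max 0 (1 - y ^ 2)| := by congr 1; ring
        _ ≤ |φ y - c * max 0 (1 - y ^ 2)| + |c| * |max 0 (1 - y ^ 2)| := by rw [← abs_mul]; exact abs_add_le _ _
        _ ≤ 1/10^24 + 1/10^5 * 1 := by gcongr
        _ ≤ _ := by norm_num
    have h5 : φ y ^ 2 ≤ (2/10^5)^2 := by rw [← sq_abs]; gcongr
    calc _ ≤ (1 / (2 * (1 / 10 ^ 6))) * (2/10^5:ℝ)^2 := by gcongr
      _ ≤ _ := by norm_num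
  rw [int_const] at i3
  norm_num at *
  linarith

theorem contra (S : Sit L K N M t ω φ φ1 φ2 w w1) (hω : ω ≤ (1/10^220)^3) : False := by
  have e0 : 100 * ω + 200 * (1/10^104) + 80 * ((1/10^160)^2) / (1/10^104)^2 ≤ (1/10^50)^2 := by
    refine le_trans (b := 100 * (1/10^220)^3 + 200 * (1/10^104) + 80 * ((1/10^160)^2) / (1/10^104)^2) (by linarith) (by norm_num)
  have hb : 2502 * ω ≤ ((1/10^160:ℝ)^2)^2 := by
    refine le_trans (b := 2502 * (1/10^220)^3) (by linarith) (by norm_num)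
  have hte : t ^ 2 ≤ (1/10^104)^2 := S.hts.trans (hω.trans (by norm_num))
  rcases le_or_gt (1/2) K with hK | hK
  · rcases lt_or_ge L 1 with hL | hL
    · have h := S.small_lt hte (by norm_num) (by norm_num) rfl hL
      refine S.capK hω hK (h.trans (le_trans (b := 100 * (1/10^220)^3 + 200 * (1/10^104)) (by linarith) (by norm_num)))
    · have h := S.small_ge hte (by norm_num) (by norm_num) rfl hL (by positivity) (by norm_num) hb
      have h := h.trans e0; rw [neg_zero] at h
      have a1 : 0 ≤ ∫ y in (0:ℝ)..1, (φ1 y + 2 * φ 0 * y) ^ 2 := int_nonneg (by norm_num) _ fun y _ => sq_nonneg _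
      have a2 : 0 ≤ ∫ y in (0:ℝ)..1, (-φ1 (-y) + 2 * φ 0 * y) ^ 2 := int_nonneg (by norm_num) _ fun y _ => sq_nonneg _
      have a3 : 0 ≤ ∫ y in (1:ℝ)..L, φ1 y ^ 2 := int_nonneg hL _ fun y _ => sq_nonneg _
      have a4 : 0 ≤ ∫ y in (1:ℝ)..L, (-φ1 (-y)) ^ 2 := int_nonneg hL _ fun y _ => sq_nonneg _
      refine S.capK hω hK (le_trans ?_ (le_of_eq (by norm_num) : ((1/10^50)^2:ℝ) ≤ 1/10^100))
      clear hω e0 hb hte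
      generalize ((1/10^50)^2:ℝ) = T at *
      linarith
  · have hL2 : 2 ≤ L := by nlinarith [S.hKL, S.hK, S.hL]
    have hL : 1 ≤ L := by linarith
    have h := S.small_ge hte (by norm_num) (by norm_num) rfl hL (by positivity) (by norm_num) hb
    have h := h.trans e0; rw [neg_zero] at h
    have a1 : 0 ≤ ∫ y in (0:ℝ)..1, (φ1 y + 2 * φ 0 * y) ^ 2 := int_nonneg (by norm_num) _ fun y _ => sq_nonneg _
    have a2 : 0 ≤ ∫ y in (0:ℝ)..1, (-φ1 (-y) + 2 * φ 0 * y) ^ 2 := int_nonneg (by norm_num) _ fun y _ => sq_nonneg _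
    have a3 : 0 ≤ ∫ y in (1:ℝ)..L, φ1 y ^ 2 := int_nonneg hL _ fun y _ => sq_nonneg _
    have a4 : 0 ≤ ∫ y in (1:ℝ)..L, (-φ1 (-y)) ^ 2 := int_nonneg hL _ fun y _ => sq_nonneg _
    have a5 : 0 ≤ K ^ 2 * (∫ y in (-L)..L, φ y ^ 2) := mul_nonneg (sq_nonneg _) (int_nonneg S.LL _ fun y _ => sq_nonneg _)
    refine S.capC hω hK.le hL2 (φ 0) ?_
    intro y hy
    apply abs_le_of_sq_le_sq _ (by norm_num)
    have fin : (3 * (1/10^50) : ℝ) ≤ (1/10^24)^2 := by norm_num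
    clear hω e0 hb hte
    have k1 : (2/3) * (∫ y in (0:ℝ)..1, (φ1 y + 2 * φ 0 * y) ^ 2) ≤ (1/10^50)^2 := by
      refine le_trans ?_ h; linarith
    have k2 : (2/3) * (∫ y in (0:ℝ)..1, (-φ1 (-y) + 2 * φ 0 * y) ^ 2) ≤ (1/10^50)^2 := by
      refine le_trans ?_ h; linarith
    have k3 : (∫ y in (1:ℝ)..L, φ1 y ^ 2) ≤ (1/10^50)^2 := by
      refine le_trans ?_ h; linarith
    have k4 : (∫ y in (1:ℝ)..L, (-φ1 (-y)) ^ 2) ≤ (1/10^50)^2 := by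
      refine le_trans ?_ h; linarith
    rcases le_total 0 y with hy0 | hy0
    · exact (S.right_bd (τ := 1/10^50) (by norm_num) (by norm_num) hL k1 k3 ⟨hy0, hy.2⟩).trans fin
    · have := (S.refl.right_bd (τ := 1/10^50) (by norm_num) (by norm_num) hL (by rw [neg_zero]; exact k2) k4 (y := -y) ⟨by linarith, by linarith [hy.1]⟩).trans fin
      simpa using this
end Sit
end OSaux
namespace OSaux

structure Base (L K : ℝ) (φ φ1 φ2 w w1 : ℝ → ℝ) : Prop where
  hL : 0 < L
  hK : 0 < K
  dφ : ∀ y, HasDerivAt φ (φ1 y) y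
  dφ1 : ∀ y, HasDerivAt φ1 (φ2 y) y
  dw : ∀ y, HasDerivAt w (w1 y) y
  cφ2 : Continuous φ2
  cw1 : Continuous w1
  eq : ∀ y ∈ Set.Icc (-L) L, φ2 y = w y + K ^ 2 * φ y
  bφ : φ L = 0
  bφ' : φ (-L) = 0
  bw : w L = 0
  bw' : w (-L) = 0

lemma quad_cs {A B C D x y k : ℝ} (hA : 0 ≤ A) (hB : 0 ≤ B) (hC : 0 ≤ C) (hD : 0 ≤ D) (hk : 0 ≤ k)
    (hx : x ^ 2 ≤ A * C) (hy : y ^ 2 ≤ B * D) : (x + k * y) ^ 2 ≤ (A + k * B) * (C + k * D) := by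
  have h1 : |2 * (x * y)| ≤ A * D + B * C := by
    apply abs_le_of_sq_le_sq _ (by positivity)
    have : x ^ 2 * y ^ 2 ≤ (A * C) * (B * D) := by gcongr
    linarith [sq_nonneg (A * D - B * C)]
  have h2 := (abs_le.1 h1).2
  linarith [mul_le_mul_of_nonneg_left h2 hk, mul_le_mul_of_nonneg_left hy (mul_nonneg hk hk)]

namespace Base
variable {L K : ℝ} {φ φ1 φ2 w w1 : ℝ → ℝ}

lemma LL (S : Base L K φ φ1 φ2 w w1) : -L ≤ L := by linarith [S.hL]

lemma wphi (S : Base L K φ φ1 φ2 w w1) :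
    ∫ y in (-L)..L, w y * φ y = -((∫ y in (-L)..L, φ1 y ^ 2) + K ^ 2 * ∫ y in (-L)..L, φ y ^ 2) := by
  have c0 := cont_of S.dφ
  have c1 := cont_of S.dφ1
  have c2 := S.cφ2
  have h := int_deriv S.LL (fun y => φ1 y * φ y) (fun y => φ2 y * φ y + φ1 y * φ1 y) (fun y _ => (S.dφ1 y).mul (S.dφ y)) (by fun_prop)
  rw [S.bφ, S.bφ', int_add _ _ (by fun_prop) (by fun_prop)] at h
  have h2 : ∫ y in (-L)..L, w y * φ y = ∫ y in (-L)..L, (φ2 y * φ y - K ^ 2 * φ y ^ 2) :=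
    int_congr S.LL _ _ fun y hy => by rw [S.eq y hy]; ring
  rw [int_sub _ _ (by fun_prop) (by fun_prop), int_cmul] at h2
  have h3 : ∫ y in (-L)..L, φ1 y ^ 2 = ∫ y in (-L)..L, φ1 y * φ1 y := int_congr S.LL _ _ fun y hy => by ring
  rw [h3]; linarith

lemma wsq (S : Base L K φ φ1 φ2 w w1) :
    (∫ y in (-L)..L, w y ^ 2) ^ 2 ≤ ((∫ y in (-L)..L, φ1 y ^ 2) + K ^ 2 * ∫ y in (-L)..L, φ y ^ 2) *
      ((∫ y in (-L)..L, w1 y ^ 2) + K ^ 2 * ∫ y in (-L)..L, w y ^ 2) := by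
  have c0 := cont_of S.dφ
  have c1 := cont_of S.dφ1
  have c2 := S.cφ2
  have c3 := cont_of S.dw
  have c4 := S.cw1
  have h := int_deriv S.LL (fun y => φ1 y * w y) (fun y => φ2 y * w y + φ1 y * w1 y) (fun y _ => (S.dφ1 y).mul (S.dw y)) (by fun_prop)
  rw [S.bw, S.bw', int_add _ _ (by fun_prop) (by fun_prop)] at h
  have h2 : ∫ y in (-L)..L, w y ^ 2 = ∫ y in (-L)..L, (φ2 y * w y - K ^ 2 * (φ y * w y)) :=
    int_congr S.LL _ _ fun y hy => by rw [S.eq y hy]; ring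
  rw [int_sub _ _ (by fun_prop) (by fun_prop), int_cmul] at h2
  have h3 := quad_cs (int_nonneg S.LL _ fun y _ => sq_nonneg (φ1 y)) (int_nonneg S.LL _ fun y _ => sq_nonneg (φ y))
    (int_nonneg S.LL _ fun y _ => sq_nonneg (w1 y)) (int_nonneg S.LL _ fun y _ => sq_nonneg (w y)) (sq_nonneg K)
    (int_cs S.LL φ1 w1 c1 c4) (int_cs S.LL φ w c0 c3)
  refine le_trans (le_of_eq ?_) h3
  rw [← neg_sq]; congr 1; linarith

lemma scale (S : Base L K φ φ1 φ2 w w1) (c : ℝ) :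
    Base L K (fun y => c * φ y) (fun y => c * φ1 y) (fun y => c * φ2 y) (fun y => c * w y) (fun y => c * w1 y) where
  hL := S.hL
  hK := S.hK
  dφ := fun y => (S.dφ y).const_mul c
  dφ1 := fun y => (S.dφ1 y).const_mul c
  dw := fun y => (S.dw y).const_mul c
  cφ2 := continuous_const.mul S.cφ2
  cw1 := continuous_const.mul S.cw1
  eq := fun y hy => by simp only [S.eq y hy]; ring
  bφ := by simp [S.bφ]
  bφ' := by simp [S.bφ']
  bw := by simp [S.bw]
  bw' := by simp [S.bw']

/-- testing with `w` when the potential is at most `v` -/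
lemma testw (S : Base L K φ φ1 φ2 w w1) {N v : ℝ} {V : ℝ → ℝ} (cV : Continuous V) (hV : ∀ y ∈ Set.Icc (-L) L, V y ≤ v)
   (test : |∫ y in (-L)..L, (V y * w y + 2 * φ y) * w y| ≤ N) :
   2 * ((∫ y in (-L)..L, φ1 y ^ 2) + K ^ 2 * ∫ y in (-L)..L, φ y ^ 2) ≤ N + v * ∫ y in (-L)..L, w y ^ 2 := by
  have c0 := cont_of S.dφ
  have c3 := cont_of S.dw
  have h0 := S.wphi
  have h1 : ∫ y in (-L)..L, (V y * w y + 2 * φ y) * w y ≤ ∫ y in (-L)..L, (v * w y ^ 2 + 2 * (w y * φ y)) := by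
    apply int_mono S.LL _ _ (by fun_prop) (by fun_prop)
    intro y hy
    linarith [mul_le_mul_of_nonneg_right (hV y hy) (sq_nonneg (w y))]
  rw [int_add _ _ (by fun_prop) (by fun_prop), int_cmul, int_cmul, h0] at h1
  have := (abs_le.1 test).1
  linarith
end Base

lemma int_smul_sq (c a b : ℝ) (f : ℝ → ℝ) : ∫ y in a..b, (c * f y) ^ 2 = c ^ 2 * ∫ y in a..b, f y ^ 2 := by
  rw [← int_cmul]; congr 1; ext y; ring

def Tst (L K N : ℝ) (φ w : ℝ → ℝ) : Prop :=
  ∀ g g1 : ℝ → ℝ, (∀ y, HasDerivAt g (g1 y) y) → Continuous g1 → g L = 0 → g (-L) = 0 →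
    |∫ y in (-L)..L, ((1 - y ^ 2) * w y + 2 * φ y) * g y| ≤
      N * √((∫ y in (-L)..L, g1 y ^ 2) + K ^ 2 * ∫ y in (-L)..L, g y ^ 2)

noncomputable def om : ℝ := (1/10^220)^3

lemma core1 {L K N M : ℝ} {φ φ1 φ2 w w1 : ℝ → ℝ} (S : Base L K φ φ1 φ2 w w1) (hKL : 1 ≤ K * L) (hN : 0 ≤ N) (hM : 0 ≤ M)
    (T : Tst L K N φ w) (E : (∫ y in (-L)..L, φ1 y ^ 2) + K ^ 2 * (∫ y in (-L)..L, φ y ^ 2) = 1)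
    (hMM : (∫ y in (-L)..L, w1 y ^ 2) + K ^ 2 * (∫ y in (-L)..L, w y ^ 2) ≤ M ^ 2) : om ^ 4 ≤ N * M := by
  by_contra hlt
  push Not at hlt
  have ho : 0 < om := by unfold om; norm_num
  have ho1 : om ≤ 1/1000 := by unfold om; norm_num
  have ho4 : om ^ 4 < 1 := pow_lt_one₀ ho.le (by linarith) (by norm_num)
  have c3 := cont_of S.dw
  have t1 := T w w1 S.dw S.cw1 S.bw S.bw'
  have t2 : √((∫ y in (-L)..L, w1 y ^ 2) + K ^ 2 * ∫ y in (-L)..L, w y ^ 2) ≤ M := Real.sqrt_le_iff.2 ⟨hM, hMM⟩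
  have t3 := S.testw (v := 1) (V := fun y => 1 - y ^ 2) (by fun_prop) (fun y _ => by linarith [sq_nonneg y]) (t1.trans (mul_le_mul_of_nonneg_left t2 hN))
  have t4 := S.wsq
  rw [E] at t3 t4
  have t5 : ∫ y in (-L)..L, w y ^ 2 ≤ M := by
    apply le_of_sq_le_sq _ hM
    linarith
  have hM1 : 1 < M := by linarith
  have hM0 : 0 < M := by linarith
  obtain ⟨t, ht, ht3⟩ : ∃ t : ℝ, 0 < t ∧ t ^ 3 = om ^ 2 / M := by
    refine ⟨(om ^ 2 / M) ^ ((3:ℕ):ℝ)⁻¹, by positivity, ?_⟩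
    rw [Real.rpow_inv_natCast_pow (by positivity) (by norm_num)]
  refine Sit.contra (L := L) (K := K) (N := N) (M := M) (t := t) (ω := om) (φ := φ) (φ1 := φ1) (φ2 := φ2) (w := w) (w1 := w1)
    { hL := S.hL, hK := S.hK, hKL := hKL, hN := hN, hM0 := hM, ht := ht, hω := ho, hω1 := ho1, hM := ?_, hNt := ?_, hts := ?_,
      dφ := S.dφ, dφ1 := S.dφ1, dw := S.dw, cφ2 := S.cφ2, cw1 := S.cw1, eq := S.eq, bφ := S.bφ, bφ' := S.bφ', bw := S.bw, bw' := S.bw', test := T, E := E, hMM := hMM } le_rfl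
  · rw [ht3]; field_simp
  · rw [ht3, ← mul_div_assoc, le_div_iff₀ hM0]; linarith
  · have a1 : t ^ 3 ≤ om ^ 2 := by rw [ht3, div_le_iff₀ hM0]; nlinarith [sq_nonneg om]
    have a2 : (t ^ 2) ^ 3 ≤ om ^ 3 := by
      calc (t ^ 2) ^ 3 = (t ^ 3) ^ 2 := by ring
        _ ≤ (om ^ 2) ^ 2 := by gcongr
        _ = om ^ 3 * om := by ring
        _ ≤ om ^ 3 * 1 := by gcongr; linarith
        _ = om ^ 3 := by ring
    exact le_of_pow_le_pow_left₀ (by norm_num) ho.le a2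

lemma core {L K N M : ℝ} {φ φ1 φ2 w w1 : ℝ → ℝ} (S : Base L K φ φ1 φ2 w w1) (hKL : 1 ≤ K * L) (hN : 0 ≤ N) (hM : 0 ≤ M)
    (T : Tst L K N φ w)
    (hMM : (∫ y in (-L)..L, w1 y ^ 2) + K ^ 2 * (∫ y in (-L)..L, w y ^ 2) ≤ M ^ 2) :
    om ^ 4 * ((∫ y in (-L)..L, φ1 y ^ 2) + K ^ 2 * (∫ y in (-L)..L, φ y ^ 2)) ≤ N * M := by
  set E := (∫ y in (-L)..L, φ1 y ^ 2) + K ^ 2 * (∫ y in (-L)..L, φ y ^ 2) with hE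
  have hE0 : 0 ≤ E := add_nonneg (int_nonneg S.LL _ fun y _ => sq_nonneg _) (mul_nonneg (sq_nonneg _) (int_nonneg S.LL _ fun y _ => sq_nonneg _))
  rcases hE0.eq_or_lt with h | h
  · rw [← h]; simp; positivity
  set c := (√E)⁻¹ with hc
  have hc0 : 0 < c := by positivity
  have hcE : c ^ 2 * E = 1 := by rw [hc, inv_pow, Real.sq_sqrt hE0]; field_simp
  have := core1 (S.scale c) hKL (N := c * N) (M := c * M) (by positivity) (by positivity) ?_ ?_ ?_
  · calc om ^ 4 * E ≤ (c * N * (c * M)) * E := by gcongr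
      _ = N * M * (c ^ 2 * E) := by ring
      _ = _ := by rw [hcE, mul_one]
  · intro g g1 a b d e
    have t := T g g1 a b d e
    have : ∫ y in (-L)..L, ((1 - y ^ 2) * (c * w y) + 2 * (c * φ y)) * g y = c * ∫ y in (-L)..L, ((1 - y ^ 2) * w y + 2 * φ y) * g y := by
      rw [← int_cmul]; congr 1; ext y; ring
    rw [this, abs_mul, abs_of_pos hc0, mul_assoc]
    gcongr
  · rw [int_smul_sq, int_smul_sq, ← hcE, hE]; ring
  · rw [int_smul_sq, int_smul_sq]
    calc _ = c ^ 2 * ((∫ y in (-L)..L, w1 y ^ 2) + K ^ 2 * (∫ y in (-L)..L, w y ^ 2)) := by ring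
      _ ≤ c ^ 2 * M ^ 2 := by gcongr
      _ = _ := by ring
end OSaux
namespace OSaux

lemma int_resc {a : ℝ} (ha : 0 < a) (f : ℝ → ℝ) : ∫ y in (-a⁻¹)..a⁻¹, f (a * y) = a⁻¹ * ∫ y in (-1:ℝ)..1, f y := by
  rw [intervalIntegral.integral_comp_mul_left _ ha.ne']
  simp [ha.ne']

lemma int_resc' {a : ℝ} (ha : 0 < a) (f : ℝ → ℝ) : ∫ y in (-1:ℝ)..1, f (a⁻¹ * y) = a * ∫ y in (-a⁻¹)..a⁻¹, f y := by
  rw [intervalIntegral.integral_comp_mul_left _ (inv_pos.2 ha).ne']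
  simp

lemma core_real {κ lam N M : ℝ} {φ φ1 φ2 w w1 : ℝ → ℝ} (S : Base 1 κ φ φ1 φ2 w w1) (hκ : 1 ≤ κ) (hN : 0 ≤ N) (hM : 0 ≤ M)
    (T : ∀ g g1 : ℝ → ℝ, (∀ y, HasDerivAt g (g1 y) y) → Continuous g1 → g 1 = 0 → g (-1) = 0 →
    |∫ y in (-1:ℝ)..1, ((1 - y ^ 2 - lam) * w y + 2 * φ y) * g y| ≤
      N * √((∫ y in (-1:ℝ)..1, g1 y ^ 2) + κ ^ 2 * ∫ y in (-1:ℝ)..1, g y ^ 2))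
    (hMM : (∫ y in (-1:ℝ)..1, w1 y ^ 2) + κ ^ 2 * (∫ y in (-1:ℝ)..1, w y ^ 2) ≤ M ^ 2) :
    om ^ 4 * ((∫ y in (-1:ℝ)..1, φ1 y ^ 2) + κ ^ 2 * (∫ y in (-1:ℝ)..1, φ y ^ 2)) ≤ N * M := by
  have ho : 0 < om := by unfold om; norm_num
  have ho1 : om ≤ 1/1000 := by unfold om; norm_num
  have ho4 : om ^ 4 < 1 := pow_lt_one₀ ho.le (by linarith) (by norm_num)
  rcases le_or_gt 1 lam with hl | hl
  · have t1 := T w w1 S.dw S.cw1 S.bw S.bw'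
    have t2 : √((∫ y in (-1:ℝ)..1, w1 y ^ 2) + κ ^ 2 * ∫ y in (-1:ℝ)..1, w y ^ 2) ≤ M := Real.sqrt_le_iff.2 ⟨hM, hMM⟩
    have t3 := S.testw (v := 0) (V := fun y => 1 - y ^ 2 - lam) (by fun_prop) (fun y _ => by linarith [sq_nonneg y]) (t1.trans (mul_le_mul_of_nonneg_left t2 hN))
    have hE0 : 0 ≤ (∫ y in (-1:ℝ)..1, φ1 y ^ 2) + κ ^ 2 * (∫ y in (-1:ℝ)..1, φ y ^ 2) := add_nonneg (int_nonneg S.LL _ fun y _ => sq_nonneg _) (mul_nonneg (sq_nonneg _) (int_nonneg S.LL _ fun y _ => sq_nonneg _))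
    nlinarith
  obtain ⟨a, ha, ha2⟩ : ∃ a : ℝ, 0 < a ∧ a ^ 2 = 1 - lam :=
    ⟨√(1 - lam), Real.sqrt_pos.2 (by linarith), Real.sq_sqrt (by linarith)⟩
  have hlin : ∀ y : ℝ, HasDerivAt (fun y => a * y) a y := fun y => by
    simpa using (hasDerivAt_id y).const_mul a
  have hlin' : ∀ y : ℝ, HasDerivAt (fun y => a⁻¹ * y) a⁻¹ y := fun y => by
    simpa using (hasDerivAt_id y).const_mul a⁻¹
  have hc : Continuous (fun y : ℝ => a * y) := by fun_prop
  have hmem : ∀ y ∈ Set.Icc (-a⁻¹) a⁻¹, a * y ∈ Set.Icc (-1:ℝ) 1 := fun y hy => by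
    have h1 := mul_le_mul_of_nonneg_left hy.1 ha.le
    have h2 := mul_le_mul_of_nonneg_left hy.2 ha.le
    have h3 : a * a⁻¹ = 1 := mul_inv_cancel₀ ha.ne'
    constructor <;> linarith
  have hS : Base a⁻¹ (κ * a) (fun y => φ (a * y)) (fun y => a * φ1 (a * y)) (fun y => a ^ 2 * φ2 (a * y))
      (fun y => a ^ 2 * w (a * y)) (fun y => a ^ 3 * w1 (a * y)) :=
    { hL := by positivity
      hK := by positivity
      dφ := fun y => ((S.dφ (a * y)).comp y (hlin y)).congr_deriv (by ring)
      dφ1 := fun y => (((S.dφ1 (a * y)).comp y (hlin y)).const_mul a).congr_deriv (by ring)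
      dw := fun y => (((S.dw (a * y)).comp y (hlin y)).const_mul (a ^ 2)).congr_deriv (by ring)
      cφ2 := continuous_const.mul (S.cφ2.comp hc)
      cw1 := continuous_const.mul (S.cw1.comp hc)
      eq := fun y hy => by simp only [S.eq _ (hmem y hy)]; ring
      bφ := by simp [ha.ne', S.bφ]
      bφ' := by simp [ha.ne', S.bφ']
      bw := by simp [ha.ne', S.bw]
      bw' := by simp [ha.ne', S.bw'] }
  have hra : 0 < √a := by positivity
  have hra2 : √a ^ 2 = a := Real.sq_sqrt ha.le
  have r : ∀ f : ℝ → ℝ, ∫ y in (-a⁻¹)..a⁻¹, f (a * y) ^ 2 = a⁻¹ * ∫ y in (-1:ℝ)..1, f y ^ 2 := fun f => int_resc ha (fun y => f y ^ 2)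
  have r' : ∀ f : ℝ → ℝ, ∫ y in (-1:ℝ)..1, f (a⁻¹ * y) ^ 2 = a * ∫ y in (-a⁻¹)..a⁻¹, f y ^ 2 := fun f => int_resc' ha (fun y => f y ^ 2)
  have key := core hS (N := a⁻¹ * (√a)⁻¹ * N) (M := a ^ 2 * √a * M) ?_ (by positivity) (by positivity) ?_ ?_
  · rw [int_smul_sq, r, r] at key
    have e1 : om ^ 4 * (a ^ 2 * (a⁻¹ * ∫ y in (-1:ℝ)..1, φ1 y ^ 2) + (κ * a) ^ 2 * (a⁻¹ * ∫ y in (-1:ℝ)..1, φ y ^ 2)) =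
      a * (om ^ 4 * ((∫ y in (-1:ℝ)..1, φ1 y ^ 2) + κ ^ 2 * (∫ y in (-1:ℝ)..1, φ y ^ 2))) := by field_simp
    have e2 : a⁻¹ * (√a)⁻¹ * N * (a ^ 2 * √a * M) = a * (N * M) := by field_simp
    rw [e1, e2] at key
    exact le_of_mul_le_mul_left key ha
  · rw [mul_assoc, mul_inv_cancel₀ ha.ne']; linarith
  · intro g g1 dg cg1 b1 b2
    have t := T (fun y => g (a⁻¹ * y)) (fun y => a⁻¹ * g1 (a⁻¹ * y))
      (fun y => ((dg (a⁻¹ * y)).comp y (hlin' y)).congr_deriv (by ring)) (by fun_prop) (by simpa using b1) (by simpa using b2)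
    rw [int_smul_sq, r', r'] at t
    have e3 : ∫ y in (-a⁻¹)..a⁻¹, ((1 - y ^ 2) * (a ^ 2 * w (a * y)) + 2 * φ (a * y)) * g y =
        a⁻¹ * ∫ y in (-1:ℝ)..1, ((1 - y ^ 2 - lam) * w y + 2 * φ y) * g (a⁻¹ * y) := by
      rw [← int_resc ha]
      congr 1; ext y
      have : a⁻¹ * (a * y) = y := by field_simp
      rw [this]
      have : 1 - (a * y) ^ 2 - lam = (1 - y ^ 2) * a ^ 2 := by linear_combination -ha2
      rw [this]; ring
    rw [e3, abs_mul, abs_of_pos (inv_pos.2 ha)]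
    have e4 : a⁻¹ ^ 2 * (a * ∫ y in (-a⁻¹)..a⁻¹, g1 y ^ 2) + κ ^ 2 * (a * ∫ y in (-a⁻¹)..a⁻¹, g y ^ 2) =
       (a⁻¹) * ((∫ y in (-a⁻¹)..a⁻¹, g1 y ^ 2) + (κ * a) ^ 2 * ∫ y in (-a⁻¹)..a⁻¹, g y ^ 2) := by field_simp
    rw [e4, Real.sqrt_mul (by positivity), Real.sqrt_inv] at t
    exact (mul_le_mul_of_nonneg_left t (inv_pos.2 ha).le).trans (le_of_eq (by ring))
  · rw [int_smul_sq, int_smul_sq, r, r]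
    calc _ = a ^ 5 * ((∫ y in (-1:ℝ)..1, w1 y ^ 2) + κ ^ 2 * (∫ y in (-1:ℝ)..1, w y ^ 2)) := by field_simp
      _ ≤ a ^ 5 * M ^ 2 := by gcongr
      _ = _ := by rw [mul_pow, mul_pow, hra2]; ring
end OSaux
namespace OSaux

noncomputable def nrm (κ : ℝ) (u u1 : ℝ → ℝ) : ℝ := (∫ y in (-1:ℝ)..1, u1 y ^ 2) + κ ^ 2 * ∫ y in (-1:ℝ)..1, u y ^ 2

lemma nrm_nonneg (κ : ℝ) (u u1 : ℝ → ℝ) : 0 ≤ nrm κ u u1 :=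
  add_nonneg (int_nonneg (by norm_num) _ fun y _ => sq_nonneg _) (mul_nonneg (sq_nonneg _) (int_nonneg (by norm_num) _ fun y _ => sq_nonneg _))

lemma dualbd {κ : ℝ} {u u1 u2 g g1 : ℝ → ℝ} (du : ∀ y, HasDerivAt u (u1 y) y) (du1 : ∀ y, HasDerivAt u1 (u2 y) y)
    (c2 : Continuous u2) (dg : ∀ y, HasDerivAt g (g1 y) y) (cg1 : Continuous g1) (b1 : g 1 = 0) (b2 : g (-1) = 0) :
    |∫ y in (-1:ℝ)..1, (u2 y - κ ^ 2 * u y) * g y| ≤ √(nrm κ u u1) * √(nrm κ g g1) := by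
  have c0 := cont_of du
  have c1 := cont_of du1
  have cg := cont_of dg
  have h := int_deriv (a := -1) (b := 1) (by norm_num) (fun y => u1 y * g y) (fun y => u2 y * g y + u1 y * g1 y) (fun y _ => (du1 y).mul (dg y)) (by fun_prop)
  rw [b1, b2, int_add _ _ (by fun_prop) (by fun_prop)] at h
  have h2 : ∫ y in (-1:ℝ)..1, (u2 y - κ ^ 2 * u y) * g y = ∫ y in (-1:ℝ)..1, (u2 y * g y - κ ^ 2 * (u y * g y)) :=
    int_congr (by norm_num) _ _ fun y hy => by ring
  rw [int_sub _ _ (by fun_prop) (by fun_prop), int_cmul] at h2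
  have LL : (-1:ℝ) ≤ 1 := by norm_num
  have h3 := quad_cs (int_nonneg LL _ fun y _ => sq_nonneg (u1 y)) (int_nonneg LL _ fun y _ => sq_nonneg (u y))
    (int_nonneg LL _ fun y _ => sq_nonneg (g1 y)) (int_nonneg LL _ fun y _ => sq_nonneg (g y)) (sq_nonneg κ)
    (int_cs LL u1 g1 c1 cg1) (int_cs LL u g c0 cg)
  rw [← Real.sqrt_mul (nrm_nonneg _ _ _)]
  apply Real.abs_le_sqrt
  refine le_trans (le_of_eq ?_) h3
  rw [← neg_sq]; congr 1; linarith

lemma dualself {κ : ℝ} {u u1 u2 : ℝ → ℝ} (du : ∀ y, HasDerivAt u (u1 y) y) (du1 : ∀ y, HasDerivAt u1 (u2 y) y)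
    (c2 : Continuous u2) (b1 : u 1 = 0) (b2 : u (-1) = 0) :
    ∫ y in (-1:ℝ)..1, (u2 y - κ ^ 2 * u y) * u y = - nrm κ u u1 := by
  have c0 := cont_of du
  have c1 := cont_of du1
  have h := int_deriv (a := -1) (b := 1) (by norm_num) (fun y => u1 y * u y) (fun y => u2 y * u y + u1 y ^ 2) (fun y _ => ((du1 y).mul (du y)).congr_deriv (by ring)) (by fun_prop)
  rw [b1, b2, int_add _ _ (by fun_prop) (by fun_prop)] at h
  have h2 : ∫ y in (-1:ℝ)..1, (u2 y - κ ^ 2 * u y) * u y = ∫ y in (-1:ℝ)..1, (u2 y * u y - κ ^ 2 * (u y ^ 2)) :=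
    int_congr (by norm_num) _ _ fun y hy => by ring
  rw [int_sub _ _ (by fun_prop) (by fun_prop), int_cmul] at h2
  unfold nrm
  linarith

/-- one component: bound for real test functions -/
lemma testcomp {κ ν k e f M E : ℝ} {φ w w1 w2 φi1 φi2 : ℝ → ℝ} {F G : ℝ → ℝ} (hν : 0 ≤ ν) (he : 0 ≤ e) (hk : k ≠ 0)
    (cG : Continuous G)
    (dw : ∀ y, HasDerivAt w (w1 y) y) (dw1 : ∀ y, HasDerivAt w1 (w2 y) y) (cw2 : Continuous w2)
    (S : Base 1 κ φ φi1 φi2 w w1) 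
    (hM : √(nrm κ w w1) ≤ M) (hE : √(nrm κ φ φi1) ≤ E)
    (hF : ∀ y, F y = -ν * (w2 y - κ ^ 2 * w y) + k * G y - e * w y)
    (hf : ∀ g g1 : ℝ → ℝ, (∀ y, HasDerivAt g (g1 y) y) → Continuous g1 → g 1 = 0 → g (-1) = 0 →
      |∫ y in (-1:ℝ)..1, F y * g y| ≤ f * √(nrm κ g g1))
    (g g1 : ℝ → ℝ) (dg : ∀ y, HasDerivAt g (g1 y) y) (cg1 : Continuous g1) (b1 : g 1 = 0) (b2 : g (-1) = 0) :
    |∫ y in (-1:ℝ)..1, G y * g y| ≤ ((f + ν * M + e * E) / |k|) * √(nrm κ g g1) := by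
  have cg := cont_of dg
  have cw := cont_of dw
  have h1 := hf g g1 dg cg1 b1 b2
  have h2 := dualbd (κ := κ) dw dw1 cw2 dg cg1 b1 b2
  have h3 := dualbd (κ := κ) S.dφ S.dφ1 S.cφ2 dg cg1 b1 b2
  have h4 : ∫ y in (-1:ℝ)..1, (φi2 y - κ ^ 2 * φ y) * g y = ∫ y in (-1:ℝ)..1, w y * g y :=
    int_congr (by norm_num) _ _ fun y hy => by rw [S.eq y hy]; ring
  rw [h4] at h3
  have cP : Continuous (fun y => (w2 y - κ ^ 2 * w y) * g y) := by fun_prop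
  have h5 : ∫ y in (-1:ℝ)..1, F y * g y = ∫ y in (-1:ℝ)..1, ((-ν) * ((w2 y - κ ^ 2 * w y) * g y) + k * (G y * g y) - e * (w y * g y)) :=
    int_congr (by norm_num) _ _ fun y hy => by rw [hF]; ring
  rw [int_sub _ _ (by fun_prop) (by fun_prop), int_add _ _ (by fun_prop) (by fun_prop), int_cmul, int_cmul, int_cmul] at h5
  have hk' : 0 < |k| := abs_pos.2 hk
  have g0 := Real.sqrt_nonneg (nrm κ g g1)
  rw [div_mul_eq_mul_div, le_div_iff₀ hk', mul_comm, ← abs_mul]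
  have h6 := h2.trans (mul_le_mul_of_nonneg_right hM g0)
  have h7 := h3.trans (mul_le_mul_of_nonneg_right hE g0)
  rw [abs_le] at h1 h6 h7 ⊢
  constructor
  · linarith [mul_le_mul_of_nonneg_left h6.1 hν, mul_le_mul_of_nonneg_left h7.1 he, mul_le_mul_of_nonneg_left h6.2 hν, mul_le_mul_of_nonneg_left h7.2 he]
  · linarith [mul_le_mul_of_nonneg_left h6.1 hν, mul_le_mul_of_nonneg_left h7.1 he, mul_le_mul_of_nonneg_left h6.2 hν, mul_le_mul_of_nonneg_left h7.2 he]

lemma cs_num {a b A B C D : ℝ} (hA : 0 ≤ A) (hB : 0 ≤ B) (hC : 0 ≤ C) (hD : 0 ≤ D)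
    (h1 : a ^ 2 ≤ A * C) (h2 : b ^ 2 ≤ B * D) : a + b ≤ √(A + B) * √(C + D) := by
  rw [← Real.sqrt_mul (by positivity)]
  apply Real.le_sqrt_of_sq_le
  have := quad_cs hA hB hC hD zero_le_one h1 h2
  simpa using this

lemma red {κ ν k ε q f lam : ℝ} {φr φr1 φr2 wr wr1 wr2 φi φi1 φi2 wi wi1 wi2 Fr Fi : ℝ → ℝ}
    (hκ : 1 ≤ κ) (hν : 0 < ν) (hk : k ≠ 0) (hε : 0 ≤ ε) (hε1 : ε ≤ om ^ 2 / 4) (hq : 0 ≤ q) (hq2 : q ^ 2 = ν * |k|) (hf0 : 0 ≤ f)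
    (Sr : Base 1 κ φr φr1 φr2 wr wr1) (Si : Base 1 κ φi φi1 φi2 wi wi1)
    (dwr1 : ∀ y, HasDerivAt wr1 (wr2 y) y) (dwi1 : ∀ y, HasDerivAt wi1 (wi2 y) y)
    (cwr2 : Continuous wr2) (cwi2 : Continuous wi2)
    (hFr : ∀ y, Fr y = -ν * (wr2 y - κ ^ 2 * wr y) + (-k) * ((1 - y ^ 2 - lam) * wi y + 2 * φi y) - (ε * q) * wr y)
    (hFi : ∀ y, Fi y = -ν * (wi2 y - κ ^ 2 * wi y) + k * ((1 - y ^ 2 - lam) * wr y + 2 * φr y) - (ε * q) * wi y)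
    (hf : ∀ g g1 h h1 : ℝ → ℝ, (∀ y, HasDerivAt g (g1 y) y) → Continuous g1 → g 1 = 0 → g (-1) = 0 →
       (∀ y, HasDerivAt h (h1 y) y) → Continuous h1 → h 1 = 0 → h (-1) = 0 →
      |∫ y in (-1:ℝ)..1, (Fr y * g y + Fi y * h y)| ≤ f * √(nrm κ g g1 + nrm κ h h1)) :
    q * √(nrm κ φr φr1 + nrm κ φi φi1) ≤ (4 / om ^ 2) * f := by
  have ho : 0 < om := by unfold om; norm_num
  have hLL : (-1:ℝ) ≤ 1 := by norm_num
  have a0 := cont_of Sr.dφ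
  have a1 := cont_of Sr.dφ1
  have a2 := Sr.cφ2
  have a3 := cont_of Sr.dw
  have a4 := Sr.cw1
  have b0 := cont_of Si.dφ
  have b1 := cont_of Si.dφ1
  have b2 := Si.cφ2
  have b3 := cont_of Si.dw
  have b4 := Si.cw1
  have n1 := nrm_nonneg κ φr φr1
  have n2 := nrm_nonneg κ φi φi1
  have n3 := nrm_nonneg κ wr wr1
  have n4 := nrm_nonneg κ wi wi1
  set E := √(nrm κ φr φr1 + nrm κ φi φi1) with hE
  set M := √(nrm κ wr wr1 + nrm κ wi wi1) with hM
  have hE0 : 0 ≤ E := Real.sqrt_nonneg _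
  have hM0 : 0 ≤ M := Real.sqrt_nonneg _
  have hE2 : E ^ 2 = nrm κ φr φr1 + nrm κ φi φi1 := Real.sq_sqrt (by positivity)
  have hM2 : M ^ 2 = nrm κ wr wr1 + nrm κ wi wi1 := Real.sq_sqrt (by positivity)
  have hk' : 0 < |k| := abs_pos.2 hk
  -- energy
  have en : ν * M ≤ f + ε * q * E := by
    have w2 : (∫ y in (-1:ℝ)..1, wr y ^ 2) + (∫ y in (-1:ℝ)..1, wi y ^ 2) ≤ E * M :=
      cs_num n1 n2 n3 n4 Sr.wsq Si.wsq
    have t := hf wr wr1 wi wi1 Sr.dw Sr.cw1 Sr.bw Sr.bw' Si.dw Si.cw1 Si.bw Si.bw'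
    rw [← hM] at t
    have d1 := dualself (κ := κ) Sr.dw dwr1 cwr2 Sr.bw Sr.bw'
    have d2 := dualself (κ := κ) Si.dw dwi1 cwi2 Si.bw Si.bw'
    have cr := int_deriv (a := -1) (b := 1) (by norm_num) (fun y => φr y * φi1 y - φi y * φr1 y) (fun y => φr y * φi2 y - φi y * φr2 y)
      (fun y _ => (((Sr.dφ y).mul (Si.dφ1 y)).sub ((Si.dφ y).mul (Sr.dφ1 y))).congr_deriv (by ring)) (by fun_prop)
    simp only [Sr.bφ, Sr.bφ', Si.bφ, Si.bφ', zero_mul, sub_zero] at cr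
    have ex : ∫ y in (-1:ℝ)..1, (Fr y * wr y + Fi y * wi y) =
        ∫ y in (-1:ℝ)..1, ((-ν) * ((wr2 y - κ ^ 2 * wr y) * wr y) + (-ν) * ((wi2 y - κ ^ 2 * wi y) * wi y)
          + (2 * k) * (φr y * φi2 y - φi y * φr2 y) - ((ε * q) * (wr y ^ 2) + (ε * q) * (wi y ^ 2))) := by
      apply int_congr hLL
      intro y hy
      rw [hFr, hFi, Sr.eq y hy, Si.eq y hy]; ring
    rw [ex, int_sub _ _ (by fun_prop) (by fun_prop), int_add _ _ (by fun_prop) (by fun_prop), int_add _ _ (by fun_prop) (by fun_prop),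
      int_add _ _ (by fun_prop) (by fun_prop), int_cmul, int_cmul, int_cmul, int_cmul, int_cmul, d1, d2, cr] at t
    have t' := (abs_le.1 t).2
    have heq : 0 ≤ ε * q := by positivity
    have : ν * M ^ 2 ≤ (f + ε * q * E) * M := by
      rw [hM2]
      linarith [mul_le_mul_of_nonneg_left w2 heq]
    rcases hM0.eq_or_lt with h | h
    · rw [← h]; simp; positivity
    · exact le_of_mul_le_mul_right (by linarith) h
  set N := (f + ν * M + (ε * q) * E) / |k| with hN
  have hN0 : 0 ≤ N := by positivity
  have Tr := core_real (lam := lam) (N := N) (M := M) Sr hκ hN0 hM0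
    (testcomp hν.le (by positivity) hk (by fun_prop) Si.dw dwi1 cwi2 Si (Real.sqrt_le_sqrt (by linarith)) (Real.sqrt_le_sqrt (by linarith)) hFi
      (fun g g1 dg cg b b' => by
        have := hf (fun _ => 0) (fun _ => 0) g g1 (fun y => hasDerivAt_const y 0) continuous_const rfl rfl dg cg b b'
        simpa [nrm] using this)) (by
          rw [hM2]; have := n4; unfold nrm at *; linarith)
  have Ti := core_real (lam := lam) (N := N) (M := M) Si hκ hN0 hM0
    (by
      rw [hN, ← abs_neg k]
      exact (testcomp hν.le (by positivity) (neg_ne_zero.2 hk) (by fun_prop) Sr.dw dwr1 cwr2 Sr (Real.sqrt_le_sqrt (by linarith)) (Real.sqrt_le_sqrt (by linarith)) hFr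
      (fun g g1 dg cg b b' => by
        have := hf g g1 (fun _ => 0) (fun _ => 0) dg cg b b' (fun y => hasDerivAt_const y 0) continuous_const rfl rfl
        simpa [nrm] using this))) (by
          rw [hM2]; have := n3; unfold nrm at *; linarith)
  have TT : om ^ 4 * E ^ 2 ≤ 2 * (N * M) := by
    rw [hE2]; unfold nrm at *; linarith
  set Q := f + ε * q * E with hQ
  have hQ0 : 0 ≤ Q := by positivity
  have hNk : N * |k| ≤ 2 * Q := by rw [hN, div_mul_cancel₀ _ hk'.ne']; linarith
  have fin : (om ^ 2 * (q * E)) ^ 2 ≤ (2 * Q) ^ 2 := by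
    calc (om ^ 2 * (q * E)) ^ 2 = (ν * |k|) * (om ^ 4 * E ^ 2) := by rw [← hq2]; ring
      _ ≤ (ν * |k|) * (2 * (N * M)) := by gcongr
      _ = 2 * ((N * |k|) * (ν * M)) := by ring
      _ ≤ 2 * ((2 * Q) * Q) := by gcongr
      _ = _ := by ring
  have fin2 := le_of_sq_le_sq fin (by positivity)
  have hqE : 0 ≤ q * E := by positivity
  have := mul_le_mul_of_nonneg_right hε1 hqE
  rw [div_mul_eq_mul_div, le_div_iff₀ (by positivity)]
  linarith
end OSaux
namespace OSaux

lemma re_deriv {f : ℝ → ℂ} {f' : ℂ} {y : ℝ} (h : HasDerivAt f f' y) : HasDerivAt (fun y => (f y).re) f'.re y :=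
  (Complex.reCLM.hasFDerivAt.comp_hasDerivAt y h)

lemma im_deriv {f : ℝ → ℂ} {f' : ℂ} {y : ℝ} (h : HasDerivAt f f' y) : HasDerivAt (fun y => (f y).im) f'.im y :=
  (Complex.imCLM.hasFDerivAt.comp_hasDerivAt y h)

lemma nsq (z : ℂ) : ‖z‖ ^ 2 = z.re ^ 2 + z.im ^ 2 := by
  rw [← Complex.normSq_eq_norm_sq, Complex.normSq_apply]; ring

lemma hk_eq (k₁ k₃ : ℤ) (f : ℝ → ℂ) (cf : Continuous f) (cf1 : Continuous (deriv f)) :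
    hk k₁ k₃ f = √(nrm (kabs k₁ k₃) (fun y => (f y).re) (fun y => (deriv f y).re) +
      nrm (kabs k₁ k₃) (fun y => (f y).im) (fun y => (deriv f y).im)) := by
  unfold hk nrm
  congr 1
  have c1 : Continuous fun y => (f y).re := Complex.continuous_re.comp cf
  have c2 : Continuous fun y => (f y).im := Complex.continuous_im.comp cf
  have c3 : Continuous fun y => (deriv f y).re := Complex.continuous_re.comp cf1
  have c4 : Continuous fun y => (deriv f y).im := Complex.continuous_im.comp cf1
  simp only [nsq]
  rw [int_add _ _ (by fun_prop) (by fun_prop), int_add _ _ (by fun_prop) (by fun_prop)]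
  ring

lemma hm1_bound (k₁ k₃ : ℤ) (hκ : 1 ≤ kabs k₁ k₃) (F Fc : ℝ → ℂ) (cF : Continuous Fc) (hF : ∀ y ∈ Set.Icc (-1:ℝ) 1, F y = Fc y)
    (g : ℝ → ℂ) (hg : ContDiff ℝ 1 g) (b1 : g (-1) = 0) (b2 : g 1 = 0) :
    ‖∫ y in (-1:ℝ)..1, F y * (starRingEnd ℂ) (g y)‖ ≤ hm1 k₁ k₃ F * hk k₁ k₃ g := by
  have hLL : (-1:ℝ) ≤ 1 := by norm_num
  have bdd : BddAbove { r : ℝ | ∃ g : ℝ → ℂ, ContDiff ℝ 1 g ∧ g (-1) = 0 ∧ g 1 = 0 ∧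
      hk k₁ k₃ g ≤ 1 ∧ r = ‖∫ y in (-1:ℝ)..1, F y * (starRingEnd ℂ) (g y)‖ } := by
    refine ⟨(∫ y in (-1:ℝ)..1, ‖Fc y‖ ^ 2) + 1, ?_⟩
    rintro r ⟨g, hg, b1, b2, h, rfl⟩
    have cg := hg.continuous
    have cg1 : Continuous (deriv g) := hg.continuous_deriv le_rfl
    have i1 : ‖∫ y in (-1:ℝ)..1, F y * (starRingEnd ℂ) (g y)‖ ≤ ∫ y in (-1:ℝ)..1, ‖F y * (starRingEnd ℂ) (g y)‖ :=
      intervalIntegral.norm_integral_le_integral_norm hLL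
    have i2 : ∫ y in (-1:ℝ)..1, ‖F y * (starRingEnd ℂ) (g y)‖ = ∫ y in (-1:ℝ)..1, ‖Fc y‖ * ‖g y‖ :=
      int_congr hLL _ _ fun y hy => by rw [hF y hy, norm_mul, RCLike.norm_conj]
    have i3 : ∫ y in (-1:ℝ)..1, ‖Fc y‖ * ‖g y‖ ≤ ∫ y in (-1:ℝ)..1, (‖Fc y‖ ^ 2 + ‖g y‖ ^ 2) :=
      int_mono hLL _ _ (by fun_prop) (by fun_prop) fun y _ => by nlinarith [sq_nonneg (‖Fc y‖ - ‖g y‖), sq_nonneg (‖Fc y‖), sq_nonneg (‖g y‖)]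
    rw [int_add _ _ (by fun_prop) (by fun_prop)] at i3
    unfold hk at h
    rw [Real.sqrt_le_one] at h
    have p1 : 0 ≤ ∫ y in (-1:ℝ)..1, ‖deriv g y‖ ^ 2 := int_nonneg hLL _ fun y _ => by positivity
    have p2 : 0 ≤ ∫ y in (-1:ℝ)..1, ‖g y‖ ^ 2 := int_nonneg hLL _ fun y _ => by positivity
    have hκ2 : 1 ≤ kabs k₁ k₃ ^ 2 := by nlinarith
    have : ∫ y in (-1:ℝ)..1, ‖g y‖ ^ 2 ≤ 1 := by nlinarith [mul_le_mul_of_nonneg_right hκ2 p2]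
    linarith
  have f0 : 0 ≤ hm1 k₁ k₃ F := by
    apply Real.sSup_nonneg
    rintro r ⟨g, _, _, _, _, rfl⟩
    positivity
  have h0 : 0 ≤ hk k₁ k₃ g := Real.sqrt_nonneg _
  have key : ∀ δ : ℝ, 0 < δ → ‖∫ y in (-1:ℝ)..1, F y * (starRingEnd ℂ) (g y)‖ ≤ hm1 k₁ k₃ F * (hk k₁ k₃ g + δ) := by
    intro δ hδ
    set c := (hk k₁ k₃ g + δ)⁻¹ with hc
    have hc0 : 0 < c := by positivity
    have dd : deriv (fun y => (c:ℂ) * g y) = fun y => (c:ℂ) * deriv g y := by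
      ext y; exact deriv_const_mul _ (hg.differentiable (by norm_num) y)
    have : ‖∫ y in (-1:ℝ)..1, F y * (starRingEnd ℂ) ((c:ℂ) * g y)‖ ≤ hm1 k₁ k₃ F := by
      apply le_csSup bdd
      refine ⟨fun y => (c:ℂ) * g y, contDiff_const.mul hg, by simp [b1], by simp [b2], ?_, rfl⟩
      have : hk k₁ k₃ (fun y => (c:ℂ) * g y) = c * hk k₁ k₃ g := by
        unfold hk
        rw [dd]
        simp only [norm_mul, mul_pow, Complex.norm_real, Real.norm_eq_abs, sq_abs]
        rw [int_cmul, int_cmul]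
        rw [← Real.sqrt_sq hc0.le, ← Real.sqrt_mul (by positivity), Real.sqrt_sq hc0.le]
        congr 1; ring
      rw [this, hc, inv_mul_le_iff₀ (by positivity)]; linarith
    have e : ∫ y in (-1:ℝ)..1, F y * (starRingEnd ℂ) ((c:ℂ) * g y) = (c:ℂ) * ∫ y in (-1:ℝ)..1, F y * (starRingEnd ℂ) (g y) := by
      rw [← intervalIntegral.integral_const_mul]
      congr 1; ext y; simp; ring
    rw [e, norm_mul, Complex.norm_real, Real.norm_eq_abs, abs_of_pos hc0, hc, inv_mul_le_iff₀ (by positivity)] at this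
    linarith
  apply le_of_forall_pos_le_add
  intro η hη
  refine (key (η / (hm1 k₁ k₃ F + 1)) (by positivity)).trans ?_
  rw [mul_add]
  gcongr
  rw [mul_div_assoc', div_le_iff₀ (by positivity)]
  nlinarith

lemma mkBase {κ : ℝ} (hκ : 0 < κ) {w φ : ℝ → ℂ} (cw : ContDiff ℝ 2 w) (cφ : ContDiff ℝ 2 φ)
    (h : ∀ y ∈ Set.Icc (-1:ℝ) 1, deriv (deriv φ) y - ((κ : ℝ) : ℂ) ^ 2 * φ y = w y)
    (b1 : φ (-1) = 0) (b2 : φ 1 = 0) (b3 : w (-1) = 0) (b4 : w 1 = 0) (c : ℂ →L[ℝ] ℝ) :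
    Base 1 κ (fun y => c (φ y)) (fun y => c (deriv φ y)) (fun y => c (deriv (deriv φ) y)) (fun y => c (w y)) (fun y => c (deriv w y)) := by
  have cφ1 : ContDiff ℝ 1 (deriv φ) := ((contDiff_succ_iff_deriv (n := 1)).1 (by rw [one_add_one_eq_two]; exact cφ)).2.2
  have d : ∀ {f : ℝ → ℂ}, Differentiable ℝ f → ∀ y, HasDerivAt (fun y => c (f y)) (c (deriv f y)) y := fun hf y =>
    c.hasFDerivAt.comp_hasDerivAt y (hf y).hasDerivAt
  exact
  { hL := by norm_num
    hK := hκ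
    dφ := d (cφ.differentiable (by norm_num))
    dφ1 := d (cφ1.differentiable (by norm_num))
    dw := d (cw.differentiable (by norm_num))
    cφ2 := c.continuous.comp (cφ1.continuous_deriv le_rfl)
    cw1 := c.continuous.comp (cw.continuous_deriv (by norm_num))
    eq := fun y hy => by
      have e : deriv (deriv φ) y = w y + (κ ^ 2 : ℝ) • φ y := by
        rw [← h y hy]; simp
      rw [e, map_add, map_smul]; simp
    bφ := by simp [b2]
    bφ' := by simp [b1]
    bw := by simp [b4]
    bw' := by simp [b3] }

lemma kabs_ge {k₁ k₃ : ℤ} (h : 1 ≤ |k₁|) : 1 ≤ kabs k₁ k₃ := by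
  unfold kabs
  apply Real.le_sqrt_of_sq_le
  have : (1:ℝ) ≤ |(k₁:ℝ)| := by exact_mod_cast h
  have h2 := sq_abs (k₁:ℝ)
  nlinarith [sq_nonneg (k₃:ℝ)]

lemma main (ν ε lam : ℝ) (k₁ k₃ : ℤ) (w φ F : ℝ → ℂ) (hν : 0 < ν) (hε : 0 < ε) (hε1 : ε ≤ om ^ 2 / 4) (hk1 : 1 ≤ |k₁|)
    (hO : OSslipE ν k₁ k₃ (lam : ℂ) ε w φ F) :
    hk k₁ k₃ φ ≤ (4 / om ^ 2) * (Real.sqrt (ν * |(k₁ : ℝ)|))⁻¹ * hm1 k₁ k₃ F := by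
  obtain ⟨cw, cφ, hF, hφ, b1, b2, b3, b4⟩ := hO
  have hκ := kabs_ge (k₃ := k₃) hk1
  set κ := kabs k₁ k₃ with hκd
  have bw1 : w (-1) = 0 := by rw [← hφ (-1) (by norm_num), b1, b3]; simp
  have bw2 : w 1 = 0 := by rw [← hφ 1 (by norm_num), b2, b4]; simp
  have cw1 : ContDiff ℝ 1 (deriv w) := ((contDiff_succ_iff_deriv (n := 1)).1 (by rw [one_add_one_eq_two]; exact cw)).2.2
  have cw2 : Continuous (deriv (deriv w)) := cw1.continuous_deriv le_rfl
  have Sr := mkBase (by linarith) cw cφ hφ b1 b2 bw1 bw2 Complex.reCLM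
  have Si := mkBase (by linarith) cw cφ hφ b1 b2 bw1 bw2 Complex.imCLM
  simp only [Complex.reCLM_apply] at Sr
  simp only [Complex.imCLM_apply] at Si
  have hk0 : (k₁:ℝ) ≠ 0 := by
    intro h; have : k₁ = 0 := by exact_mod_cast h
    simp [this] at hk1
  have hkp : 0 < |(k₁:ℝ)| := abs_pos.2 hk0
  set q := √(ν * |(k₁:ℝ)|) with hq
  have hq0 : 0 < q := by positivity
  have hq2 : q ^ 2 = ν * |(k₁:ℝ)| := Real.sq_sqrt (by positivity)
  set Fc : ℝ → ℂ := fun y => -(ν : ℂ) * (deriv (deriv w) y - ((κ : ℝ) : ℂ) ^ 2 * w y) +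
      Complex.I * (k₁ : ℂ) * ((1 - (y : ℂ) ^ 2 - lam) * w y + 2 * φ y) -
      ((ε * q : ℝ) : ℂ) * w y with hFc
  have cF : Continuous Fc := by
    have := cw.continuous
    have := cφ.continuous
    fun_prop
  have hFF : ∀ y ∈ Set.Icc (-1:ℝ) 1, F y = Fc y := fun y hy => (hF y hy).symm
  have hf0 : 0 ≤ hm1 k₁ k₃ F := by
    apply Real.sSup_nonneg
    rintro r ⟨g, _, _, _, _, rfl⟩
    positivity
  have R := red (Fr := fun y => (Fc y).re) (Fi := fun y => (Fc y).im) (lam := lam) (f := hm1 k₁ k₃ F) hκ hν hk0 hε.le hε1 hq0.le hq2 hf0 Sr Si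
    (fun y => re_deriv (cw1.differentiable (by norm_num) y).hasDerivAt)
    (fun y => im_deriv (cw1.differentiable (by norm_num) y).hasDerivAt)
    (Complex.continuous_re.comp cw2) (Complex.continuous_im.comp cw2) ?_ ?_ ?_
  · rw [hk_eq _ _ _ cφ.continuous (cφ.continuous_deriv (by norm_num)), mul_assoc, mul_comm q⁻¹, ← mul_assoc, ← div_eq_mul_inv, le_div_iff₀ hq0, mul_comm]
    exact R
  · intro y
    simp [hFc, pow_two]
    try ring
  · intro y
    simp [hFc, pow_two]
    try ring
  · intro g g1 h h1 dg cg1 a1 a2 dh ch1 a3 a4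
    set G : ℝ → ℂ := fun y => (g y : ℂ) + (h y : ℂ) * Complex.I with hG
    have dG : ∀ y, HasDerivAt G ((g1 y : ℂ) + (h1 y : ℂ) * Complex.I) y := fun y =>
      (dg y).ofReal_comp.add ((dh y).ofReal_comp.mul_const _)
    have dG' : deriv G = fun y => (g1 y : ℂ) + (h1 y : ℂ) * Complex.I := by ext y; exact (dG y).deriv
    have cG : ContDiff ℝ 1 G := by
      rw [contDiff_one_iff_deriv]
      refine ⟨fun y => (dG y).differentiableAt, ?_⟩
      rw [dG']; fun_prop
    have B := hm1_bound k₁ k₃ hκ F Fc cF hFF G cG (by simp [hG, a2, a4]) (by simp [hG, a1, a3])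
    rw [hk_eq _ _ _ cG.continuous (cG.continuous_deriv le_rfl), dG'] at B
    have e : ∫ y in (-1:ℝ)..1, ((Fc y).re * g y + (Fc y).im * h y) = (∫ y in (-1:ℝ)..1, F y * (starRingEnd ℂ) (G y)).re := by
      have e1 : ∫ y in (-1:ℝ)..1, F y * (starRingEnd ℂ) (G y) = ∫ y in (-1:ℝ)..1, Fc y * (starRingEnd ℂ) (G y) := by
        apply intervalIntegral.integral_congr
        intro y hy
        rw [Set.uIcc_of_le (by norm_num)] at hy
        simp only [hFF y hy]
      have cGG := cG.continuous
      have ii : IntervalIntegrable (fun y => Fc y * (starRingEnd ℂ) (G y)) volume (-1) 1 :=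
        (cF.mul (Complex.continuous_conj.comp cGG)).intervalIntegrable _ _
      have := Complex.reCLM.intervalIntegral_comp_comm ii
      rw [e1]
      simp only [Complex.reCLM_apply] at this
      rw [← this]
      congr 1; ext y
      simp [hG]
    rw [e]
    refine (Complex.abs_re_le_norm _).trans (B.trans (le_of_eq ?_))
    simp [hG, hκd]
end OSaux

theorem OS_slip_velocity_Hm1 :
    ∃ ε₀ ν₀ C : ℝ, 0 < ε₀ ∧ ε₀ < 1 ∧ 0 < ν₀ ∧ ν₀ < 1 ∧ 0 < C ∧
      ∀ (ν ε lam : ℝ) (k₁ k₃ : ℤ) (w φ F : ℝ → ℂ),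
        0 < ν → ν ≤ ν₀ → 0 < ε → ε ≤ ε₀ → 1 ≤ |k₁| →
        IntervalIntegrable (fun y => ‖F y‖ ^ 2) MeasureTheory.volume (-1) 1 →
        OSslipE ν k₁ k₃ (lam : ℂ) ε w φ F →
        hk k₁ k₃ φ ≤ C * (Real.sqrt (ν * |(k₁ : ℝ)|))⁻¹ * hm1 k₁ k₃ F := by
  have ho : 0 < OSaux.om := by unfold OSaux.om; norm_num
  have ho1 : OSaux.om ≤ 1/1000 := by unfold OSaux.om; norm_num
  refine ⟨OSaux.om ^ 2 / 4, 1/2, 4 / OSaux.om ^ 2, by positivity, by nlinarith, by norm_num, by norm_num, by positivity, ?_⟩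
  intro ν ε lam k₁ k₃ w φ F hν _ hε hε1 hk1 _ hO
  exact OSaux.main ν ε lam k₁ k₃ w φ F hν hε hε1 hk1 hO

end
end

section
/- For every f ∈ H¹₀(−1,1) (i.e. f ∈ H¹(−1,1) with f(±1) = 0) the following hold: (i) ∫_{−1}^{1} |f(y)|²/(1−y²)² dy ≤ 4 ∫_{−1}^{1} |f'(y)|² dy; (ii) ∫_{−1}^{1} |f(y)|²/(1−y²) dy ≤ (1/2) ∫_{−1}^{1} |f'(y)|² dy; (iii) there is an absolute constant C > 0 such that ‖f‖²_{L²} ≤ ‖(1−y²)^{1/2} f‖^{4/3}_{L²} ‖(1−y²)^{−1} f‖^{2/3}_{L²} ≤ C ‖(1−y²)^{1/2} f‖^{4/3}_{L²} ‖f'‖^{2/3}_{L²}. -/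
open Real MeasureTheory

lemma hardy_bound (f : ℝ → ℂ) (hf : ContDiff ℝ 1 f) (h1 : f (-1) = 0) (h2 : f 1 = 0) :
    ∃ K : ℝ, 0 ≤ K ∧ ∀ y ∈ Set.Icc (-1:ℝ) 1, ‖f y‖ ≤ K * (1 - y ^ 2) := by
  have hd : Continuous (deriv f) := hf.continuous_deriv le_rfl
  obtain ⟨M, hM⟩ := (isCompact_Icc (a := (-1:ℝ)) (b := 1)).exists_bound_of_continuousOn
    hd.continuousOn
  have hM0 : 0 ≤ M := (norm_nonneg _).trans (hM 0 (by constructor <;> norm_num))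
  have key : ∀ x ∈ Set.Icc (-1:ℝ) 1, ∀ y ∈ Set.Icc (-1:ℝ) 1, ‖f y - f x‖ ≤ M * ‖y - x‖ := by
    intro x hx y hy
    exact (convex_Icc (-1:ℝ) 1).norm_image_sub_le_of_norm_deriv_le
      (fun z _ => (hf.differentiable one_ne_zero) z) hM hx hy
  refine ⟨M, hM0, fun y hy => ?_⟩
  have ha := key (-1) (by constructor <;> norm_num) y hy
  have hb := key 1 (by constructor <;> norm_num) y hy
  obtain ⟨hy1, hy2⟩ := hy
  rw [h1, sub_zero, Real.norm_eq_abs, abs_of_nonneg (by linarith)] at ha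
  rw [h2, sub_zero, Real.norm_eq_abs, abs_of_nonpos (by linarith)] at hb
  rcases le_total 0 y with h | h
  · refine hb.trans (mul_le_mul_of_nonneg_left ?_ hM0); nlinarith
  · refine ha.trans (mul_le_mul_of_nonneg_left ?_ hM0); nlinarith

lemma hardy_int (g : ℝ → ℝ) (hg : Measurable g) (K : ℝ)
    (h : ∀ y ∈ Set.Icc (-1:ℝ) 1, ‖g y‖ ≤ K) : IntegrableOn g (Set.Icc (-1:ℝ) 1) := by
  refine Measure.integrableOn_of_bounded (M := K) (by simp) hg.aestronglyMeasurable ?_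
  exact (ae_restrict_iff' measurableSet_Icc).2 (Filter.Eventually.of_forall h)

lemma hardy_b2 (s u K : ℝ) (hs : 0 ≤ s) (hu : 0 ≤ u) (h : s ≤ K * u) :
    s ^ 2 / u ^ 2 ≤ K ^ 2 := by
  rcases hu.eq_or_lt with rfl | hu
  · simp; positivity
  · rw [div_le_iff₀ (by positivity), ← mul_pow]; gcongr

lemma hardy_b1 (s u K : ℝ) (hs : 0 ≤ s) (hu : 0 ≤ u) (h : s ≤ K * u) :
    s ^ 2 / u ≤ K ^ 2 * u := by
  rcases hu.eq_or_lt with rfl | hu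
  · simp
  · rw [div_le_iff₀ (by positivity)]
    calc s ^ 2 ≤ (K * u) ^ 2 := by gcongr
      _ = _ := by ring

lemma hardy_main (f : ℝ → ℂ) (hf : ContDiff ℝ 1 f) (h1 : f (-1) = 0) (h2 : f 1 = 0) (c : ℝ)
    (w : ℝ → ℝ) (hw : IntegrableOn (fun y => w y) (Set.Icc (-1:ℝ) 1))
    (hwe : ∀ y ∈ Set.Ioo (-1:ℝ) 1,
      w y = (c * (1 + y ^ 2) - c ^ 2 * y ^ 2) / (1 - y ^ 2) ^ 2 * ‖f y‖ ^ 2) :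
    (∫ y in (-1:ℝ)..1, w y) ≤ ∫ y in (-1:ℝ)..1, ‖deriv f y‖ ^ 2 := by
  obtain ⟨K, hK0, hK⟩ := hardy_bound f hf h1 h2
  have hd : Continuous (deriv f) := hf.continuous_deriv le_rfl
  have hdi : IntegrableOn (fun y => ‖deriv f y‖ ^ 2) (Set.Icc (-1:ℝ) 1) :=
    (hd.norm.pow 2).continuousOn.integrableOn_Icc
  let G : ℝ → ℝ := fun y => -(c * (y / (1 - y ^ 2) * ‖f y‖ ^ 2))
  let G' : ℝ → ℝ := fun y => -(c * ((1 + y ^ 2) / (1 - y ^ 2) ^ 2 * ‖f y‖ ^ 2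
    + y / (1 - y ^ 2) * (2 * inner ℝ (f y) (deriv f y))))
  have hG : ∀ y ∈ Set.Ioo (-1:ℝ) 1, HasDerivAt G (G' y) y := by
    intro y hy
    have hu : (1 - y ^ 2) ≠ 0 := by nlinarith [hy.1, hy.2]
    have e1 := ((hf.differentiable one_ne_zero) y).hasDerivAt.norm_sq
    have e2 : HasDerivAt (fun y : ℝ => y / (1 - y ^ 2)) ((1 + y ^ 2) / (1 - y ^ 2) ^ 2) y := by
      have := (hasDerivAt_id y).div (((hasDerivAt_id y).pow 2).const_sub 1) hu
      refine HasDerivAt.congr_deriv (f := fun y : ℝ => y / (1 - y ^ 2)) this ?_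
      simp only [id, Nat.cast_ofNat]
      congr 1
      norm_num
      ring
    exact ((e2.mul e1).const_mul c).neg
  have hb : ∀ y ∈ Set.Icc (-1:ℝ) 1, ‖G y‖ ≤ |c| * (K ^ 2 * (1 - y ^ 2)) := by
    intro y hy
    have hu : 0 ≤ 1 - y ^ 2 := by nlinarith [hy.1, hy.2]
    have := hardy_b1 _ _ K (norm_nonneg (f y)) hu (hK y hy)
    have hy' : |y| ≤ 1 := abs_le.2 hy
    simp only [G, norm_neg, norm_mul, Real.norm_eq_abs, abs_div, abs_of_nonneg hu, abs_pow, abs_norm]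
    refine mul_le_mul_of_nonneg_left ?_ (abs_nonneg c)
    calc |y| / (1 - y ^ 2) * ‖f y‖ ^ 2 = |y| * (‖f y‖ ^ 2 / (1 - y ^ 2)) := by ring
      _ ≤ 1 * (‖f y‖ ^ 2 / (1 - y ^ 2)) := by gcongr
      _ ≤ _ := by linarith
  have hGc : ContinuousOn G (Set.Icc (-1) 1) := by
    intro y hy
    by_cases hu : 1 - y ^ 2 = 0
    · have hG0 : G y = 0 := by simp [G, hu]
      rw [ContinuousWithinAt, hG0]
      refine squeeze_zero_norm' (a := fun y => |c| * (K ^ 2 * (1 - y ^ 2)))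
        (eventually_nhdsWithin_of_forall hb) ?_
      have : Continuous (fun y : ℝ => |c| * (K ^ 2 * (1 - y ^ 2))) := by fun_prop
      have := this.continuousWithinAt (s := Set.Icc (-1) 1) (x := y)
      simpa [ContinuousWithinAt, hu] using this
    · refine (hG y ⟨?_, ?_⟩).continuousAt.continuousWithinAt
      · refine lt_of_le_of_ne hy.1 ?_; rintro rfl; norm_num at hu
      · refine lt_of_le_of_ne hy.2 ?_; rintro rfl; norm_num at hu
  have hle := intervalIntegral.sub_le_integral_of_hasDeriv_right_of_le (a := (-1:ℝ)) (b := 1)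
    (g := G) (g' := G') (φ := fun y => ‖deriv f y‖ ^ 2 - w y) (by norm_num) hGc
    (fun y hy => (hG y hy).hasDerivWithinAt) (hdi.sub hw) (by
      intro y hy
      have hu : 0 < 1 - y ^ 2 := by nlinarith [hy.1, hy.2]
      have hsq := norm_add_sq_real (deriv f y) ((c * y / (1 - y ^ 2)) • f y)
      rw [norm_smul, inner_smul_right, real_inner_comm, mul_pow, Real.norm_eq_abs, sq_abs] at hsq
      have h0 : 0 ≤ ‖deriv f y + (c * y / (1 - y ^ 2)) • f y‖ ^ 2 := by positivity
      rw [hsq] at h0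
      simp only [G', hwe y hy]
      rw [← sub_nonneg]
      convert h0 using 1
      field_simp
      ring)
  have i1 : IntervalIntegrable (fun y => ‖deriv f y‖ ^ 2) volume (-1) 1 :=
    (hd.norm.pow 2).intervalIntegrable _ _
  have i2 : IntervalIntegrable w volume (-1) 1 :=
    (intervalIntegrable_iff_integrableOn_Icc_of_le (by norm_num)).2 hw
  rw [intervalIntegral.integral_sub i1 i2] at hle
  simp [G, h1, h2] at hle
  linarith

lemma hardy_holder (f : ℝ → ℂ) (hf : ContDiff ℝ 1 f) (h1 : f (-1) = 0) (h2 : f 1 = 0) :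
    (∫ y in (-1:ℝ)..1, ‖f y‖ ^ 2) ≤
      (∫ y in (-1:ℝ)..1, (1 - y ^ 2) * ‖f y‖ ^ 2) ^ ((2:ℝ)/3) *
      (∫ y in (-1:ℝ)..1, ‖f y‖ ^ 2 / (1 - y ^ 2) ^ 2) ^ ((1:ℝ)/3) := by
  obtain ⟨K, hK0, hK⟩ := hardy_bound f hf h1 h2
  have hfm : Measurable f := hf.continuous.measurable
  simp only [intervalIntegral.integral_of_le (show (-1:ℝ) ≤ 1 by norm_num)]
  have hpq : Real.HolderConjugate (3/2) 3 := by
    rw [Real.holderConjugate_iff]; norm_num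
  have hu : ∀ y ∈ Set.Ioc (-1:ℝ) 1, 0 ≤ 1 - y ^ 2 := fun y hy => by nlinarith [hy.1, hy.2]
  have hb1 : ∀ y ∈ Set.Ioc (-1:ℝ) 1, (1 - y ^ 2) * ‖f y‖ ^ 2 ≤ K ^ 2 := fun y hy => by
    have := hK y ⟨hy.1.le, hy.2⟩
    have hu := hu y hy
    calc (1 - y ^ 2) * ‖f y‖ ^ 2 ≤ 1 * (K * 1) ^ 2 := by
          gcongr
          · nlinarith
          · exact this.trans (by gcongr; nlinarith)
      _ = _ := by ring
  have hb2 : ∀ y ∈ Set.Ioc (-1:ℝ) 1, ‖f y‖ ^ 2 / (1 - y ^ 2) ^ 2 ≤ K ^ 2 := fun y hy =>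
    hardy_b2 _ _ K (norm_nonneg (f y)) (hu y hy) (hK y ⟨hy.1.le, hy.2⟩)
  have H := integral_mul_le_Lp_mul_Lq_of_nonneg (μ := volume.restrict (Set.Ioc (-1:ℝ) 1)) hpq
    (f := fun y => ((1 - y ^ 2) * ‖f y‖ ^ 2) ^ ((2:ℝ)/3))
    (g := fun y => (‖f y‖ ^ 2 / (1 - y ^ 2) ^ 2) ^ ((1:ℝ)/3))
    ((ae_restrict_iff' measurableSet_Ioc).2 (Filter.Eventually.of_forall fun y hy =>
      Real.rpow_nonneg (mul_nonneg (hu y hy) (by positivity)) _))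
    (Filter.Eventually.of_forall fun y => by dsimp; positivity)
    (MemLp.of_bound (Measurable.aestronglyMeasurable (Measurable.pow_const (by fun_prop) _)) ((K ^ 2) ^ ((2:ℝ)/3))
      ((ae_restrict_iff' measurableSet_Ioc).2 (Filter.Eventually.of_forall fun y hy => by
        have := mul_nonneg (hu y hy) (sq_nonneg ‖f y‖)
        rw [Real.norm_of_nonneg (by positivity)]
        exact Real.rpow_le_rpow this (hb1 y hy) (by norm_num))))
    (MemLp.of_bound (Measurable.aestronglyMeasurable (Measurable.pow_const (by fun_prop) _)) ((K ^ 2) ^ ((1:ℝ)/3))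
      ((ae_restrict_iff' measurableSet_Ioc).2 (Filter.Eventually.of_forall fun y hy => by
        rw [Real.norm_of_nonneg (by positivity)]
        exact Real.rpow_le_rpow (by positivity) (hb2 y hy) (by norm_num))))
  have e0 : (∫ y in Set.Ioc (-1:ℝ) 1, ‖f y‖ ^ 2) = ∫ y in Set.Ioc (-1:ℝ) 1,
      ((1 - y ^ 2) * ‖f y‖ ^ 2) ^ ((2:ℝ)/3) * (‖f y‖ ^ 2 / (1 - y ^ 2) ^ 2) ^ ((1:ℝ)/3) := by
    refine setIntegral_congr_fun measurableSet_Ioc fun y hy => ?_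
    beta_reduce
    rcases hy.2.eq_or_lt with rfl | hy2
    · simp [h2]
    · have hu : 0 < 1 - y ^ 2 := by nlinarith [hy.1]
      have hs : 0 ≤ ‖f y‖ ^ 2 := by positivity
      generalize ‖f y‖ ^ 2 = s at *
      generalize 1 - y ^ 2 = u at *
      have : (u * s) ^ ((2:ℝ)/3) = ((u * s) ^ 2) ^ ((1:ℝ)/3) := by
        rw [← Real.rpow_natCast, ← Real.rpow_mul (by positivity)]; norm_num
      rw [this, ← Real.mul_rpow (by positivity) (by positivity)]
      have : (u * s) ^ 2 * (s / u ^ 2) = s ^ 3 := by field_simp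
      rw [this, ← Real.rpow_natCast, ← Real.rpow_mul hs]; norm_num
  have e1 : (∫ y in Set.Ioc (-1:ℝ) 1, (((1 - y ^ 2) * ‖f y‖ ^ 2) ^ ((2:ℝ)/3)) ^ ((3:ℝ)/2)) =
      ∫ y in Set.Ioc (-1:ℝ) 1, (1 - y ^ 2) * ‖f y‖ ^ 2 := by
    refine setIntegral_congr_fun measurableSet_Ioc fun y hy => ?_
    beta_reduce
    rw [← Real.rpow_mul (mul_nonneg (hu y hy) (by positivity))]; norm_num
  have e2 : (∫ y in Set.Ioc (-1:ℝ) 1, ((‖f y‖ ^ 2 / (1 - y ^ 2) ^ 2) ^ ((1:ℝ)/3)) ^ (3:ℝ)) =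
      ∫ y in Set.Ioc (-1:ℝ) 1, ‖f y‖ ^ 2 / (1 - y ^ 2) ^ 2 := by
    refine setIntegral_congr_fun measurableSet_Ioc fun y hy => ?_
    beta_reduce
    rw [← Real.rpow_mul (by positivity)]; norm_num
  rw [e1, e2, ← e0] at H
  convert H using 3
  norm_num

/-- **Hardy-type inequalities on `(-1,1)`** (Lemma B.3): for every
`f ∈ H¹₀(-1,1)`,
(i) `‖f/(1-y²)‖²_{L²} ≤ 4‖f'‖²_{L²}`,
(ii) `‖f/(1-y²)^{1/2}‖²_{L²} ≤ (1/2)‖f'‖²_{L²}`,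
(iii) `‖f‖²_{L²} ≤ ‖(1-y²)^{1/2}f‖^{4/3}_{L²}‖(1-y²)^{-1}f‖^{2/3}_{L²}
        ≤ C‖(1-y²)^{1/2}f‖^{4/3}_{L²}‖f'‖^{2/3}_{L²}`. -/
theorem hardy_type_inequalities :
    ∃ C : ℝ, 0 < C ∧
      ∀ f : ℝ → ℂ, ContDiff ℝ 1 f → f (-1) = 0 → f 1 = 0 →
        ((∫ y in (-1:ℝ)..1, ‖f y‖ ^ 2 / (1 - y ^ 2) ^ 2) ≤
            4 * ∫ y in (-1:ℝ)..1, ‖deriv f y‖ ^ 2) ∧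
        ((∫ y in (-1:ℝ)..1, ‖f y‖ ^ 2 / (1 - y ^ 2)) ≤
            (1/2) * ∫ y in (-1:ℝ)..1, ‖deriv f y‖ ^ 2) ∧
        ((∫ y in (-1:ℝ)..1, ‖f y‖ ^ 2) ≤
            (Real.sqrt (∫ y in (-1:ℝ)..1, (1 - y ^ 2) * ‖f y‖ ^ 2)) ^ ((4:ℝ)/3) *
              (Real.sqrt (∫ y in (-1:ℝ)..1, ‖f y‖ ^ 2 / (1 - y ^ 2) ^ 2)) ^ ((2:ℝ)/3)) ∧
        ((Real.sqrt (∫ y in (-1:ℝ)..1, (1 - y ^ 2) * ‖f y‖ ^ 2)) ^ ((4:ℝ)/3) *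
            (Real.sqrt (∫ y in (-1:ℝ)..1, ‖f y‖ ^ 2 / (1 - y ^ 2) ^ 2)) ^ ((2:ℝ)/3) ≤
          C * (Real.sqrt (∫ y in (-1:ℝ)..1, (1 - y ^ 2) * ‖f y‖ ^ 2)) ^ ((4:ℝ)/3) *
            (Real.sqrt (∫ y in (-1:ℝ)..1, ‖deriv f y‖ ^ 2)) ^ ((2:ℝ)/3)) := by
  refine ⟨1, one_pos, fun f hf h1 h2 => ?_⟩
  obtain ⟨K, hK0, hK⟩ := hardy_bound f hf h1 h2
  have hfm : Measurable f := hf.continuous.measurable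
  have hu : ∀ y ∈ Set.Icc (-1:ℝ) 1, 0 ≤ 1 - y ^ 2 := fun y hy => by nlinarith [hy.1, hy.2]
  have hD : 0 ≤ ∫ y in (-1:ℝ)..1, ‖deriv f y‖ ^ 2 :=
    intervalIntegral.integral_nonneg (by norm_num) fun y _ => by positivity
  have hA : 0 ≤ ∫ y in (-1:ℝ)..1, (1 - y ^ 2) * ‖f y‖ ^ 2 :=
    intervalIntegral.integral_nonneg (by norm_num) fun y hy =>
      mul_nonneg (hu y hy) (by positivity)
  have hB : 0 ≤ ∫ y in (-1:ℝ)..1, ‖f y‖ ^ 2 / (1 - y ^ 2) ^ 2 :=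
    intervalIntegral.integral_nonneg (by norm_num) fun y _ => by positivity
  have H1 : (∫ y in (-1:ℝ)..1, ‖f y‖ ^ 2 / (1 - y ^ 2) ^ 2) ≤
      ∫ y in (-1:ℝ)..1, ‖deriv f y‖ ^ 2 := by
    refine hardy_main f hf h1 h2 1 _ (hardy_int _ (by fun_prop) (K ^ 2) fun y hy => ?_) ?_
    · rw [Real.norm_of_nonneg (by positivity)]
      exact hardy_b2 _ _ K (norm_nonneg _) (hu y hy) (hK y hy)
    · intro y hy; ring
  have H2 : (∫ y in (-1:ℝ)..1, 2 * (‖f y‖ ^ 2 / (1 - y ^ 2))) ≤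
      ∫ y in (-1:ℝ)..1, ‖deriv f y‖ ^ 2 := by
    refine hardy_main f hf h1 h2 2 _ (hardy_int _ (by fun_prop) (2 * K ^ 2) fun y hy => ?_) ?_
    · have hu := hu y hy
      rw [Real.norm_of_nonneg (by positivity)]
      have := hardy_b1 _ _ K (norm_nonneg _) hu (hK y hy)
      nlinarith [mul_nonneg (sq_nonneg K) (sq_nonneg y)]
    · intro y hy
      have hu : 1 - y ^ 2 ≠ 0 := by nlinarith [hy.1, hy.2]
      field_simp
      ring
  rw [intervalIntegral.integral_const_mul] at H2
  have hs : ∀ x : ℝ, 0 ≤ x → Real.sqrt x ^ ((4:ℝ)/3) = x ^ ((2:ℝ)/3) := fun x hx => by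
    rw [Real.sqrt_eq_rpow, ← Real.rpow_mul hx]; norm_num
  have hs' : ∀ x : ℝ, 0 ≤ x → Real.sqrt x ^ ((2:ℝ)/3) = x ^ ((1:ℝ)/3) := fun x hx => by
    rw [Real.sqrt_eq_rpow, ← Real.rpow_mul hx]; norm_num
  refine ⟨by linarith, by linarith, ?_, ?_⟩
  · rw [hs _ hA, hs' _ hB]
    exact hardy_holder f hf h1 h2
  · rw [one_mul]
    gcongr
end
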